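/- Let M be a surface and let b ≥ 2 and k > 2b be integers. There exist constants c₁ > 0 and c₂ ≥ 0, depending only on k, b and M, such that for every finite family 𝒜 = {A_1, …, A_n} of subsets of M satisfying (i) f_{k+1}(𝒜) = 0 and (ii) for every σ ⊆ {1, …, n} with |σ| ∈ {k, k+1} the set A_σ is open (possibly empty) and has at most b path-connected components, one has f_k(𝒜) ≤ c₁ · f^{ind}_{k-1}(𝒜) + c₂. -/

import Mathlib

/-- `fNum A k` is `f_k(𝒜)`: the number of subsets `σ` of the index set with
`|σ| = k+1` such that `⋂ i ∈ σ, A i` is nonempty. -/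
noncomputable def fNum {α : Type*} {n : ℕ} (A : Fin n → Set α) (k : ℕ) : ℕ :=
  Nat.card {σ : Finset (Fin n) // σ.card = k + 1 ∧ (⋂ i ∈ σ, A i).Nonempty}

/-- `fInd A k` is `f_k^{ind}(𝒜)`: the number of subsets `τ` with `|τ| = k+1` and
`⋂ i ∈ τ, A i ≠ ∅` for which there is `σ ⊃ τ` with `|σ| = k+2` and `⋂ i ∈ σ, A i ≠ ∅`. -/
noncomputable def fInd {α : Type*} {n : ℕ} (A : Fin n → Set α) (k : ℕ) : ℕ :=
  Nat.card {τ : Finset (Fin n) // τ.card = k + 1 ∧ (⋂ i ∈ τ, A i).Nonempty ∧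
    ∃ σ : Finset (Fin n), τ ⊂ σ ∧ σ.card = k + 2 ∧ (⋂ i ∈ σ, A i).Nonempty}

/-- A set `S` has at most `b` path-connected components: there are `b` points such that
every point of `S` can be joined inside `S` to one of them. -/
def AtMostComponents {X : Type*} [TopologicalSpace X] (b : ℕ) (S : Set X) : Prop :=
  ∃ g : Fin b → X, ∀ x ∈ S, ∃ j : Fin b, JoinedIn S x (g j)



set_option linter.unusedSectionVars false
set_option linter.unusedVariables false

namespace SurfUB
open Set Filter Topology

/-- A smooth arc: a partial chart whose target contains the segment from 0 to 1. -/
structure SEdge (M : Type*) [TopologicalSpace M] where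
  φ : OpenPartialHomeomorph M ℂ
  mem_target : ∀ t : ℝ, t ∈ Icc (0:ℝ) 1 → (t : ℂ) ∈ φ.target

namespace SEdge
variable {M : Type*} [TopologicalSpace M] (e : SEdge M)

noncomputable def pt (t : ℝ) : M := e.φ.symm (t : ℂ)
noncomputable def src : M := e.pt 0
noncomputable def tgt : M := e.pt 1
def inner : Set M := e.pt '' Ioo 0 1
def clo : Set M := e.pt '' Icc 0 1

lemma φ_pt {t : ℝ} (ht : t ∈ Icc (0:ℝ) 1) : e.φ (e.pt t) = t :=
  e.φ.right_inv (e.mem_target t ht)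

lemma pt_source {t : ℝ} (ht : t ∈ Icc (0:ℝ) 1) : e.pt t ∈ e.φ.source :=
  e.φ.map_target (e.mem_target t ht)

lemma pt_inj {t u : ℝ} (ht : t ∈ Icc (0:ℝ) 1) (hu : u ∈ Icc (0:ℝ) 1) (h : e.pt t = e.pt u) :
    t = u := by
  have := e.φ_pt ht
  rw [h, e.φ_pt hu] at this
  exact_mod_cast this.symm

lemma src_ne_tgt : e.src ≠ e.tgt := fun h => by
  have := e.pt_inj (by simp) (by simp) h
  norm_num at this

lemma continuousOn_pt : ContinuousOn e.pt (Icc 0 1) := by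
  refine e.φ.continuousOn_symm.comp Complex.continuous_ofReal.continuousOn ?_
  intro t ht
  exact e.mem_target t ht

lemma isCompact_clo : IsCompact e.clo := isCompact_Icc.image_of_continuousOn e.continuousOn_pt

lemma isPreconnected_inner : IsPreconnected e.inner :=
  isPreconnected_Ioo.image _ (e.continuousOn_pt.mono Ioo_subset_Icc_self)

lemma mem_inner_iff {x : M} : x ∈ e.inner ↔ x ∈ e.φ.source ∧ ∃ t ∈ Ioo (0:ℝ) 1, e.φ x = t := by
  constructor
  · rintro ⟨t, ht, rfl⟩
    exact ⟨e.pt_source (Ioo_subset_Icc_self ht), t, ht, e.φ_pt (Ioo_subset_Icc_self ht)⟩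
  · rintro ⟨hx, t, ht, h⟩
    refine ⟨t, ht, ?_⟩
    rw [pt, ← h, e.φ.left_inv hx]

lemma mem_inner_source {x : M} (h : x ∈ e.inner) : x ∈ e.φ.source := (e.mem_inner_iff.1 h).1

lemma clo_eq : e.clo = insert e.src (insert e.tgt e.inner) := by
  ext x
  constructor
  · rintro ⟨t, ht, rfl⟩
    rcases eq_or_lt_of_le ht.1 with h | h
    · left; rw [← h]; rfl
    · rcases eq_or_lt_of_le ht.2 with h' | h'
      · right; left; rw [h']; rfl
      · right; right; exact ⟨t, ⟨h, h'⟩, rfl⟩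
  · rintro (rfl | rfl | ⟨t, ht, rfl⟩)
    · exact ⟨0, by simp, rfl⟩
    · exact ⟨1, by simp, rfl⟩
    · exact ⟨t, Ioo_subset_Icc_self ht, rfl⟩

end SEdge

/-- A finite graph nicely embedded in a surface. -/
structure NG (M : Type*) [TopologicalSpace M] (ι : Type) where
  e : ι → SEdge M
  V : Finset M
  src_mem : ∀ i, (e i).src ∈ V
  tgt_mem : ∀ i, (e i).tgt ∈ V
  inner_V : ∀ i, ∀ x ∈ (e i).inner, x ∉ V
  inner_inner : ∀ i j, ∀ x, x ∈ (e i).inner → x ∈ (e j).inner → i = j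

namespace NG
variable {M : Type*} [TopologicalSpace M] {ι : Type} (G : NG M ι)

def car : Set M := {x | x ∈ G.V ∨ ∃ i, x ∈ (G.e i).inner}

lemma V_sub {x : M} (h : x ∈ G.V) : x ∈ G.car := Or.inl h
lemma inner_sub {i : ι} {x : M} (h : x ∈ (G.e i).inner) : x ∈ G.car := Or.inr ⟨i, h⟩

lemma car_eq : G.car = (G.V : Set M) ∪ ⋃ i, (G.e i).clo := by
  ext x
  simp only [car, mem_ofPred_eq, mem_union, mem_iUnion, SEdge.clo_eq, mem_insert_iff]
  constructor
  · rintro (h | ⟨i, h⟩)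
    · exact Or.inl h
    · exact Or.inr ⟨i, Or.inr (Or.inr h)⟩
  · rintro (h | ⟨i, rfl | rfl | h⟩)
    · exact Or.inl h
    · exact Or.inl (G.src_mem i)
    · exact Or.inl (G.tgt_mem i)
    · exact Or.inr ⟨i, h⟩

variable [Fintype ι]

lemma isCompact_car : IsCompact G.car := by
  rw [car_eq]
  exact G.V.finite_toSet.isCompact.union (isCompact_iUnion fun i => (G.e i).isCompact_clo)

variable [T2Space M]

lemma isClosed_car : IsClosed G.car := G.isCompact_car.isClosed

lemma isClosed_V : IsClosed (G.V : Set M) := G.V.finite_toSet.isClosed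

lemma eventually_not_V {x : M} (h : x ∉ G.V) : ∀ᶠ y in 𝓝 x, y ∉ G.V :=
  G.isClosed_V.isOpen_compl.mem_nhds h

lemma eventually_not_clo {x : M} {i : ι} (h : x ∉ (G.e i).clo) : ∀ᶠ y in 𝓝 x, y ∉ (G.e i).clo :=
  (G.e i).isCompact_clo.isClosed.isOpen_compl.mem_nhds h

lemma inner_not_clo {i j : ι} (hij : i ≠ j) {x : M} (h : x ∈ (G.e i).inner) :
    x ∉ (G.e j).clo := by
  rw [SEdge.clo_eq]
  rintro (rfl | rfl | h')
  · exact G.inner_V i _ h (G.src_mem j)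
  · exact G.inner_V i _ h (G.tgt_mem j)
  · exact hij (G.inner_inner i j x h h')

/-- Near an inner point of an edge, the graph is just that edge. -/
lemma eventually_inner {i : ι} {x : M} (h : x ∈ (G.e i).inner) :
    ∀ᶠ y in 𝓝 x, y ∈ (G.e i).φ.source ∧ (y ∈ G.car ↔ y ∈ (G.e i).inner) ∧
      (y ∈ (G.e i).inner ↔ ((G.e i).φ y).im = 0) := by
  classical
  have h1 := G.eventually_not_V (G.inner_V i x h)
  have h2 : ∀ᶠ y in 𝓝 x, ∀ j, j ≠ i → y ∉ (G.e j).clo := by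
    rw [eventually_all]
    intro j
    by_cases hj : j = i
    · simp [hj]
    · filter_upwards [G.eventually_not_clo (G.inner_not_clo (Ne.symm hj) h)] with y hy _ using hy
  have hs := (G.e i).mem_inner_source h
  have h3 : ∀ᶠ y in 𝓝 x, y ∈ (G.e i).φ.source := (G.e i).φ.open_source.mem_nhds hs
  obtain ⟨-, t, ht, hxt⟩ := (G.e i).mem_inner_iff.1 h
  have h4 : ∀ᶠ y in 𝓝 x, ((G.e i).φ y).re ∈ Ioo (0:ℝ) 1 := by
    have : ContinuousAt (fun y => ((G.e i).φ y).re) x :=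
      Complex.continuous_re.continuousAt.comp ((G.e i).φ.continuousAt hs)
    apply this.eventually_mem
    rw [hxt]
    exact Ioo_mem_nhds ht.1 ht.2
  filter_upwards [h1, h2, h3, h4] with y y1 y2 y3 y4
  refine ⟨y3, ⟨?_, fun h => G.inner_sub h⟩, ?_⟩
  · rintro (h | ⟨j, hj⟩)
    · exact absurd h y1
    · by_cases hji : j = i
      · rwa [← hji]
      · exact absurd (by rw [SEdge.clo_eq]; exact Or.inr (Or.inr hj)) (y2 j hji)
  · rw [SEdge.mem_inner_iff]
    constructor
    · rintro ⟨_, u, _, hu⟩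
      rw [hu]; simp
    · intro h0
      exact ⟨y3, _, y4, Complex.ext rfl (by simpa using h0)⟩

lemma nhdsWithin_neBot {x : M} (h : x ∉ G.V) : (𝓝[G.carᶜ] x).NeBot := by
  by_cases hx : x ∈ G.car
  · rcases hx with hx | ⟨i, hi⟩
    · exact absurd hx h
    · rw [← mem_closure_iff_nhdsWithin_neBot, mem_closure_iff_frequently]
      have hs := (G.e i).mem_inner_source hi
      obtain ⟨-, t, ht, hxt⟩ := (G.e i).mem_inner_iff.1 hi
      have hx' : (G.e i).φ.symm (t : ℂ) = x := by rw [← hxt, (G.e i).φ.left_inv hs]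
      have htt := (G.e i).mem_target t (Ioo_subset_Icc_self ht)
      have hc : Tendsto (fun u : ℝ => (G.e i).φ.symm ((t : ℂ) + u * Complex.I)) (𝓝[≠] 0) (𝓝 x) := by
        have c1 : ContinuousAt (fun u : ℝ => (t : ℂ) + u * Complex.I) 0 := by fun_prop
        have c2 : Tendsto (G.e i).φ.symm (𝓝 (t:ℂ)) (𝓝 x) := by
          have := (G.e i).φ.continuousAt_symm htt
          rwa [ContinuousAt, hx'] at this
        have c3 : Tendsto (fun u : ℝ => (t : ℂ) + u * Complex.I) (𝓝 0) (𝓝 (t:ℂ)) := by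
          simpa [ContinuousAt] using c1
        exact (c2.comp c3).mono_left nhdsWithin_le_nhds
      have hT : ∀ᶠ u : ℝ in 𝓝[≠] 0, (t : ℂ) + u * Complex.I ∈ (G.e i).φ.target := by
        have c1 : ContinuousAt (fun u : ℝ => (t : ℂ) + u * Complex.I) 0 := by fun_prop
        have := c1.eventually_mem (s := (G.e i).φ.target)
          ((G.e i).φ.open_target.mem_nhds (by simpa using htt))
        exact this.filter_mono nhdsWithin_le_nhds
      refine hc.frequently (Eventually.frequently ?_)
      filter_upwards [hc.eventually (G.eventually_inner hi), hT, self_mem_nhdsWithin] with u hu hu2 hu3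
      intro hmem
      have := hu.2.2.1 (hu.2.1.1 hmem)
      rw [(G.e i).φ.right_inv hu2] at this
      simp at this
      exact hu3 this
  · rw [G.isClosed_car.isOpen_compl.nhdsWithin_eq hx]
    infer_instance

end NG
end SurfUB

set_option linter.unusedSectionVars false
set_option linter.unusedVariables false

namespace SurfUB
open Set Filter Topology
namespace NG
variable {M : Type*} [TopologicalSpace M] {ι : Type} (G : NG M ι) [Fintype ι]

open Classical in
/-- The jump factor at `x` with respect to edge signs `z`. -/
noncomputable def jump (z : ι → ℤˣ) (x y : M) : ℤˣ :=
  ∏ i, if x ∈ (G.e i).inner ∧ ((G.e i).φ y).im < 0 then z i else 1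

lemma jump_mul (z z' : ι → ℤˣ) (x y : M) :
    G.jump (z * z') x y = G.jump z x y * G.jump z' x y := by
  unfold jump
  rw [← Finset.prod_mul_distrib]
  refine Finset.prod_congr rfl fun i _ => ?_
  split_ifs <;> simp

lemma jump_one (x y : M) : G.jump 1 x y = 1 := by
  unfold jump
  refine Finset.prod_eq_one fun i _ => ?_
  split_ifs <;> simp

lemma jump_prod {α : Type*} (S : Finset α) (z : α → ι → ℤˣ) (x y : M) :
    G.jump (∏ a ∈ S, z a) x y = ∏ a ∈ S, G.jump (z a) x y := by
  classical
  induction S using Finset.induction_on with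
  | empty => simp [jump_one]
  | insert a S ha ih => rw [Finset.prod_insert ha, Finset.prod_insert ha, jump_mul, ih]

lemma jump_of_inner (z : ι → ℤˣ) {i : ι} {x : M} (h : x ∈ (G.e i).inner) (y : M) :
    G.jump z x y = if ((G.e i).φ y).im < 0 then z i else 1 := by
  classical
  unfold jump
  rw [Finset.prod_eq_single i]
  · simp [h]
  · intro j _ hj
    rw [if_neg]
    rintro ⟨h', _⟩
    exact hj (G.inner_inner j i x h' h)
  · simp

lemma jump_of_not_inner (z : ι → ℤˣ) {x : M} (h : ∀ i, x ∉ (G.e i).inner) (y : M) :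
    G.jump z x y = 1 := by
  classical
  unfold jump
  refine Finset.prod_eq_one fun i _ => ?_
  rw [if_neg]
  rintro ⟨h', _⟩
  exact h i h'

lemma jump_of_not_car (z : ι → ℤˣ) {x : M} (h : x ∉ G.car) (y : M) :
    G.jump z x y = 1 :=
  G.jump_of_not_inner z (fun i hi => h (G.inner_sub hi)) y

lemma jump_congr {z z' : ι → ℤˣ} {x : M} (h : ∀ i, x ∈ (G.e i).inner → z i = z' i) (y : M) :
    G.jump z x y = G.jump z' x y := by
  classical
  unfold jump
  refine Finset.prod_congr rfl fun i _ => ?_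
  by_cases hi : x ∈ (G.e i).inner
  · rw [h i hi]
  · simp [hi]

/-- `s` is a branch of the square root of `f` at `x` with jumps `z`. -/
def IsBranchAt (z : ι → ℤˣ) (f s : M → ℂ) (x : M) : Prop :=
  ∃ c : ℂ, c ^ 2 = f x ∧
    Tendsto (fun y => (((G.jump z x y : ℤˣ) : ℤ) : ℂ) * s y) (𝓝[G.carᶜ] x) (𝓝 c)

/-- `s` is a coloring at `x` with jumps `z`. -/
def IsColAt (z : ι → ℤˣ) (s : M → ℤˣ) (x : M) : Prop :=
  ∃ c : ℤˣ, ∀ᶠ y in 𝓝[G.carᶜ] x, G.jump z x y * s y = c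

variable {G}

lemma IsBranchAt.mul {z z' : ι → ℤˣ} {f f' s s' : M → ℂ} {x : M}
    (h : G.IsBranchAt z f s x) (h' : G.IsBranchAt z' f' s' x) :
    G.IsBranchAt (z * z') (f * f') (s * s') x := by
  obtain ⟨c, hc, h⟩ := h
  obtain ⟨c', hc', h'⟩ := h'
  refine ⟨c * c', by rw [mul_pow, hc, hc']; rfl, ?_⟩
  refine (h.mul h').congr fun y => ?_
  rw [jump_mul]
  simp only [Pi.mul_apply]
  push_cast
  ring

lemma IsBranchAt.of_continuousAt {f s : M → ℂ} {x : M} (hs : ContinuousAt s x)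
    (h : s x ^ 2 = f x) : G.IsBranchAt 1 f s x := by
  refine ⟨s x, h, ?_⟩
  refine (hs.mono_left nhdsWithin_le_nhds).congr fun y => ?_
  simp [jump_one]

lemma IsBranchAt.prod {α : Type*} (S : Finset α) {z : α → ι → ℤˣ} {f s : α → M → ℂ} {x : M}
    (h : ∀ a ∈ S, G.IsBranchAt (z a) (f a) (s a) x) :
    G.IsBranchAt (∏ a ∈ S, z a) (∏ a ∈ S, f a) (∏ a ∈ S, s a) x := by
  classical
  induction S using Finset.induction_on with
  | empty =>
    simp only [Finset.prod_empty]
    exact IsBranchAt.of_continuousAt continuousAt_const (by simp)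
  | insert a S ha ih =>
    rw [Finset.prod_insert ha, Finset.prod_insert ha, Finset.prod_insert ha]
    exact (h a (by simp)).mul (ih fun b hb => h b (by simp [hb]))

lemma IsBranchAt.congr {z z' : ι → ℤˣ} {f f' s : M → ℂ} {x : M}
    (h : G.IsBranchAt z f s x) (hz : ∀ i, x ∈ (G.e i).inner → z i = z' i) (hf : f x = f' x) :
    G.IsBranchAt z' f' s x := by
  obtain ⟨c, hc, h⟩ := h
  refine ⟨c, hc.trans hf, h.congr fun y => ?_⟩
  rw [G.jump_congr hz]

lemma IsColAt.mul {z z' : ι → ℤˣ} {s s' : M → ℤˣ} {x : M}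
    (h : G.IsColAt z s x) (h' : G.IsColAt z' s' x) :
    G.IsColAt (z * z') (s * s') x := by
  obtain ⟨c, h⟩ := h
  obtain ⟨c', h'⟩ := h'
  refine ⟨c * c', ?_⟩
  filter_upwards [h, h'] with y h h'
  rw [jump_mul, ← h, ← h', Pi.mul_apply]
  exact mul_mul_mul_comm _ _ _ _

lemma IsColAt.congr' {z : ι → ℤˣ} {s s' : M → ℤˣ} {x : M} (h : G.IsColAt z s x)
    (hs : ∀ᶠ y in 𝓝[G.carᶜ] x, s y = s' y) : G.IsColAt z s' x := by
  obtain ⟨c, h⟩ := h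
  refine ⟨c, ?_⟩
  filter_upwards [h, hs] with y h h'
  rw [← h', h]

lemma isColAt_const {x : M} (ε : ℤˣ) : G.IsColAt 1 (fun _ => ε) x :=
  ⟨ε, Eventually.of_forall fun y => by simp [jump_one]⟩

lemma IsColAt.branch {z : ι → ℤˣ} {s : M → ℤˣ} {x : M} (h : G.IsColAt z s x) :
    G.IsBranchAt z 1 (fun y => (((s y : ℤˣ) : ℤ) : ℂ)) x := by
  obtain ⟨c, h⟩ := h
  refine ⟨((c : ℤ) : ℂ), ?_, ?_⟩
  · rcases Int.units_eq_one_or c with rfl | rfl <;> simp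
  · refine tendsto_const_nhds.congr' ?_
    filter_upwards [h] with y hy
    rw [← hy]; push_cast; rfl

variable [T2Space M]

lemma IsBranchAt.sq {z : ι → ℤˣ} {f s : M → ℂ} {x : M} (h : G.IsBranchAt z f s x)
    (hx : x ∉ G.car) : s x ^ 2 = f x := by
  obtain ⟨c, hc, h⟩ := h
  rw [← hc]
  rw [G.isClosed_car.isOpen_compl.nhdsWithin_eq hx] at h
  have := tendsto_nhds_unique (h.mono_left (pure_le_nhds x)) (tendsto_pure_nhds _ _)
  rw [this, G.jump_of_not_car z hx]; simp

/-- A branch of the square root of `1` on an open set gives a coloring. -/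
lemma exists_col_of_branch {z : ι → ℤˣ} {s : M → ℂ} {U : Set M} (hU : IsOpen U)
    (h : ∀ x ∈ U, x ∉ G.V → G.IsBranchAt z 1 s x) :
    ∃ s' : M → ℤˣ, ∀ x ∈ U, x ∉ G.V → G.IsColAt z s' x := by
  classical
  refine ⟨fun y => if s y = 1 then 1 else -1, fun x hx hxV => ?_⟩
  have key : ∀ y ∈ U, y ∉ G.car → s y = (((if s y = 1 then 1 else -1 : ℤˣ) : ℤ) : ℂ) := by
    intro y hy hyc
    have := (h y hy fun h => hyc (G.V_sub h)).sq hyc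
    rcases sq_eq_one_iff.1 this with h1 | h1
    · simp [h1]
    · rw [h1, if_neg (by norm_num)]; simp
  obtain ⟨c, hc, ht⟩ := h x hx hxV
  have hc1 : c = 1 ∨ c = -1 := sq_eq_one_iff.1 hc
  obtain ⟨d, hd⟩ : ∃ d : ℤˣ, c = ((d : ℤ) : ℂ) := by
    rcases hc1 with rfl | rfl
    · exact ⟨1, by simp⟩
    · exact ⟨-1, by simp⟩
  refine ⟨d, ?_⟩
  have h1 : ∀ᶠ y in 𝓝[G.carᶜ] x, dist ((((G.jump z x y : ℤˣ) : ℤ) : ℂ) * s y) c < 1 :=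
    ht (Metric.ball_mem_nhds c one_pos)
  filter_upwards [h1, self_mem_nhdsWithin, mem_nhdsWithin_of_mem_nhds (hU.mem_nhds hx)] with y h1 h2 h3
  rw [key y h3 h2, hd] at h1
  generalize (if s y = 1 then 1 else -1 : ℤˣ) = u at h1 ⊢
  generalize G.jump z x y = v at h1 ⊢
  rcases Int.units_eq_one_or u with rfl | rfl <;> rcases Int.units_eq_one_or v with rfl | rfl <;>
  rcases Int.units_eq_one_or d with rfl | rfl <;> first | rfl | (simp [Complex.dist_eq] at h1; norm_num at h1)

end NG
end SurfUB

set_option linter.unusedSectionVars false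
set_option linter.unusedVariables false

namespace SurfUB
open Set Filter Topology Metric

/-- There is no continuous square root of `w` on a punctured disc. -/
lemma no_sqrt {r : ℝ} (hr : 0 < r) (S : ℂ → ℂ) (hS : ContinuousOn S (ball 0 r \ {0}))
    (h : ∀ w ∈ ball (0:ℂ) r \ {0}, S w ^ 2 = w) : False := by
  set q : ℝ := r / 2
  have hq : 0 < q := by positivity
  have hm : ∀ t : ℝ, (q : ℂ) * Complex.exp (t * Complex.I) ∈ ball (0:ℂ) r \ {0} := by
    intro t
    constructor
    · simp [Complex.norm_exp_ofReal_mul_I, abs_of_pos hq]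
      show r / 2 < r
      linarith
    · simp [hq.ne']
  let F : ℝ → ℂ := fun t => S (q * Complex.exp (t * Complex.I)) / Complex.exp (t / 2 * Complex.I)
  have hF : Continuous F := by
    refine Continuous.div ?_ (by fun_prop) (fun t => Complex.exp_ne_zero _)
    exact hS.comp_continuous (by fun_prop) hm
  have hF2 : ∀ t, F t ^ 2 = q := by
    intro t
    simp only [F]
    rw [div_pow, h _ (hm t), ← Complex.exp_nat_mul]
    have : ((2:ℕ) : ℂ) * (t / 2 * Complex.I) = t * Complex.I := by push_cast; ring
    rw [this, mul_div_cancel_right₀ _ (Complex.exp_ne_zero _)]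
  have hF0 : F 0 ≠ 0 := by
    intro h0
    have := hF2 0
    rw [h0] at this
    simp at this
    exact hq.ne' (by exact_mod_cast this.symm)
  have h2 : F (2 * Real.pi) = - F 0 := by
    simp only [F]
    have e1 : Complex.exp (((2 * Real.pi : ℝ) : ℂ) * Complex.I) = 1 := by
      push_cast; exact Complex.exp_two_pi_mul_I
    have e2 : Complex.exp (((2 * Real.pi : ℝ) : ℂ) / 2 * Complex.I) = -1 := by
      have : ((2 * Real.pi : ℝ) : ℂ) / 2 = Real.pi := by push_cast; ring
      rw [this, Complex.exp_pi_mul_I]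
    rw [e1, e2]; simp [div_neg]
  have h3 : ∀ t, F t = F 0 ∨ F t = - F 0 := fun t => sq_eq_sq_iff_eq_or_eq_neg.1 (by rw [hF2, hF2])
  have : F (2 * Real.pi) = F 0 := by
    have hc : IsPreconnected (univ : Set ℝ) := isPreconnected_univ
    have := hc.eq_of_sq_eq (f := F) (g := fun _ => F 0) hF.continuousOn continuousOn_const
      (fun t _ => by simp [hF2]) (fun _ => hF0) (y := 0) (mem_univ _) rfl
    exact this (mem_univ _)
  rw [this] at h2
  exact hF0 (by simpa [self_eq_neg] using h2)

lemma exists_sqrt_aux {r : ℝ} (hr : 0 < r) (h : ℂ → ℂ) (F : ℂ → ℂ)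
    (hF : ContinuousOn F {w | w.re < Real.log r})
    (hF2 : ∀ w ∈ {w : ℂ | w.re < Real.log r}, F w ^ 2 = h (Complex.exp w))
    (hper : ∀ w ∈ {w : ℂ | w.re < Real.log r}, F (w + 2 * Real.pi * Complex.I) = F w) :
    ∃ S : ℂ → ℂ, ContinuousOn S (ball 0 r \ {0}) ∧ ∀ w ∈ ball (0:ℂ) r \ {0}, S w ^ 2 = h w := by
  have hlog : ∀ w ∈ ball (0:ℂ) r \ {0}, (Complex.log w).re < Real.log r := by
    intro w hw
    rw [Complex.log_re]
    exact Real.log_lt_log (by simpa using hw.2) (by simpa using hw.1)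
  refine ⟨fun w => F (Complex.log w), ?_, fun w hw => ?_⟩
  · have hop : IsOpen {w : ℂ | w.re < Real.log r} := isOpen_lt Complex.continuous_re continuous_const
    intro w hw
    apply ContinuousAt.continuousWithinAt
    by_cases hs : w ∈ Complex.slitPlane
    · exact ContinuousAt.comp (g := F) (hF.continuousAt (hop.mem_nhds (hlog w hw)))
        (continuousAt_clog hs)
    · have hre : w.re < 0 := by
        by_contra hcon
        push Not at hcon
        apply hs
        rcases eq_or_lt_of_le hcon with h0 | h0
        · right
          intro him
          exact hw.2 (Complex.ext h0.symm him)
        · exact Or.inl h0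
      have key : ∀ᶠ y in 𝓝 w, F (Complex.log (-y) + Real.pi * Complex.I) = F (Complex.log y) := by
        have hopb : IsOpen (ball (0:ℂ) r \ {0}) := isOpen_ball.sdiff isClosed_singleton
        filter_upwards [hopb.mem_nhds hw, (isOpen_lt Complex.continuous_re continuous_const).mem_nhds hre]
          with y hy hyre
        have hy0 : y ≠ 0 := hy.2
        change y.re < 0 at hyre
        by_cases him : 0 ≤ y.im
        · congr 1
          apply Complex.ext
          · simp [Complex.log_re]
          · have : Complex.arg (-y) = Complex.arg y - Real.pi := by
              rw [Complex.arg_neg_eq_arg_sub_pi_iff]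
              rcases eq_or_lt_of_le him with h0 | h0
              · right; exact ⟨h0.symm, hyre⟩
              · left; exact h0
            simp [Complex.log_im, this]
        · push Not at him
          rw [← hper _ (hlog y hy)]
          congr 1
          apply Complex.ext
          · simp [Complex.log_re]
          · have : Complex.arg (-y) = Complex.arg y + Real.pi := Complex.arg_neg_eq_arg_add_pi_of_im_neg him
            simp [Complex.log_im, this]
            ring
      refine ContinuousAt.congr ?_ key
      have hws : -w ∈ Complex.slitPlane := Or.inl (by simpa using hre)
      refine ContinuousAt.comp (g := F) (hF.continuousAt (hop.mem_nhds ?_)) ?_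
      · have := hlog (-w) ⟨by simpa using hw.1, by simpa using hw.2⟩
        simpa using this
      · exact (ContinuousAt.comp (g := Complex.log) (f := fun y => -y) (continuousAt_clog hws)
          continuous_neg.continuousAt).add continuousAt_const
  · show F (Complex.log w) ^ 2 = _
    rw [hF2 _ (hlog w hw), Complex.exp_log hw.2]

/-- A nonvanishing continuous function `g` on a punctured disc: `g` or `g * w` has a
continuous square root. -/
lemma exists_sqrt {r : ℝ} (hr : 0 < r) (g : ℂ → ℂ) (hg : ContinuousOn g (ball 0 r \ {0}))
    (h0 : ∀ w ∈ ball (0:ℂ) r \ {0}, g w ≠ 0) :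
    (∃ S : ℂ → ℂ, ContinuousOn S (ball 0 r \ {0}) ∧ ∀ w ∈ ball (0:ℂ) r \ {0}, S w ^ 2 = g w) ∨
    (∃ S : ℂ → ℂ, ContinuousOn S (ball 0 r \ {0}) ∧ ∀ w ∈ ball (0:ℂ) r \ {0}, S w ^ 2 = g w * w) := by
  set H : Set ℂ := {w | w.re < Real.log r} with hH
  have hop : IsOpen H := isOpen_lt Complex.continuous_re continuous_const
  have hcv : Convex ℝ H := convex_halfSpace_re_lt _
  have hne : H.Nonempty := ⟨((Real.log r - 1 : ℝ) : ℂ), by simp [hH]⟩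
  have hsc : IsSimplyConnected H := by
    have := hcv.contractibleSpace hne
    have : SimplyConnectedSpace H := inferInstance
    exact this
  have hexp : ∀ w ∈ H, Complex.exp w ∈ ball (0:ℂ) r \ {0} := by
    intro w hw
    refine ⟨?_, Complex.exp_ne_zero _⟩
    rw [mem_ball_zero_iff, Complex.norm_exp]
    calc Real.exp w.re < Real.exp (Real.log r) := Real.exp_lt_exp.2 hw
      _ = r := Real.exp_log hr
  have hgc : ContinuousOn (fun w => g (Complex.exp w)) H :=
    hg.comp Complex.continuous_exp.continuousOn hexp
  obtain ⟨F, hFc, hF2⟩ := Complex.exists_continuousOn_pow_eq hsc hop hgc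
    (by rintro ⟨w, hw, h⟩; exact h0 _ (hexp w hw) h) two_ne_zero
  have hT : ∀ w ∈ H, w + 2 * Real.pi * Complex.I ∈ H := by
    intro w hw
    simpa [hH] using hw
  have hFper : ContinuousOn (fun w => F (w + 2 * Real.pi * Complex.I)) H :=
    hFc.comp (by fun_prop) hT
  have hFne : ∀ w ∈ H, F w ≠ 0 := by
    intro w hw h
    have := hF2 w
    rw [h] at this
    exact h0 _ (hexp w hw) (by simpa using this.symm)
  have hex : ∀ w, Complex.exp (w + 2 * Real.pi * Complex.I) = Complex.exp w := fun w =>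
    Complex.exp_periodic w
  have := hcv.isPreconnected.eq_or_eq_neg_of_sq_eq hFper hFc (fun w hw => by
    simp only [Pi.pow_apply]
    rw [hF2, hF2, hex]) (fun {w} hw => hFne w hw)
  rcases this with h | h
  · left
    exact exists_sqrt_aux hr g F hFc (fun w hw => hF2 w) (fun w hw => h hw)
  · right
    refine exists_sqrt_aux hr (fun w => g w * w) (fun w => F w * Complex.exp (w / 2)) ?_ ?_ ?_
    · exact hFc.mul (by fun_prop)
    · intro w hw
      rw [mul_pow, hF2, ← Complex.exp_nat_mul]
      congr 2
      push_cast; ring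
    · intro w hw
      have e : Complex.exp ((w + 2 * Real.pi * Complex.I) / 2) = - Complex.exp (w / 2) := by
        rw [show (w + 2 * Real.pi * Complex.I) / 2 = w / 2 + Real.pi * Complex.I by ring,
          Complex.exp_add, Complex.exp_pi_mul_I]
        ring
      have h' : F (w + 2 * Real.pi * Complex.I) = - F w := h hw
      show F (w + 2 * Real.pi * Complex.I) * _ = _
      rw [e, h']; ring

variable {M : Type*} [TopologicalSpace M]

lemma no_sqrt' (χ : OpenPartialHomeomorph M ℂ) {v : M} (hv : v ∈ χ.source) (hχ : χ v = 0)
    {U : Set M} (hU : U ∈ 𝓝 v) (s : M → ℂ) (hs : ContinuousOn s (U \ {v}))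
    (h : ∀ y ∈ U \ {v}, s y ^ 2 = χ y) : False := by
  have h1 : χ.symm ⁻¹' U ∩ χ.target ∈ 𝓝 (0:ℂ) := by
    have ht : (0:ℂ) ∈ χ.target := hχ ▸ χ.map_source hv
    have : ContinuousAt χ.symm 0 := χ.continuousAt_symm ht
    refine inter_mem (this ?_) (χ.open_target.mem_nhds ht)
    rw [← hχ, χ.left_inv hv]; exact hU
  obtain ⟨r, hr, hb⟩ := Metric.mem_nhds_iff.1 h1
  have hm : ∀ w ∈ ball (0:ℂ) r \ {0}, χ.symm w ∈ U \ {v} := by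
    intro w hw
    refine ⟨(hb hw.1).1, ?_⟩
    intro hwv
    have hwv' : χ.symm w = v := hwv
    apply hw.2
    have := χ.right_inv (hb hw.1).2
    rw [hwv', hχ] at this
    exact this.symm
  refine no_sqrt hr (fun w => s (χ.symm w)) ?_ ?_
  · refine hs.comp (χ.continuousOn_symm.mono fun w hw => (hb hw.1).2) hm
  · intro w hw
    show s (χ.symm w) ^ 2 = w
    rw [h _ (hm w hw), χ.right_inv (hb hw.1).2]

lemma exists_sqrt_mul (ζ χ : OpenPartialHomeomorph M ℂ) {v : M} (hv : v ∈ χ.source) (hχ : χ v = 0)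
    (hv' : v ∈ ζ.source) (hζ : ζ v = 0) :
    ∃ U : Set M, IsOpen U ∧ v ∈ U ∧ ∃ s : M → ℂ, ContinuousOn s (U \ {v}) ∧
      ∀ y ∈ U \ {v}, s y ^ 2 = ζ y * χ y := by
  have ht : (0:ℂ) ∈ χ.target := hχ ▸ χ.map_source hv
  have hsymm : χ.symm 0 = v := by rw [← hχ, χ.left_inv hv]
  have h1 : χ.symm ⁻¹' ζ.source ∩ χ.target ∈ 𝓝 (0:ℂ) := by
    have : ContinuousAt χ.symm 0 := χ.continuousAt_symm ht
    refine inter_mem (this ?_) (χ.open_target.mem_nhds ht)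
    rw [hsymm]; exact ζ.open_source.mem_nhds hv'
  obtain ⟨r, hr, hb⟩ := Metric.mem_nhds_iff.1 h1
  have hg : ContinuousOn (fun w => ζ (χ.symm w)) (ball 0 r \ {0}) :=
    ζ.continuousOn.comp (χ.continuousOn_symm.mono fun w hw => (hb hw.1).2) fun w hw => (hb hw.1).1
  have h0 : ∀ w ∈ ball (0:ℂ) r \ {0}, ζ (χ.symm w) ≠ 0 := by
    intro w hw h
    have h2 := ζ.injOn (hb hw.1).1 hv' (h.trans hζ.symm)
    have := χ.right_inv (hb hw.1).2
    rw [h2, hχ] at this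
    exact hw.2 this.symm
  have hUo : IsOpen (χ.source ∩ χ ⁻¹' ball 0 r) := χ.isOpen_inter_preimage isOpen_ball
  have hvU : v ∈ χ.source ∩ χ ⁻¹' ball 0 r := ⟨hv, by simpa [hχ] using hr⟩
  have hm : ∀ y ∈ (χ.source ∩ χ ⁻¹' ball 0 r) \ {v}, χ y ∈ ball (0:ℂ) r \ {0} := by
    intro y hy
    refine ⟨hy.1.2, fun h => hy.2 ?_⟩
    exact χ.injOn hy.1.1 hv (Eq.trans h hχ.symm)
  rcases exists_sqrt hr _ hg h0 with ⟨S, hS, hS2⟩ | ⟨S, hS, hS2⟩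
  · exfalso
    refine no_sqrt' ζ hv' hζ (U := χ.source ∩ χ ⁻¹' ball 0 r) (hUo.mem_nhds hvU) (fun y => S (χ y)) ?_ ?_
    · exact hS.comp (χ.continuousOn.mono fun y hy => hy.1.1) hm
    · intro y hy
      show S (χ y) ^ 2 = _
      rw [hS2 _ (hm y hy), χ.left_inv hy.1.1]
  · refine ⟨_, hUo, hvU, fun y => S (χ y), hS.comp (χ.continuousOn.mono fun y hy => hy.1.1) hm, ?_⟩
    intro y hy
    show S (χ y) ^ 2 = _
    rw [hS2 _ (hm y hy), χ.left_inv hy.1.1]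

end SurfUB

set_option linter.unusedSectionVars false
set_option linter.unusedVariables false

namespace SurfUB
open Set Filter Topology Metric

/-- principal square root -/
noncomputable def psq (w : ℂ) : ℂ := Complex.exp (Complex.log w / 2)

lemma psq_sq {w : ℂ} (h : w ≠ 0) : psq w ^ 2 = w := by
  rw [psq, ← Complex.exp_nat_mul]
  rw [show ((2:ℕ) : ℂ) * (Complex.log w / 2) = Complex.log w by push_cast; ring, Complex.exp_log h]

lemma psq_ne (w : ℂ) : psq w ≠ 0 := Complex.exp_ne_zero _

lemma psq_cont {w : ℂ} (h : w ∈ Complex.slitPlane) : ContinuousAt psq w := by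
  unfold psq
  exact Complex.continuous_exp.continuousAt.comp ((continuousAt_clog h).div_const 2)

lemma psq_neg_pos {w : ℂ} (h : 0 < w.im) : psq (-w) = -Complex.I * psq w := by
  have : Complex.log (-w) = Complex.log w - Real.pi * Complex.I := by
    apply Complex.ext
    · simp [Complex.log_re]
    · simp [Complex.log_im, Complex.arg_neg_eq_arg_sub_pi_of_im_pos h]
  rw [psq, psq, this, sub_div, Complex.exp_sub,
    show (Real.pi : ℂ) * Complex.I / 2 = Real.pi / 2 * Complex.I by ring, Complex.exp_pi_div_two_mul_I]
  rw [Complex.div_I]; ring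

lemma psq_neg_neg {w : ℂ} (h : w.im < 0) : psq (-w) = Complex.I * psq w := by
  have := psq_neg_pos (w := -w) (by simpa using h)
  rw [neg_neg] at this
  rw [this, ← mul_assoc]
  simp

namespace NG
variable {M : Type*} [TopologicalSpace M] {ι : Type} (G : NG M ι) [Fintype ι] [DecidableEq ι] [T2Space M]

lemma exists_branch_aux (i : ι) {v : M} (χ ζ : OpenPartialHomeomorph M ℂ) (hv : v ∈ χ.source)
    (hχ : χ v = 0) (hv' : v ∈ ζ.source) (hζ : ζ v = 0) (ε : ℝ) (hε : ε = 1 ∨ ε = -1)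
    (hsub : ζ.source ⊆ (G.e i).φ.source)
    (hIm : ∀ y, (ζ y).im = ε * ((G.e i).φ y).im)
    (hin : ∀ y ∈ ζ.source, y ∈ (G.e i).inner ↔ ∃ t ∈ Ioo (0:ℝ) 1, ζ y = t) :
    ∃ U : Set M, IsOpen U ∧ v ∈ U ∧ ∃ r : M → ℂ, ∀ x ∈ U, x ≠ v →
      G.IsBranchAt (Pi.mulSingle i (-1)) (fun y => - χ y) r x := by
  obtain ⟨U, hU, hvU, s, hs, hs2⟩ := exists_sqrt_mul ζ χ hv hχ hv' hζ
  have hUo' : IsOpen (ζ.source ∩ ζ ⁻¹' ball 0 1) := ζ.isOpen_inter_preimage isOpen_ball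
  refine ⟨U ∩ (ζ.source ∩ ζ ⁻¹' ball 0 1), hU.inter hUo', ⟨hvU, hv', by simp [hζ]⟩,
    fun y => s y / psq (- ζ y), fun x hx hxv => ?_⟩
  obtain ⟨hxU, hxs, hx1⟩ := hx
  have hζ0 : ζ x ≠ 0 := fun h => hxv (ζ.injOn hxs hv' (h.trans hζ.symm))
  have hsx : ContinuousAt s x :=
    hs.continuousAt ((hU.sdiff isClosed_singleton).mem_nhds ⟨hxU, hxv⟩)
  have hζc := ζ.continuousAt hxs
  by_cases hsl : -ζ x ∈ Complex.slitPlane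
  · have hni : x ∉ (G.e i).inner := by
      intro h
      obtain ⟨t, ht, h⟩ := (hin x hxs).1 h
      rw [h] at hsl
      rcases hsl with h | h
      · simp at h; linarith [ht.1]
      · simp at h
    have : G.IsBranchAt 1 (fun y => - χ y) (fun y => s y / psq (- ζ y)) x := by
      apply IsBranchAt.of_continuousAt
      · exact hsx.div (ContinuousAt.comp (g := psq) (psq_cont hsl) hζc.neg) (psq_ne _)
      · rw [div_pow, hs2 x ⟨hxU, hxv⟩, psq_sq (neg_ne_zero.2 hζ0)]
        field_simp
    refine this.congr (fun j hj => ?_) rfl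
    rw [Pi.mulSingle_eq_of_ne]
    · rfl
    · rintro rfl; exact hni hj
  · have him : (ζ x).im = 0 := by
      by_contra h
      exact hsl (Or.inr (by simpa using h))
    have hre : 0 < (ζ x).re := by
      rcases lt_trichotomy (ζ x).re 0 with h | h | h
      · exact absurd (Or.inl (by simpa using h)) hsl
      · exact absurd (Complex.ext h him) hζ0
      · exact h
    have hxi : x ∈ (G.e i).inner := by
      refine (hin x hxs).2 ⟨(ζ x).re, ⟨hre, ?_⟩, Complex.ext rfl (by simpa using him)⟩
      have : ‖ζ x‖ < 1 := by simpa using hx1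
      exact (Complex.re_le_norm _).trans_lt this
    have hsl' : ζ x ∈ Complex.slitPlane := Or.inl hre
    have hpc : ContinuousAt (fun y => psq (ζ y)) x := ContinuousAt.comp (g := psq) (psq_cont hsl') hζc
    refine ⟨ε * Complex.I * (s x / psq (ζ x)), ?_, ?_⟩
    · have hε2 : (ε : ℂ) ^ 2 = 1 := by rcases hε with rfl | rfl <;> simp
      rw [mul_pow, mul_pow, div_pow, hs2 x ⟨hxU, hxv⟩, psq_sq hζ0, Complex.I_sq, hε2]
      field_simp
    · have hlim : Tendsto (fun y => (ε : ℂ) * Complex.I * (s y / psq (ζ y))) (𝓝[G.carᶜ] x)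
          (𝓝 (ε * Complex.I * (s x / psq (ζ x)))) :=
        (continuousAt_const.mul (hsx.div hpc (psq_ne _))).mono_left nhdsWithin_le_nhds
      refine hlim.congr' ?_
      filter_upwards [self_mem_nhdsWithin, mem_nhdsWithin_of_mem_nhds (G.eventually_inner hxi)]
        with y hy hy2
      have hyim : ((G.e i).φ y).im ≠ 0 := fun h => hy (hy2.2.1.2 (hy2.2.2.2 h))
      rw [G.jump_of_inner _ hxi]
      have := psq_ne (ζ y)
      have hI := Complex.I_ne_zero
      rcases hε with rfl | rfl
      · rcases lt_or_gt_of_ne hyim with h | h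
        · rw [psq_neg_neg (by rw [hIm]; linarith), if_pos h]
          simp only [Pi.mulSingle_eq_same]
          push_cast
          field_simp
          simp
        · rw [psq_neg_pos (by rw [hIm]; linarith), if_neg (not_lt.2 h.le)]
          push_cast
          field_simp
          simp
      · rcases lt_or_gt_of_ne hyim with h | h
        · rw [psq_neg_pos (by rw [hIm]; linarith), if_pos h]
          simp only [Pi.mulSingle_eq_same]
          push_cast
          field_simp
          simp
        · rw [psq_neg_neg (by rw [hIm]; linarith), if_neg (not_lt.2 h.le)]
          push_cast
          field_simp
          simp

lemma exists_branch (i : ι) {v : M} (hi : (G.e i).src = v ∨ (G.e i).tgt = v)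
    (χ : OpenPartialHomeomorph M ℂ) (hv : v ∈ χ.source) (hχ : χ v = 0) :
    ∃ U : Set M, IsOpen U ∧ v ∈ U ∧ ∃ r : M → ℂ, ∀ x ∈ U, x ≠ v →
      G.IsBranchAt (Pi.mulSingle i (-1)) (fun y => - χ y) r x := by
  rcases hi with rfl | rfl
  · refine G.exists_branch_aux i χ (G.e i).φ hv hχ ((G.e i).pt_source (by simp)) ?_ 1 (Or.inl rfl)
      Subset.rfl (fun y => by simp) (fun y hy => ?_)
    · have := (G.e i).φ_pt (t := 0) (by simp); rw [SEdge.src, this]; simp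
    · rw [SEdge.mem_inner_iff]; simp [hy]
  · have h1 : ∀ y, ((G.e i).φ.transHomeomorph (Homeomorph.subLeft (1:ℂ))) y = 1 - (G.e i).φ y :=
      fun y => rfl
    refine G.exists_branch_aux i χ ((G.e i).φ.transHomeomorph (Homeomorph.subLeft (1:ℂ))) hv hχ
      ((G.e i).pt_source (by simp)) ?_ (-1) (Or.inr rfl) Subset.rfl (fun y => ?_) (fun y hy => ?_)
    · rw [h1]
      have := (G.e i).φ_pt (t := 1) (by simp)
      rw [SEdge.tgt, this]; simp
    · rw [h1]; simp
    · rw [SEdge.mem_inner_iff, h1]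
      constructor
      · rintro ⟨_, t, ht, h⟩
        refine ⟨1 - t, ⟨by linarith [ht.2], by linarith [ht.1]⟩, by rw [h]; push_cast; ring⟩
      · rintro ⟨t, ht, h⟩
        refine ⟨hy, 1 - t, ⟨by linarith [ht.2], by linarith [ht.1]⟩, ?_⟩
        push_cast; rw [← h]; ring

/-- edges at a vertex -/
def At (v : M) (i : ι) : Prop := (G.e i).src = v ∨ (G.e i).tgt = v

open Classical in
/-- product of the signs at a vertex -/
noncomputable def vprod (z : ι → ℤˣ) (v : M) : ℤˣ := ∏ i, if G.At v i then z i else 1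

def IsCycle (z : ι → ℤˣ) : Prop := ∀ v ∈ G.V, G.vprod z v = 1

open Classical in
noncomputable def negAt (z : ι → ℤˣ) (v : M) : Finset ι := Finset.univ.filter fun i => G.At v i ∧ z i = -1

lemma vprod_eq (z : ι → ℤˣ) (v : M) : G.vprod z v = (-1) ^ (G.negAt z v).card := by
  classical
  unfold vprod negAt
  rw [← Finset.prod_const, Finset.prod_filter]
  refine Finset.prod_congr rfl fun i _ => ?_
  by_cases h : G.At v i
  · rcases Int.units_eq_one_or (z i) with h1 | h1 <;> simp [h, h1]
  · simp [h]

/-- On a small neighborhood of a vertex, only edges at the vertex appear. -/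
lemma eventually_at {v : M} (hv : v ∈ G.V) : ∀ᶠ x in 𝓝 v, (x ∈ G.V → x = v) ∧
    ∀ i, x ∈ (G.e i).inner → G.At v i := by
  classical
  have h1 : ∀ᶠ x in 𝓝 v, x ∉ ((G.V.erase v : Finset M) : Set M) :=
    (G.V.erase v).finite_toSet.isClosed.isOpen_compl.mem_nhds (by simp)
  have h2 : ∀ᶠ x in 𝓝 v, ∀ i, ¬ G.At v i → x ∉ (G.e i).clo := by
    rw [eventually_all]
    intro i
    by_cases hi : G.At v i
    · simp [hi]
    · have : v ∉ (G.e i).clo := by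
        rw [SEdge.clo_eq]
        rintro (h | h | h)
        · exact hi (Or.inl h.symm)
        · exact hi (Or.inr h.symm)
        · exact G.inner_V i v h hv
      filter_upwards [G.eventually_not_clo this] with x hx _ using hx
  filter_upwards [h1, h2] with x hx hx2
  refine ⟨fun h => by_contra fun hne => hx (by simp [h, hne]), fun i hi => ?_⟩
  by_contra h
  exact hx2 i h (by rw [SEdge.clo_eq]; exact Or.inr (Or.inr hi))

lemma exists_local (z : ι → ℤˣ) {v : M} (hv : v ∈ G.V) (χ : OpenPartialHomeomorph M ℂ)
    (hvχ : v ∈ χ.source) (hχ : χ v = 0) :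
    ∃ U : Set M, IsOpen U ∧ v ∈ U ∧ U ⊆ χ.source ∧ (∀ x ∈ U, x ∈ G.V → x = v) ∧ ∃ r : M → ℂ, ∀ x ∈ U, x ≠ v →
      G.IsBranchAt z (fun y => (- χ y) ^ (G.negAt z v).card) r x := by
  classical
  have h : ∀ i : ι, ∃ U : Set M, IsOpen U ∧ v ∈ U ∧ ∃ r : M → ℂ, G.At v i → ∀ x ∈ U, x ≠ v →
      G.IsBranchAt (Pi.mulSingle i (-1)) (fun y => - χ y) r x := by
    intro i
    by_cases hi : G.At v i
    · obtain ⟨U, h1, h2, r, h3⟩ := G.exists_branch i hi χ hvχ hχ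
      exact ⟨U, h1, h2, r, fun _ => h3⟩
    · exact ⟨univ, isOpen_univ, mem_univ _, 0, fun h => absurd h hi⟩
  choose U hUo hvU r hr using h
  obtain ⟨W, hW, hWo, hvW⟩ := eventually_nhds_iff.1 (G.eventually_at hv)
  refine ⟨(⋂ i, U i) ∩ W ∩ χ.source, ((isOpen_iInter_of_finite hUo).inter hWo).inter χ.open_source,
    ⟨⟨mem_iInter.2 hvU, hvW⟩, hvχ⟩, inter_subset_right, fun x hx => (hW x hx.1.2).1,
    ∏ i ∈ G.negAt z v, r i, fun x hx hxv => ?_⟩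
  have := IsBranchAt.prod (G := G) (x := x) (G.negAt z v) (z := fun i => Pi.mulSingle i (-1))
    (f := fun i y => - χ y) (s := r) (fun i hi => by
      simp only [negAt, Finset.mem_filter] at hi
      exact hr i hi.2.1 x (mem_iInter.1 hx.1.1 i) hxv)
  refine this.congr (fun i hi => ?_) (by simp)
  have hat := (hW x hx.1.2).2 i hi
  rw [Finset.prod_apply]
  by_cases hz : z i = -1
  · rw [Finset.prod_eq_single i]
    · simp [hz]
    · intro j _ hj
      rw [Pi.mulSingle_eq_of_ne (Ne.symm hj)]
    · intro h
      exact absurd (by simp [negAt, hat, hz]) h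
  · rw [Finset.prod_eq_one]
    · rcases Int.units_eq_one_or (z i) with h | h
      · exact h.symm
      · exact absurd h hz
    · intro j hj
      rw [Pi.mulSingle_eq_of_ne]
      rintro rfl
      simp [negAt] at hj
      exact hz hj.2

lemma branch_extend {U : Set M} {v : M} (hU : U ∈ 𝓝 v) (χ : OpenPartialHomeomorph M ℂ)
    (hvχ : v ∈ χ.source) (hχ : χ v = 0) (s : M → ℂ) (hUV : ∀ x ∈ U, x ∈ G.V → x = v)
    (h : ∀ x ∈ U, x ≠ v → G.IsBranchAt 1 χ s x) : False := by
  have h' : ∀ x ∈ U \ {v}, ∃ c : ℂ, c ^ 2 = χ x ∧ Tendsto s (𝓝[G.carᶜ] x) (𝓝 c) := by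
    intro x hx
    obtain ⟨c, hc, h⟩ := h x hx.1 hx.2
    exact ⟨c, hc, by simpa [jump_one] using h⟩
  have hnb : ∀ x ∈ U \ {v}, (𝓝[G.carᶜ] x).NeBot := fun x hx =>
    G.nhdsWithin_neBot fun hxV => hx.2 (hUV x hx.1 hxV)
  refine no_sqrt' χ hvχ hχ hU (extendFrom G.carᶜ s) ?_ ?_
  · refine continuousOn_extendFrom (fun x hx => ?_) (fun x hx => ?_)
    · exact mem_closure_iff_nhdsWithin_neBot.2 (hnb x hx)
    · obtain ⟨c, _, hc⟩ := h' x hx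
      exact ⟨c, hc⟩
  · intro x hx
    obtain ⟨c, hc2, hc⟩ := h' x hx
    have := hnb x hx
    rw [extendFrom_eq (mem_closure_iff_nhdsWithin_neBot.2 this) hc, hc2]

/-- Parity lemma: a local coloring around a vertex forces the product of signs to be 1. -/
lemma vprod_of_col (z : ι → ℤˣ) {v : M} (hv : v ∈ G.V) (χ : OpenPartialHomeomorph M ℂ)
    (hvχ : v ∈ χ.source) (hχ : χ v = 0) (s : M → ℤˣ)
    (h : ∀ᶠ x in 𝓝 v, x ≠ v → G.IsColAt z s x) : G.vprod z v = 1 := by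
  obtain ⟨U, hUo, hvU, hUχ, hUV, r, hr⟩ := G.exists_local z hv χ hvχ hχ
  rw [vprod_eq]
  by_contra hodd
  have hodd' : Odd (G.negAt z v).card := by
    rcases Nat.even_or_odd (G.negAt z v).card with h | h
    · exact absurd h.neg_one_pow hodd
    · exact h
  obtain ⟨m, hm⟩ := hodd'
  obtain ⟨W, hW, hWo, hvW⟩ := eventually_nhds_iff.1 h
  refine G.branch_extend (U := U ∩ W) ((hUo.inter hWo).mem_nhds ⟨hvU, hvW⟩) χ hvχ hχ
    ((fun y => (((s y : ℤˣ) : ℤ) : ℂ)) * r * (fun y => Complex.I * ((χ y) ^ m)⁻¹))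
    (fun x hx => hUV x hx.1) (fun x hx hxv => ?_)
  have hχ0 : χ x ≠ 0 := fun h => hxv (χ.injOn (hUχ hx.1) hvχ (h.trans hχ.symm))
  have b1 := (hW x hx.2 hxv).branch
  have b2 := hr x hx.1 hxv
  have b3 : G.IsBranchAt 1 (fun y => -((χ y)^(2*m))⁻¹) (fun y => Complex.I * ((χ y) ^ m)⁻¹) x := by
    apply IsBranchAt.of_continuousAt
    · have := χ.continuousAt (hUχ hx.1)
      exact continuousAt_const.mul ((this.pow m).inv₀ (pow_ne_zero _ hχ0))
    · rw [mul_pow, Complex.I_sq, inv_pow, ← pow_mul, mul_comm m 2]; ring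
  refine ((b1.mul b2).mul b3).congr (fun i hi => ?_) ?_
  · simp only [Pi.mul_apply, Pi.one_apply, mul_one]
    exact Int.units_mul_self _
  · simp only [Pi.mul_apply, Pi.one_apply, hm]
    rw [pow_succ, (even_two_mul m).neg_pow]
    field_simp

/-- Existence of local colorings at vertices. -/
lemma exists_col_vertex (z : ι → ℤˣ) {v : M} (hv : v ∈ G.V) (χ : OpenPartialHomeomorph M ℂ)
    (hvχ : v ∈ χ.source) (hχ : χ v = 0) (h : G.vprod z v = 1) :
    ∃ U : Set M, IsOpen U ∧ v ∈ U ∧ ∃ s : M → ℤˣ, ∀ x ∈ U, x ∉ G.V → G.IsColAt z s x := by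
  obtain ⟨U, hUo, hvU, hUχ, hUV, r, hr⟩ := G.exists_local z hv χ hvχ hχ
  rw [vprod_eq] at h
  have heven : Even (G.negAt z v).card := by
    rcases Nat.even_or_odd (G.negAt z v).card with h' | h'
    · exact h'
    · rw [h'.neg_one_pow] at h
      exact absurd h (by decide)
  obtain ⟨m, hm⟩ := heven
  refine ⟨U, hUo, hvU, exists_col_of_branch (s := r * (fun y => ((χ y) ^ m)⁻¹)) hUo (fun x hx hxV => ?_)⟩
  have hxv : x ≠ v := by rintro rfl; exact hxV hv
  have hχ0 : χ x ≠ 0 := fun h => hxv (χ.injOn (hUχ hx) hvχ (h.trans hχ.symm))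
  have b2 := hr x hx hxv
  have b3 : G.IsBranchAt 1 (fun y => ((χ y)^(2*m))⁻¹) (fun y => ((χ y) ^ m)⁻¹) x := by
    apply IsBranchAt.of_continuousAt
    · have := χ.continuousAt (hUχ hx)
      exact ((this.pow m).inv₀ (pow_ne_zero _ hχ0))
    · rw [inv_pow, ← pow_mul, mul_comm m 2]
  refine (b2.mul b3).congr (fun i hi => ?_) ?_
  · simp only [Pi.mul_apply, Pi.one_apply, mul_one]
  · simp only [Pi.mul_apply, Pi.one_apply, hm, ← two_mul]
    rw [(even_two_mul m).neg_pow]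
    field_simp

/-- Existence of local colorings off the vertices. -/
lemma exists_col_off (z : ι → ℤˣ) {x : M} (hx : x ∉ G.V) :
    ∃ U : Set M, IsOpen U ∧ x ∈ U ∧ ∃ s : M → ℤˣ, ∀ x ∈ U, x ∉ G.V → G.IsColAt z s x := by
  by_cases hc : x ∈ G.car
  · rcases hc with h | ⟨i, hi⟩
    · exact absurd h hx
    · obtain ⟨W, hW, hWo, hvW⟩ := eventually_nhds_iff.1 (G.eventually_inner hi)
      refine ⟨W, hWo, hvW, fun y => if ((G.e i).φ y).im < 0 then z i else 1, fun y hy hyV => ?_⟩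
      by_cases hyi : y ∈ (G.e i).inner
      · refine ⟨1, Eventually.of_forall fun w => ?_⟩
        rw [G.jump_of_inner z hyi, Int.units_mul_self]
      · have hyc : y ∉ G.car := fun h => hyi ((hW y hy).2.1.1 h)
        have him : ((G.e i).φ y).im ≠ 0 := fun h => hyi ((hW y hy).2.2.2 h)
        have hcont : ContinuousAt (fun w => ((G.e i).φ w).im) y :=
          Complex.continuous_im.continuousAt.comp ((G.e i).φ.continuousAt (hW y hy).1)
        rcases lt_or_gt_of_ne him with h | h
        · refine ⟨z i, ?_⟩
          filter_upwards [mem_nhdsWithin_of_mem_nhds (hcont.eventually_lt_const h)] with w hw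
          rw [G.jump_of_not_car z hyc, one_mul, if_pos hw]
        · refine ⟨1, ?_⟩
          filter_upwards [mem_nhdsWithin_of_mem_nhds (hcont.eventually_const_lt h)] with w hw
          rw [G.jump_of_not_car z hyc, one_mul, if_neg (not_lt.2 (le_of_lt hw))]
  · refine ⟨G.carᶜ, G.isClosed_car.isOpen_compl, hc, fun _ => 1, fun y hy _ => ⟨1, ?_⟩⟩
    exact Eventually.of_forall fun w => by rw [G.jump_of_not_car z hy, one_mul]

end NG

/-- Every point has a complex chart. -/
class Surf (M : Type*) [TopologicalSpace M] : Prop where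
  ch : ∀ x : M, ∃ χ : OpenPartialHomeomorph M ℂ, x ∈ χ.source

lemma exists_chart {M : Type*} [TopologicalSpace M] [Surf M] (x : M) :
    ∃ χ : OpenPartialHomeomorph M ℂ, x ∈ χ.source ∧ χ x = 0 := by
  obtain ⟨χ, hχ⟩ := Surf.ch x
  exact ⟨χ.transHomeomorph (Homeomorph.subRight (χ x)), hχ, sub_self _⟩

namespace NG
variable {M : Type*} [TopologicalSpace M] {ι : Type} (G : NG M ι) [Fintype ι] [T2Space M] [Surf M]

def LocCol (z : ι → ℤˣ) : Prop := ∀ x : M, ∃ U : Set M, IsOpen U ∧ x ∈ U ∧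
  ∃ s : M → ℤˣ, ∀ x ∈ U, x ∉ G.V → G.IsColAt z s x

def GlobCol (z : ι → ℤˣ) : Prop := ∃ s : M → ℤˣ, ∀ x, x ∉ G.V → G.IsColAt z s x

lemma IsCycle.locCol {z : ι → ℤˣ} (h : G.IsCycle z) : G.LocCol z := by
  classical
  intro x
  by_cases hx : x ∈ G.V
  · obtain ⟨χ, h1, h2⟩ := exists_chart x
    exact G.exists_col_vertex z hx χ h1 h2 (h x hx)
  · exact G.exists_col_off z hx

lemma GlobCol.isCycle {z : ι → ℤˣ} (h : G.GlobCol z) : G.IsCycle z := by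
  classical
  intro v hv
  obtain ⟨χ, h1, h2⟩ := exists_chart v
  obtain ⟨s, hs⟩ := h
  refine G.vprod_of_col z hv χ h1 h2 s ?_
  filter_upwards [G.eventually_at hv] with x hx hxv
  exact hs x fun h => hxv (hx.1 h)

end NG
end SurfUB

set_option linter.unusedSectionVars false
set_option linter.unusedVariables false

namespace SurfUB
open Set Filter Topology Metric

lemma isOpen_eventually {α : Type*} [TopologicalSpace α] (Q : Set α) (p : α → Prop) :
    IsOpen {x | ∀ᶠ y in 𝓝[Q] x, p y} := by
  rw [isOpen_iff_mem_nhds]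
  intro x hx
  have hx' : ∀ᶠ y in 𝓝 x, y ∈ Q → p y := eventually_nhdsWithin_iff.1 hx
  filter_upwards [eventually_eventually_nhds.2 hx'] with y hy
  exact eventually_nhdsWithin_iff.2 hy

/-- Local constancy near a preconnected set implies global constancy. -/
lemma eventually_const {α X : Type*} [TopologicalSpace α] {B Q : Set α} {s : α → X}
    (hB : IsPreconnected B) (hne : B.Nonempty) (hQ : ∀ x ∈ B, (𝓝[Q] x).NeBot)
    (h : ∀ x ∈ B, ∃ c, ∀ᶠ y in 𝓝[Q] x, s y = c) :
    ∃ c, ∀ x ∈ B, ∀ᶠ y in 𝓝[Q] x, s y = c := by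
  obtain ⟨x0, hx0⟩ := hne
  obtain ⟨c0, hc0⟩ := h x0 hx0
  refine ⟨c0, ?_⟩
  by_contra hcon
  rw [not_forall] at hcon
  obtain ⟨x1, hcon⟩ := hcon
  rw [Classical.not_imp] at hcon
  obtain ⟨hx1, hx1'⟩ := hcon
  have hcov : ∀ x ∈ B, (∀ᶠ y in 𝓝[Q] x, s y = c0) ∨ (∀ᶠ y in 𝓝[Q] x, s y ≠ c0) := by
    intro x hx
    obtain ⟨c, hc⟩ := h x hx
    by_cases hcc : c = c0
    · left; rwa [hcc] at hc
    · right
      filter_upwards [hc] with y hy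
      rwa [hy]
  obtain ⟨x, hx, hx2, hx3⟩ := hB _ _ (isOpen_eventually Q fun y => s y = c0)
    (isOpen_eventually Q fun y => s y ≠ c0) (fun x hx => hcov x hx) ⟨x0, hx0, hc0⟩
    ⟨x1, hx1, (hcov x1 hx1).resolve_left hx1'⟩
  have := hQ x hx
  have hx2' : ∀ᶠ y in 𝓝[Q] x, s y = c0 := hx2
  have hx3' : ∀ᶠ y in 𝓝[Q] x, s y ≠ c0 := hx3
  obtain ⟨y, h1, h2⟩ := (hx2'.and hx3').exists
  exact h2 h1

lemma isPreconnected_punctured {r : ℝ} (hr : 0 < r) : IsPreconnected (ball (0:ℂ) r \ {0}) := by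
  have : ball (0:ℂ) r \ {0} = Complex.exp '' {w | w.re < Real.log r} := by
    ext w
    constructor
    · intro hw
      refine ⟨Complex.log w, ?_, Complex.exp_log hw.2⟩
      show (Complex.log w).re < Real.log r
      rw [Complex.log_re]
      exact Real.log_lt_log (by simpa using hw.2) (by simpa using hw.1)
    · rintro ⟨w, hw, rfl⟩
      refine ⟨?_, Complex.exp_ne_zero _⟩
      rw [mem_ball_zero_iff, Complex.norm_exp]
      calc Real.exp w.re < Real.exp (Real.log r) := Real.exp_lt_exp.2 hw
        _ = r := Real.exp_log hr
  rw [this]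
  exact (convex_halfSpace_re_lt _).isPreconnected.image _ Complex.continuous_exp.continuousOn

lemma punctured_neBot {M : Type*} [TopologicalSpace M] [Surf M] (x : M) : (𝓝[≠] x).NeBot := by
  obtain ⟨χ, h1, h2⟩ := exists_chart x
  have ht : (0:ℂ) ∈ χ.target := h2 ▸ χ.map_source h1
  have hc : ContinuousAt χ.symm 0 := χ.continuousAt_symm ht
  have hx : χ.symm 0 = x := by rw [← h2, χ.left_inv h1]
  have : Tendsto χ.symm (𝓝[≠] 0) (𝓝[≠] x) := by
    rw [tendsto_nhdsWithin_iff]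
    refine ⟨?_, ?_⟩
    · have := hc.tendsto; rw [hx] at this; exact this.mono_left nhdsWithin_le_nhds
    · filter_upwards [self_mem_nhdsWithin, mem_nhdsWithin_of_mem_nhds (χ.open_target.mem_nhds ht)] with w hw hw2 h
      apply hw
      have h' : χ.symm w = x := h
      have := χ.right_inv hw2
      rw [h', h2] at this
      exact this.symm
  exact this.neBot

namespace NG
variable {M : Type*} [TopologicalSpace M] {ι : Type} (G : NG M ι) [Fintype ι] [T2Space M] [Surf M]

lemma neBot (x : M) : (𝓝[G.carᶜ] x).NeBot := by
  by_cases hx : x ∈ G.V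
  · rw [← mem_closure_iff_nhdsWithin_neBot]
    have h1 : x ∈ closure ((G.V : Set M)ᶜ) := by
      rw [mem_closure_iff_frequently]
      have := punctured_neBot x
      classical
      have h2 : ∀ᶠ y in 𝓝[≠] x, y ∉ G.V := by
        have h1 : ∀ᶠ y in 𝓝 x, y ∉ ((G.V.erase x : Finset M) : Set M) :=
          (G.V.erase x).finite_toSet.isClosed.isOpen_compl.mem_nhds (by simp)
        filter_upwards [mem_nhdsWithin_of_mem_nhds h1, self_mem_nhdsWithin] with y h1 h2 h3
        exact h1 (by simpa [h3] using h2)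
      exact h2.frequently.filter_mono nhdsWithin_le_nhds
    have h2 : (G.V : Set M)ᶜ ⊆ closure G.carᶜ := fun y hy =>
      mem_closure_iff_nhdsWithin_neBot.2 (G.nhdsWithin_neBot hy)
    exact closure_minimal h2 isClosed_closure h1
  · exact G.nhdsWithin_neBot hx

/-- Colorings without jumps extend across vertices. -/
lemma col_one_extend {s : M → ℤˣ} {x : M} (h : ∀ᶠ y in 𝓝 x, y ∉ G.V → G.IsColAt 1 s y) :
    ∃ c, ∀ᶠ y in 𝓝[G.carᶜ] x, s y = c := by
  classical
  have hs : ∀ y, G.IsColAt 1 s y → ∃ c, ∀ᶠ w in 𝓝[G.carᶜ] y, s w = c := by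
    rintro y ⟨c, hc⟩
    exact ⟨c, by simpa [jump_one] using hc⟩
  by_cases hx : x ∈ G.V
  · obtain ⟨χ, h1, h2⟩ := exists_chart x
    have ht : (0:ℂ) ∈ χ.target := h2 ▸ χ.map_source h1
    have hxx : χ.symm 0 = x := by rw [← h2, χ.left_inv h1]
    have hc : Tendsto χ.symm (𝓝 0) (𝓝 x) := by
      have : ContinuousAt χ.symm 0 := χ.continuousAt_symm ht
      rw [ContinuousAt, hxx] at this
      exact this
    have hV : ∀ᶠ y in 𝓝 x, y ∈ G.V → y = x := by
      filter_upwards [G.eventually_at hx] with y hy using hy.1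
    have h3 := (hc.eventually (h.and hV)).and (χ.open_target.mem_nhds ht)
    obtain ⟨r, hr, hb⟩ := Metric.mem_nhds_iff.1 h3
    have hpc : IsPreconnected (χ.symm '' (ball (0:ℂ) r \ {0})) :=
      (isPreconnected_punctured hr).image _ (χ.continuousOn_symm.mono fun w hw => (hb hw.1).2)
    have hne : (χ.symm '' (ball (0:ℂ) r \ {0})).Nonempty := by
      refine Set.Nonempty.image _ ⟨((r/2 : ℝ) : ℂ), ?_, ?_⟩
      · simp [abs_of_pos hr]; linarith
      · simp [hr.ne']
    obtain ⟨c, hcc⟩ := eventually_const (s := s) hpc hne (fun y _ => G.neBot y) (by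
      rintro _ ⟨w, hw, rfl⟩
      apply hs
      refine (hb hw.1).1.1 fun hmem => ?_
      have := (hb hw.1).1.2 hmem
      have h4 := χ.right_inv (hb hw.1).2
      rw [this, h2] at h4
      exact hw.2 h4.symm)
    refine ⟨c, ?_⟩
    have hU : χ.source ∩ χ ⁻¹' ball 0 r ∈ 𝓝 x :=
      (χ.isOpen_inter_preimage isOpen_ball).mem_nhds ⟨h1, by simpa [h2] using hr⟩
    filter_upwards [self_mem_nhdsWithin, mem_nhdsWithin_of_mem_nhds hU] with y hy hyU
    have hyx : y ≠ x := by rintro rfl; exact hy (G.V_sub hx)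
    have hyc := hcc y ⟨χ y, ⟨hyU.2, fun h0 => hyx (χ.injOn hyU.1 h1 (Eq.trans h0 h2.symm))⟩, χ.left_inv hyU.1⟩
    rw [G.isClosed_car.isOpen_compl.nhdsWithin_eq hy] at hyc
    exact hyc.self_of_nhds
  · exact hs x (h.self_of_nhds hx)

/-- Two colorings near a preconnected set differ by a sign. -/
lemma col_unique {z : ι → ℤˣ} {s s' : M → ℤˣ} {B : Set M} (hB : IsPreconnected B)
    (h : ∀ x ∈ B, ∀ᶠ y in 𝓝 x, y ∉ G.V → G.IsColAt z s y)
    (h' : ∀ x ∈ B, ∀ᶠ y in 𝓝 x, y ∉ G.V → G.IsColAt z s' y) :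
    ∃ ε : ℤˣ, ∀ x ∈ B, ∀ᶠ y in 𝓝[G.carᶜ] x, s y = ε * s' y := by
  rcases B.eq_empty_or_nonempty with rfl | hne
  · exact ⟨1, by simp⟩
  obtain ⟨c, hc⟩ := eventually_const (s := s * s') hB hne (fun x _ => G.neBot x) (fun x hx => by
    apply G.col_one_extend
    filter_upwards [h x hx, h' x hx] with y h1 h2 hy
    have := (h1 hy).mul (h2 hy)
    have hz : z * z = 1 := by ext i; simp [Int.units_mul_self]
    rwa [hz] at this)
  refine ⟨c, fun x hx => ?_⟩
  filter_upwards [hc x hx] with y hy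
  rw [← hy, Pi.mul_apply, mul_assoc, Int.units_mul_self, mul_one]

/-- colorable near K -/
def ColNear (z : ι → ℤˣ) (K : Set M) : Prop :=
  ∃ s : M → ℤˣ, ∀ x ∈ K, ∀ᶠ y in 𝓝 x, y ∉ G.V → G.IsColAt z s y

variable {G}

lemma ColNear.mono {z : ι → ℤˣ} {K L : Set M} (h : G.ColNear z L) (hK : K ⊆ L) : G.ColNear z K := by
  obtain ⟨s, hs⟩ := h
  exact ⟨s, fun x hx => hs x (hK hx)⟩

lemma ColNear.glue {z : ι → ℤˣ} {K L : Set M} (hK : IsCompact K) (hL : IsCompact L)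
    (hKL : IsPreconnected (K ∩ L)) (h : G.ColNear z K) (h' : G.ColNear z L) :
    G.ColNear z (K ∪ L) := by
  classical
  obtain ⟨s, hs⟩ := h
  obtain ⟨s', hs'⟩ := h'
  obtain ⟨ε, hε⟩ := G.col_unique hKL (fun x hx => hs x hx.1) (fun x hx => hs' x hx.2)
  -- N : open set where the relation holds
  set N : Set M := {x | ∀ᶠ y in 𝓝[G.carᶜ] x, s y = ε * s' y} with hN
  have hNo : IsOpen N := isOpen_eventually _ _
  obtain ⟨A1, A2, hA1, hA2, hKA, hLA, hd⟩ := SeparatedNhds.of_isCompact_isCompact (hK.diff hNo) hL (by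
    rw [Set.disjoint_left]
    intro x hx hxL
    exact hx.2 (hε x ⟨hx.1, hxL⟩))
  refine ⟨fun y => if y ∈ A1 ∪ N then s y else ε * s' y, ?_⟩
  have hcol' : ∀ y, G.IsColAt z s' y → G.IsColAt z (fun w => ε * s' w) y := by
    intro y hy
    have := (isColAt_const (G := G) (x := y) ε).mul hy
    rwa [one_mul] at this
  have case1 : ∀ x ∈ A1 ∪ N, (∀ᶠ y in 𝓝 x, y ∉ G.V → G.IsColAt z s y) →
      ∀ᶠ y in 𝓝 x, y ∉ G.V → G.IsColAt z (fun y => if y ∈ A1 ∪ N then s y else ε * s' y) y := by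
    intro x hx h
    filter_upwards [h, (hA1.union hNo).mem_nhds hx] with y h1 h2 hy
    refine (h1 hy).congr' ?_
    filter_upwards [mem_nhdsWithin_of_mem_nhds ((hA1.union hNo).mem_nhds h2)] with w hw
    rw [if_pos hw]
  have case2 : ∀ x ∈ A2, (∀ᶠ y in 𝓝 x, y ∉ G.V → G.IsColAt z s' y) →
      ∀ᶠ y in 𝓝 x, y ∉ G.V → G.IsColAt z (fun y => if y ∈ A1 ∪ N then s y else ε * s' y) y := by
    intro x hx h
    filter_upwards [h, hA2.mem_nhds hx] with y h1 h2 hy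
    refine (hcol' y (h1 hy)).congr' ?_
    filter_upwards [mem_nhdsWithin_of_mem_nhds (hA2.mem_nhds h2), self_mem_nhdsWithin] with w hw hwc
    split_ifs with hwN
    · rcases hwN with hw1 | hw1
      · exact absurd hw (Set.disjoint_left.1 hd hw1)
      · have hw2 : ∀ᶠ y in 𝓝[G.carᶜ] w, s y = ε * s' y := hw1
        rw [G.isClosed_car.isOpen_compl.nhdsWithin_eq hwc] at hw2
        exact hw2.self_of_nhds.symm
    · rfl
  rintro x (hx | hx)
  · refine case1 x ?_ (hs x hx)
    by_cases hxN : x ∈ N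
    · exact Or.inr hxN
    · exact Or.inl (hKA ⟨hx, hxN⟩)
  · exact case2 x (hLA hx) (hs' x hx)

/-- Colorability on parametrized squares. -/
lemma LocCol.colNear_square {z : ι → ℤˣ} (h : G.LocCol z) (f : ℝ × ℝ → M)
    (hf : ContinuousOn f (Icc 0 1 ×ˢ Icc 0 1)) (hinj : InjOn f (Icc 0 1 ×ˢ Icc 0 1)) :
    G.ColNear z (f '' (Icc 0 1 ×ˢ Icc 0 1)) := by
  choose U hUo hxU s hs using h
  let F : unitInterval × unitInterval → M := fun p => f (p.1, p.2)
  have hF : Continuous F := hf.comp_continuous (by fun_prop) (fun p => ⟨p.1.2, p.2.2⟩)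
  obtain ⟨t, ht0, htm, ⟨n1, hn1⟩, ht⟩ :=
    exists_monotone_Icc_subset_open_cover_unitInterval_prod_self
    (c := fun x : M => F ⁻¹' U x) (fun x => (hUo x).preimage hF) (fun p _ => mem_iUnion.2 ⟨F p, hxU _⟩)
  have hR : ∀ S : Set (ℝ × ℝ), IsCompact S → S ⊆ Icc 0 1 ×ˢ Icc 0 1 → IsCompact (f '' S) :=
    fun S hS hS' => hS.image_of_continuousOn (hf.mono hS')
  have hsub : ∀ a b c d : unitInterval, Icc (a:ℝ) b ×ˢ Icc (c:ℝ) d ⊆ Icc (0:ℝ) 1 ×ˢ Icc (0:ℝ) 1 := by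
    intro a b c d
    exact Set.prod_mono (Icc_subset_Icc a.2.1 b.2.2) (Icc_subset_Icc c.2.1 d.2.2)
  have hglue : ∀ S T : Set (ℝ × ℝ), IsCompact S → IsCompact T → S ⊆ Icc 0 1 ×ˢ Icc 0 1 →
      T ⊆ Icc 0 1 ×ˢ Icc 0 1 → Convex ℝ S → Convex ℝ T → G.ColNear z (f '' S) → G.ColNear z (f '' T) →
      G.ColNear z (f '' (S ∪ T)) := by
    intro S T hS hT hS' hT' cS cT h1 h2
    rw [image_union]
    refine ColNear.glue (hR S hS hS') (hR T hT hT') ?_ h1 h2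
    rw [← hinj.image_inter hS' hT']
    exact (cS.inter cT).isPreconnected.image _ (hf.mono (inter_subset_left.trans hS'))
  have hcp : ∀ a b c d : ℝ, IsCompact (Icc a b ×ˢ Icc c d) := fun a b c d => isCompact_Icc.prod isCompact_Icc
  have hcv : ∀ a b c d : ℝ, Convex ℝ (Icc a b ×ˢ Icc c d) := fun a b c d => (convex_Icc _ _).prod (convex_Icc _ _)
  have cell : ∀ n m, G.ColNear z (f '' (Icc (t n : ℝ) (t (n+1)) ×ˢ Icc (t m : ℝ) (t (m+1)))) := by
    intro n m
    obtain ⟨x, hx⟩ := ht n m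
    refine ⟨s x, ?_⟩
    rintro _ ⟨⟨p, q⟩, ⟨hp, hq⟩, rfl⟩
    have hp' : p ∈ Icc (0:ℝ) 1 := ⟨(t n).2.1.trans hp.1, hp.2.trans (t (n+1)).2.2⟩
    have hq' : q ∈ Icc (0:ℝ) 1 := ⟨(t m).2.1.trans hq.1, hq.2.trans (t (m+1)).2.2⟩
    have : f (p, q) ∈ U x := hx (a := (⟨p, hp'⟩, ⟨q, hq'⟩)) ⟨hp, hq⟩
    filter_upwards [(hUo x).mem_nhds this] with y hy using hs x y hy
  have row : ∀ m n, G.ColNear z (f '' (Icc (0 : ℝ) (t n) ×ˢ Icc (t m : ℝ) (t (m+1)))) := by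
    intro m n
    induction n with
    | zero =>
      refine (cell 0 m).mono (image_mono (Set.prod_mono ?_ Subset.rfl))
      rw [ht0]
      exact Icc_subset_Icc le_rfl (t 1).2.1
    | succ n ih =>
      have := hglue _ _ (hcp _ _ _ _) (hcp _ _ _ _) (hsub 0 (t n) (t m) (t (m+1)))
        (hsub (t n) (t (n+1)) (t m) (t (m+1))) (hcv _ _ _ _) (hcv _ _ _ _) ih (cell n m)
      refine this.mono (image_mono ?_)
      rw [← Set.union_prod]
      exact Set.prod_mono Icc_subset_Icc_union_Icc Subset.rfl
  have col : ∀ m, G.ColNear z (f '' (Icc (0 : ℝ) (t n1) ×ˢ Icc (0 : ℝ) (t m))) := by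
    intro m
    induction m with
    | zero =>
      refine (row 0 n1).mono (image_mono (Set.prod_mono Subset.rfl ?_))
      rw [ht0]
      exact Icc_subset_Icc le_rfl (t 1).2.1
    | succ n ih =>
      have := hglue _ _ (hcp _ _ _ _) (hcp _ _ _ _) (hsub 0 (t n1) 0 (t n))
        (hsub 0 (t n1) (t n) (t (n+1))) (hcv _ _ _ _) (hcv _ _ _ _) ih (row n n1)
      refine this.mono (image_mono ?_)
      rw [← Set.prod_union]
      exact Set.prod_mono Subset.rfl Icc_subset_Icc_union_Icc
  have := col n1
  rw [hn1 n1 le_rfl] at this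
  exact this

end NG
end SurfUB

set_option linter.unusedSectionVars false
set_option linter.unusedVariables false

namespace SurfUB
open Set Filter Topology Metric

section
variable {M : Type*} [TopologicalSpace M] [Surf M]

lemma exists_conn_nhds {y : M} {O : Set M} (hO : O ∈ 𝓝 y) :
    ∃ B : Set M, IsOpen B ∧ IsPreconnected B ∧ y ∈ B ∧ B ⊆ O := by
  obtain ⟨χ, h1, h2⟩ := exists_chart y
  have ht : (0:ℂ) ∈ χ.target := h2 ▸ χ.map_source h1
  have hxx : χ.symm 0 = y := by rw [← h2, χ.left_inv h1]
  have hc : Tendsto χ.symm (𝓝 0) (𝓝 y) := by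
    have : ContinuousAt χ.symm 0 := χ.continuousAt_symm ht
    rw [ContinuousAt, hxx] at this
    exact this
  obtain ⟨r, hr, hb⟩ := Metric.mem_nhds_iff.1 (inter_mem (hc hO) (χ.open_target.mem_nhds ht))
  refine ⟨χ.symm '' ball 0 r, χ.isOpen_image_symm_of_subset_target isOpen_ball fun w hw => (hb hw).2,
    (convex_ball _ _).isPreconnected.image _ (χ.continuousOn_symm.mono fun w hw => (hb hw).2),
    ⟨0, by simpa using hr, hxx⟩, ?_⟩
  rintro _ ⟨w, hw, rfl⟩
  exact (hb hw).1

lemma exists_squares (x : M) : ∃ K L : Set M, x ∈ interior K ∧ K ⊆ interior L ∧ IsCompact K ∧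
    ∃ f : ℝ × ℝ → M, ContinuousOn f (Icc 0 1 ×ˢ Icc 0 1) ∧ InjOn f (Icc 0 1 ×ˢ Icc 0 1) ∧
      L ⊆ f '' (Icc 0 1 ×ˢ Icc 0 1) := by
  obtain ⟨χ, h1, h2⟩ := exists_chart x
  have ht : (0:ℂ) ∈ χ.target := h2 ▸ χ.map_source h1
  have hxx : χ.symm 0 = x := by rw [← h2, χ.left_inv h1]
  obtain ⟨R, hR, hb⟩ := Metric.mem_nhds_iff.1 (χ.open_target.mem_nhds ht)
  set d : ℝ := R / 4 with hd
  have hd0 : 0 < d := by positivity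
  let g : ℝ × ℝ → ℂ := fun p => ((d * (2 * p.1 - 1) : ℝ) : ℂ) + ((d * (2 * p.2 - 1) : ℝ) : ℂ) * Complex.I
  have hg : Continuous g := by fun_prop
  have hgT : ∀ p ∈ (Icc 0 1 ×ˢ Icc 0 1 : Set (ℝ × ℝ)), g p ∈ χ.target := by
    rintro ⟨p, q⟩ ⟨hp, hq⟩
    apply hb
    rw [mem_ball_zero_iff]
    have a1 : |d * (2 * p - 1)| ≤ d := by
      rw [abs_mul, abs_of_pos hd0]
      have : |2 * p - 1| ≤ 1 := abs_le.2 ⟨by linarith [hp.1], by linarith [hp.2]⟩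
      nlinarith
    have a2 : |d * (2 * q - 1)| ≤ d := by
      rw [abs_mul, abs_of_pos hd0]
      have : |2 * q - 1| ≤ 1 := abs_le.2 ⟨by linarith [hq.1], by linarith [hq.2]⟩
      nlinarith
    calc ‖g (p, q)‖ ≤ ‖((d * (2 * p - 1) : ℝ) : ℂ)‖ + ‖((d * (2 * q - 1) : ℝ) : ℂ) * Complex.I‖ :=
          norm_add_le _ _
      _ = |d * (2 * p - 1)| + |d * (2 * q - 1)| := by
          rw [norm_mul, Complex.norm_I, mul_one, Complex.norm_real, Complex.norm_real]; rfl
      _ < R := by linarith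
  have hsubT : closedBall (0:ℂ) d ⊆ χ.target := fun w hw => hb (by
    rw [mem_closedBall_zero_iff] at hw
    rw [mem_ball_zero_iff]; linarith)
  have hgo : ∀ w ∈ ball (0:ℂ) d, w ∈ g '' (Icc 0 1 ×ˢ Icc 0 1) := by
    intro w hw
    rw [mem_ball_zero_iff] at hw
    have hre := (Complex.abs_re_le_norm w).trans hw.le
    have him := (Complex.abs_im_le_norm w).trans hw.le
    rw [abs_le] at hre him
    have e : d * (w.re / d) = w.re := by field_simp
    have e' : d * (w.im / d) = w.im := by field_simp
    have b1 : w.re / d ≤ 1 := by rw [div_le_one hd0]; exact hre.2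
    have b2 : -1 ≤ w.re / d := by rw [le_div_iff₀ hd0]; linarith [hre.1]
    have b3 : w.im / d ≤ 1 := by rw [div_le_one hd0]; exact him.2
    have b4 : -1 ≤ w.im / d := by rw [le_div_iff₀ hd0]; linarith [him.1]
    refine ⟨((w.re / d + 1) / 2, (w.im / d + 1) / 2), ⟨⟨by simp only; linarith, by simp only; linarith⟩,
      ⟨by simp only; linarith, by simp only; linarith⟩⟩, ?_⟩
    apply Complex.ext
    · simp [g]; rw [show 2 * ((w.re / d + 1) / 2) - 1 = w.re / d by ring, e]
    · simp [g]; rw [show 2 * ((w.im / d + 1) / 2) - 1 = w.im / d by ring, e']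
  have hop : ∀ r ≤ d, IsOpen (χ.symm '' ball 0 r) := fun r hr =>
    χ.isOpen_image_symm_of_subset_target isOpen_ball fun w hw => hsubT
      (ball_subset_closedBall (ball_subset_ball hr hw))
  refine ⟨χ.symm '' closedBall 0 (d/2), χ.symm '' ball 0 d, ?_, ?_, ?_, fun p => χ.symm (g p), ?_, ?_, ?_⟩
  · rw [mem_interior]
    exact ⟨χ.symm '' ball 0 (d/2), image_mono ball_subset_closedBall, hop _ (by linarith),
      ⟨0, by simpa using hd0, hxx⟩⟩
  · rw [(hop d le_rfl).interior_eq]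
    exact image_mono (closedBall_subset_ball (by linarith))
  · exact (isCompact_closedBall _ _).image_of_continuousOn (χ.continuousOn_symm.mono
      fun w hw => hsubT (closedBall_subset_closedBall (by linarith) hw))
  · exact χ.continuousOn_symm.comp hg.continuousOn hgT
  · intro p hp q hq h
    have h' : χ.symm (g p) = χ.symm (g q) := h
    have := congrArg χ h'
    rw [χ.right_inv (hgT p hp), χ.right_inv (hgT q hq)] at this
    have hre := congrArg Complex.re this
    have him := congrArg Complex.im this
    simp [g, hd0.ne'] at hre him
    exact Prod.ext (by linarith) (by linarith)
  · rintro _ ⟨w, hw, rfl⟩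
    obtain ⟨p, hp, rfl⟩ := hgo w hw
    exact ⟨p, hp, rfl⟩

end

theorem exists_w (M : Type*) [TopologicalSpace M] [T2Space M] [CompactSpace M] [Surf M] :
    ∃ w : ℕ, ∀ (ι : Type) [Fintype ι] (G : NG M ι),
      Nat.card {z : ι → ℤˣ // G.LocCol z} ≤ 2 ^ w * Nat.card {z : ι → ℤˣ // G.GlobCol z} := by
  classical
  choose K L hxK hKL hKc f hfc hfi hfL using exists_squares (M := M)
  obtain ⟨T, hT⟩ := CompactSpace.elim_nhds_subcover (fun x => interior (K x))
    (fun x => isOpen_interior.mem_nhds (hxK x))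
  have hB : ∀ a b : M, ∀ y ∈ K a ∩ K b, ∃ B : Set M, IsOpen B ∧ IsPreconnected B ∧ y ∈ B ∧
      B ⊆ interior (L a) ∩ interior (L b) := fun a b y hy =>
    exists_conn_nhds ((isOpen_interior.inter isOpen_interior).mem_nhds ⟨hKL a hy.1, hKL b hy.2⟩)
  choose! B hBo hBc hBy hBs using hB
  have hP : ∀ a b : M, ∃ P : Finset M, (∀ y ∈ P, y ∈ K a ∩ K b) ∧ K a ∩ K b ⊆ ⋃ y ∈ P, B a b y :=
    fun a b => ((hKc a).inter (hKc b)).elim_nhds_subcover (B a b)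
      (fun y hy => (hBo a b y hy).mem_nhds (hBy a b y hy))
  choose P hP1 hP2 using hP
  let I : Type _ := Σ ab : T × T, P ab.1 ab.2
  refine ⟨Fintype.card I, fun ι _ G => ?_⟩
  have hcol : ∀ z : {z : ι → ℤˣ // G.LocCol z}, ∀ a : M, ∃ s : M → ℤˣ, ∀ x ∈ L a,
      ∀ᶠ y in 𝓝 x, y ∉ G.V → G.IsColAt z s y := fun z a =>
    (z.2.colNear_square (f a) (hfc a) (hfi a)).mono (hfL a)
  choose s hs using hcol
  have hε : ∀ z : {z : ι → ℤˣ // G.LocCol z}, ∀ i : I, ∃ ε : ℤˣ, ∀ x ∈ B i.1.1 i.1.2 i.2,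
      ∀ᶠ y in 𝓝[G.carᶜ] x, s z i.1.1 y = ε * s z i.1.2 y := by
    intro z i
    have hm := hP1 _ _ _ i.2.2
    exact G.col_unique (hBc _ _ _ hm)
      (fun x hx => hs z _ x (interior_subset (hBs _ _ _ hm hx).1))
      (fun x hx => hs z _ x (interior_subset (hBs _ _ _ hm hx).2))
  choose ε hε using hε
  have key : ∀ z z' : {z : ι → ℤˣ // G.LocCol z}, ε z = ε z' → G.GlobCol (z.1 * z'.1) := by
    intro z z' hzz
    have hcov : ∀ y : M, ∃ a ∈ T, y ∈ interior (K a) := by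
      intro y
      have : y ∈ ⋃ x ∈ T, interior (K x) := by rw [hT]; trivial
      simpa using this
    choose c hcT hc using hcov
    have agree : ∀ a ∈ T, ∀ b ∈ T, ∀ y ∈ K a ∩ K b, y ∉ G.car →
        s z a y * s z' a y = s z b y * s z' b y := by
      intro a ha b hb y hy hyc
      obtain ⟨p, hp, hyp⟩ := mem_iUnion₂.1 (hP2 a b hy)
      let i : I := ⟨(⟨a, ha⟩, ⟨b, hb⟩), ⟨p, hp⟩⟩
      have e1 := hε z i y hyp
      have e2 := hε z' i y hyp
      rw [G.isClosed_car.isOpen_compl.nhdsWithin_eq hyc] at e1 e2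
      have e1' : s z a y = ε z i * s z b y := e1.self_of_nhds
      have e2' : s z' a y = ε z' i * s z' b y := e2.self_of_nhds
      rw [e1', e2', hzz, mul_mul_mul_comm, Int.units_mul_self, one_mul]
    refine ⟨fun y => s z (c y) y * s z' (c y) y, fun x hx => ?_⟩
    have hxL : x ∈ L (c x) := interior_subset (hKL _ (interior_subset (hc x)))
    have h1 := (hs z (c x) x hxL).self_of_nhds hx
    have h2 := (hs z' (c x) x hxL).self_of_nhds hx
    refine (h1.mul h2).congr' ?_
    filter_upwards [self_mem_nhdsWithin, mem_nhdsWithin_of_mem_nhds (isOpen_interior.mem_nhds (hc x))]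
      with y hy hyK
    exact agree _ (hcT x) _ (hcT y) y ⟨interior_subset hyK, interior_subset (hc y)⟩ hy
  -- injection
  have hrep : ∀ e : I → ℤˣ, ∃ r : ι → ℤˣ, ∀ z : {z : ι → ℤˣ // G.LocCol z}, ε z = e → G.GlobCol (z.1 * r) := by
    intro e
    by_cases h : ∃ z0, ε z0 = e
    · obtain ⟨z0, h0⟩ := h
      exact ⟨z0.1, fun z hz => key z z0 (hz.trans h0.symm)⟩
    · push Not at h
      exact ⟨1, fun z hz => absurd hz (h z)⟩
  choose r hr using hrep
  let Φ : {z : ι → ℤˣ // G.LocCol z} → (I → ℤˣ) × {z : ι → ℤˣ // G.GlobCol z} :=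
    fun z => (ε z, ⟨z.1 * r (ε z), hr _ z rfl⟩)
  have hΦ : Function.Injective Φ := by
    intro z z' h
    have h1 : ε z = ε z' := congrArg Prod.fst h
    have h2 : z.1 * r (ε z) = z'.1 * r (ε z') := congrArg (fun p => p.2.1) h
    rw [h1] at h2
    exact Subtype.ext (mul_right_cancel h2)
  have := Nat.card_le_card_of_injective Φ hΦ
  rw [Nat.card_prod] at this
  refine this.trans (Nat.mul_le_mul_right _ ?_)
  rw [Nat.card_eq_fintype_card, Fintype.card_fun]
  simp

end SurfUB


set_option linter.unusedSectionVars false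
set_option linter.unusedVariables false

namespace SurfUB
open Set Filter Topology Metric

lemma half_neBot (t : ℂ) {ε : ℝ} (hε : ε = 1 ∨ ε = -1) (ht : t.im = 0) :
    (𝓝[{w : ℂ | 0 < ε * w.im}] t).NeBot := by
  rw [← mem_closure_iff_nhdsWithin_neBot, Metric.mem_closure_iff]
  intro δ hδ
  refine ⟨t + ((ε * (δ/2) : ℝ) : ℂ) * Complex.I, ?_, ?_⟩
  · show 0 < ε * _
    have : (t + ((ε * (δ/2) : ℝ) : ℂ) * Complex.I).im = ε * (δ/2) := by
      simp [ht]
    rw [this]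
    rcases hε with rfl | rfl <;> linarith
  · rw [dist_eq_norm, show t - (t + ((ε * (δ/2) : ℝ) : ℂ) * Complex.I) = -(((ε * (δ/2) : ℝ) : ℂ) * Complex.I) by ring,
      norm_neg, norm_mul, Complex.norm_I, mul_one, Complex.norm_real, Real.norm_eq_abs]
    rcases hε with rfl | rfl
    · rw [abs_of_pos (by linarith)]; linarith
    · rw [abs_of_neg (by linarith)]; linarith

lemma half_convex (ε : ℝ) : Convex ℝ {w : ℂ | 0 < ε * w.im} := by
  intro a ha b hb p q hp hq hpq
  have ha' : 0 < ε * a.im := ha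
  have hb' : 0 < ε * b.im := hb
  show 0 < ε * (p • a + q • b).im
  have : (p • a + q • b).im = p * a.im + q * b.im := by simp
  rw [this]
  rcases eq_or_lt_of_le hp with h | h
  · have : q = 1 := by linarith
    rw [← h, this]; linarith
  · have : ε * (p * a.im + q * b.im) = p * (ε * a.im) + q * (ε * b.im) := by ring
    rw [this]; positivity

namespace NG
variable {M : Type*} [TopologicalSpace M] {ι : Type} (G : NG M ι) [Fintype ι] [T2Space M] [Surf M]

def side (ε : ℝ) (i : ι) : Set M := {y | y ∈ (G.e i).φ.source ∧ 0 < ε * ((G.e i).φ y).im}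

lemma side_neBot {ε : ℝ} (hε : ε = 1 ∨ ε = -1) {i : ι} {x : M} (hx : x ∈ (G.e i).inner) :
    (𝓝[G.side ε i] x).NeBot := by
  obtain ⟨hs, t, ht, hxt⟩ := (G.e i).mem_inner_iff.1 hx
  have htt := (G.e i).mem_target t (Ioo_subset_Icc_self ht)
  have hxe : (G.e i).φ.symm t = x := by rw [← hxt, (G.e i).φ.left_inv hs]
  have := half_neBot (t:ℂ) hε (by simp)
  have hc : ContinuousAt (G.e i).φ.symm (t:ℂ) := (G.e i).φ.continuousAt_symm htt
  have : Tendsto (G.e i).φ.symm (𝓝[{w : ℂ | 0 < ε * w.im}] (t:ℂ)) (𝓝[G.side ε i] x) := by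
    rw [tendsto_nhdsWithin_iff]
    constructor
    · have := hc.tendsto
      rw [hxe] at this
      exact this.mono_left nhdsWithin_le_nhds
    · filter_upwards [self_mem_nhdsWithin, mem_nhdsWithin_of_mem_nhds ((G.e i).φ.open_target.mem_nhds htt)] with w hw hwt
      refine ⟨(G.e i).φ.map_target hwt, ?_⟩
      rw [(G.e i).φ.right_inv hwt]; exact hw
  exact this.neBot

/-- a function locally constant off the graph has a constant value on each side of an edge -/
lemma side_const {X : Type*} {ε : ℝ} (hε : ε = 1 ∨ ε = -1) (s : M → X)
    (hs : ∀ x, x ∉ G.car → ∀ᶠ y in 𝓝 x, s y = s x) (i : ι) :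
    ∃ c, ∀ x ∈ (G.e i).inner, ∀ᶠ y in 𝓝[G.side ε i] x, s y = c := by
  refine eventually_const (G.e i).isPreconnected_inner ?_ (fun x hx => G.side_neBot hε hx) ?_
  · exact ⟨_, 1/2, by norm_num, rfl⟩
  intro x hx
  obtain ⟨hsx, t, ht, hxt⟩ := (G.e i).mem_inner_iff.1 hx
  have htt := (G.e i).mem_target t (Ioo_subset_Icc_self ht)
  have hxe : (G.e i).φ.symm t = x := by rw [← hxt, (G.e i).φ.left_inv hsx]
  have hc : ContinuousAt (G.e i).φ.symm (t:ℂ) := (G.e i).φ.continuousAt_symm htt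
  have h1 : ∀ᶠ w in 𝓝 (t:ℂ), w ∈ (G.e i).φ.target ∧ ((G.e i).φ.symm w ∈ (G.e i).φ.source ∧
      ((G.e i).φ.symm w ∈ G.car ↔ (G.e i).φ.symm w ∈ (G.e i).inner) ∧
      ((G.e i).φ.symm w ∈ (G.e i).inner ↔ ((G.e i).φ ((G.e i).φ.symm w)).im = 0)) := by
    refine Filter.Eventually.and ((G.e i).φ.open_target.mem_nhds htt) ?_
    have h0 := G.eventually_inner hx
    have hct := hc.tendsto
    rw [hxe] at hct
    exact hct.eventually h0
  obtain ⟨r, hr, hball⟩ := Metric.eventually_nhds_iff_ball.1 h1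
  set B : Set M := (G.e i).φ.symm '' (ball (t:ℂ) r ∩ {w : ℂ | 0 < ε * w.im}) with hB
  have hBp : IsPreconnected B := by
    refine (((convex_ball _ _).inter (half_convex ε)).isPreconnected).image _ ?_
    exact (G.e i).φ.continuousOn_symm.mono fun w hw => (hball w hw.1).1
  have hBc : ∀ y ∈ B, y ∉ G.car := by
    rintro _ ⟨w, hw, rfl⟩ hc
    obtain ⟨h1, h2, h3, h4⟩ := hball w hw.1
    have h5 := h4.1 (h3.1 hc)
    rw [(G.e i).φ.right_inv h1] at h5
    have h6 : 0 < ε * w.im := hw.2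
    rw [h5] at h6; simp at h6
  have hBne : B.Nonempty := by
    have := half_neBot (t:ℂ) hε (by simp)
    obtain ⟨w, hw⟩ := this.nonempty_of_mem (inter_mem_nhdsWithin _ (ball_mem_nhds _ hr))
    exact ⟨_, w, ⟨hw.2, hw.1⟩, rfl⟩
  obtain ⟨c, hcB⟩ := eventually_const (Q := univ) (s := s) hBp hBne (fun x _ => by rw [nhdsWithin_univ]; infer_instance)
    (fun y hy => ⟨s y, by rw [nhdsWithin_univ]; exact hs y (hBc y hy)⟩)
  refine ⟨c, ?_⟩
  have h2 : ∀ᶠ y in 𝓝 x, (G.e i).φ y ∈ ball (t:ℂ) r := by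
    refine ((G.e i).φ.continuousAt hsx).eventually_mem ?_
    rw [hxt]; exact ball_mem_nhds _ hr
  filter_upwards [self_mem_nhdsWithin, mem_nhdsWithin_of_mem_nhds h2] with y hy hy2
  have hyB : y ∈ B := ⟨(G.e i).φ y, ⟨hy2, hy.2⟩, (G.e i).φ.left_inv hy.1⟩
  have := hcB y hyB
  rw [nhdsWithin_univ] at this
  exact this.self_of_nhds

/-- The component of the complement of the graph. -/
def comp (y : M) : Set M := connectedComponentIn G.carᶜ y

lemma comp_loc (x : M) (hx : x ∉ G.car) : ∀ᶠ y in 𝓝 x, G.comp y = G.comp x := by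
  obtain ⟨B, hBo, hBp, hyB, hB⟩ := exists_conn_nhds (G.isClosed_car.isOpen_compl.mem_nhds hx)
  filter_upwards [hBo.mem_nhds hyB] with y hy
  have : y ∈ connectedComponentIn G.carᶜ x := hBp.subset_connectedComponentIn hyB hB hy
  exact (connectedComponentIn_eq this).symm

lemma col_comp {z : ι → ℤˣ} {s : M → ℤˣ} (hs : ∀ x, x ∉ G.V → G.IsColAt z s x) {x y : M}
    (hx : x ∉ G.car) (h : G.comp x = G.comp y) : s x = s y := by
  have hyx : x ∈ G.comp y := h ▸ mem_connectedComponentIn hx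
  have hy : y ∈ G.carᶜ := by
    by_contra hy
    rw [comp, connectedComponentIn_eq_empty hy] at hyx
    exact hyx
  have hyy : y ∈ G.comp y := mem_connectedComponentIn hy
  obtain ⟨c, hc⟩ := eventually_const (Q := univ) (s := s) (B := G.comp y) isPreconnected_connectedComponentIn ⟨y, hyy⟩
    (fun x _ => by rw [nhdsWithin_univ]; infer_instance) (by
      intro u hu
      have hu' : u ∉ G.car := connectedComponentIn_subset _ _ hu
      obtain ⟨c, hc⟩ := hs u (fun h => hu' (G.V_sub h))
      rw [G.isClosed_car.isOpen_compl.nhdsWithin_eq hu'] at hc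
      refine ⟨c, ?_⟩
      rw [nhdsWithin_univ]
      filter_upwards [hc] with v hv
      rwa [G.jump_of_not_car _ hu', one_mul] at hv)
  have h1 := hc x hyx
  have h2 := hc y hyy
  rw [nhdsWithin_univ] at h1 h2
  rw [h1.self_of_nhds, h2.self_of_nhds]

open Classical in
theorem exists_faces : ∃ L R : ι → Set M,
    (∀ z, G.GlobCol z → ∃ h : Set M → ℤˣ, ∀ i, z i = h (L i) * h (R i)) ∧
    (∀ f : Set M, G.IsCycle (fun i => (if L i = f then -1 else 1) * (if R i = f then -1 else 1))) := by
  choose L hL using G.side_const (ε := 1) (Or.inl rfl) G.comp G.comp_loc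
  choose R hR using G.side_const (ε := -1) (Or.inr rfl) G.comp G.comp_loc
  have hside : ∀ i, ∀ x ∈ (G.e i).inner, ∀ᶠ y in 𝓝[G.carᶜ] x, ∃ ε : ℝ, y ∈ G.side ε i ∧
      ((ε = 1 ∧ ¬ ((G.e i).φ y).im < 0 ∧ G.comp y = L i) ∨ (ε = -1 ∧ ((G.e i).φ y).im < 0 ∧ G.comp y = R i)) := by
    intro i x hx
    have h1 := eventually_nhdsWithin_iff.1 (hL i x hx)
    have h2 := eventually_nhdsWithin_iff.1 (hR i x hx)
    filter_upwards [self_mem_nhdsWithin, mem_nhdsWithin_of_mem_nhds h1, mem_nhdsWithin_of_mem_nhds h2,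
      mem_nhdsWithin_of_mem_nhds (G.eventually_inner hx)] with y hy h1 h2 h3
    have h1' : y ∈ G.side 1 i → G.comp y = L i := h1
    have h2' : y ∈ G.side (-1) i → G.comp y = R i := h2
    obtain ⟨h4, h5, h6⟩ := h3
    have hne : ((G.e i).φ y).im ≠ 0 := fun h => hy (h5.2 (h6.2 h))
    rcases lt_or_gt_of_ne hne with h | h
    · have : y ∈ G.side (-1) i := ⟨h4, by linarith⟩
      exact ⟨-1, this, Or.inr ⟨rfl, h, h2' this⟩⟩
    · have : y ∈ G.side 1 i := ⟨h4, by linarith⟩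
      exact ⟨1, this, Or.inl ⟨rfl, by linarith, h1' this⟩⟩
  refine ⟨L, R, ?_, ?_⟩
  · rintro z ⟨s, hs⟩
    refine ⟨fun f => if h : ∃ y, y ∉ G.car ∧ G.comp y = f then s h.choose else 1, fun i => ?_⟩
    have hval : ∀ y, y ∉ G.car → ∀ f, G.comp y = f →
        (if h : ∃ y, y ∉ G.car ∧ G.comp y = f then s h.choose else 1) = s y := by
      intro y hy f hf
      have h : ∃ y, y ∉ G.car ∧ G.comp y = f := ⟨y, hy, hf⟩
      rw [dif_pos h]
      exact G.col_comp hs h.choose_spec.1 (h.choose_spec.2.trans hf.symm)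
    have hx : (G.e i).pt (1/2) ∈ (G.e i).inner := ⟨1/2, by norm_num, rfl⟩
    set x := (G.e i).pt (1/2)
    obtain ⟨c, hc⟩ := hs x (G.inner_V i x hx)
    have key2 : ∀ ε : ℝ, ε = 1 ∨ ε = -1 → ∃ y, y ∈ G.side ε i ∧ y ∉ G.car ∧ G.jump z x y * s y = c ∧ 
        G.comp y = if ε = 1 then L i else R i := by
      intro ε hε
      have := G.side_neBot hε hx
      have hc' := eventually_nhdsWithin_iff.1 hc
      have hsd := eventually_nhdsWithin_iff.1 (hside i x hx)
      have he : ∀ᶠ y in 𝓝[G.side ε i] x, y ∈ G.side ε i ∧ y ∉ G.car ∧ G.jump z x y * s y = c ∧ 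
        G.comp y = if ε = 1 then L i else R i := by
        filter_upwards [self_mem_nhdsWithin, mem_nhdsWithin_of_mem_nhds hc', mem_nhdsWithin_of_mem_nhds hsd, mem_nhdsWithin_of_mem_nhds (G.eventually_inner hx)] with y h1 h2 h6 h3
        have h5 := h1.2
        have h4 : y ∉ G.car := by
          intro h
          have := h3.2.2.1 (h3.2.1.1 h)
          rw [this] at h5; simp at h5
        refine ⟨h1, h4, h2 h4, ?_⟩
        obtain ⟨ε', h7, h8⟩ := h6 h4
        rcases hε with rfl | rfl
        · rcases h8 with h8 | h8
          · simpa using h8.2.2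
          · exfalso; linarith [h8.2.1]
        · rcases h8 with h8 | h8
          · exfalso; linarith [h8.2.1]
          · rw [if_neg (by norm_num)]; exact h8.2.2
      exact he.exists
    obtain ⟨y1, hy1, hy1c, hj1, hc1⟩ := key2 1 (Or.inl rfl)
    obtain ⟨y2, hy2, hy2c, hj2, hc2⟩ := key2 (-1) (Or.inr rfl)
    rw [if_pos rfl] at hc1
    rw [if_neg (by norm_num)] at hc2
    show z i = (if h : ∃ y, y ∉ G.car ∧ G.comp y = L i then s h.choose else 1) *
      (if h : ∃ y, y ∉ G.car ∧ G.comp y = R i then s h.choose else 1)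
    rw [hval y1 hy1c _ hc1, hval y2 hy2c _ hc2]
    rw [G.jump_of_inner z hx, if_neg (by have := hy1.2; linarith), one_mul] at hj1
    rw [G.jump_of_inner z hx, if_pos (by have := hy2.2; linarith)] at hj2
    rw [hj1, ← hj2, mul_assoc, Int.units_mul_self, mul_one]
  · intro f
    apply GlobCol.isCycle
    refine ⟨fun y => if G.comp y = f then -1 else 1, fun x hx => ?_⟩
    by_cases hxc : x ∈ G.car
    · rcases hxc with h | ⟨i, hi⟩
      · exact absurd h hx
      · refine ⟨if L i = f then -1 else 1, ?_⟩
        filter_upwards [hside i x hi] with y hy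
        rw [G.jump_of_inner _ hi]
        obtain ⟨ε, -, ⟨-, h1, h2⟩ | ⟨-, h1, h2⟩⟩ := hy
        · rw [if_neg h1, one_mul, h2]
        · rw [if_pos h1, h2, mul_assoc, Int.units_mul_self, mul_one]
    · refine ⟨if G.comp x = f then -1 else 1, ?_⟩
      filter_upwards [mem_nhdsWithin_of_mem_nhds (G.comp_loc x hxc)] with y hy
      have hy' : G.comp y = G.comp x := hy
      rw [G.jump_of_not_car _ hxc, one_mul, hy']

end NG
end SurfUB


set_option linter.unusedSectionVars false
set_option linter.unusedVariables false

namespace SurfUB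
open Set Filter Topology Metric

namespace NG
variable {M : Type*} [TopologicalSpace M] {ι : Type} (G : NG M ι) [Fintype ι] [T2Space M]

lemma vprod_mul (z z' : ι → ℤˣ) (v : M) : G.vprod (z * z') v = G.vprod z v * G.vprod z' v := by
  classical
  unfold vprod
  rw [← Finset.prod_mul_distrib]
  refine Finset.prod_congr rfl fun i _ => ?_
  split_ifs <;> simp

lemma vprod_one (v : M) : G.vprod 1 v = 1 := by
  classical
  unfold vprod
  refine Finset.prod_eq_one fun i _ => ?_
  split_ifs <;> simp

lemma IsCycle.mul {G : NG M ι} {z z' : ι → ℤˣ} (h : G.IsCycle z) (h' : G.IsCycle z') : G.IsCycle (z * z') := by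
  intro v hv
  rw [vprod_mul, h v hv, h' v hv, one_mul]

noncomputable def vhom : (ι → ℤˣ) →* (G.V → ℤˣ) where
  toFun z v := G.vprod z v
  map_one' := by funext v; exact G.vprod_one v
  map_mul' z z' := by funext v; exact G.vprod_mul z z' v

lemma card_cycle : 2 ^ Fintype.card ι ≤ 2 ^ G.V.card * Nat.card {z // G.IsCycle z} := by
  classical
  have h1 := Subgroup.card_mul_index G.vhom.ker
  rw [Subgroup.index_ker] at h1
  have h2 : Nat.card (ι → ℤˣ) = 2 ^ Fintype.card ι := by
    rw [Nat.card_eq_fintype_card, Fintype.card_fun]; rfl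
  have h3 : Nat.card G.vhom.range ≤ 2 ^ G.V.card := by
    have : Nat.card (G.V → ℤˣ) = 2 ^ G.V.card := by
      rw [Nat.card_eq_fintype_card, Fintype.card_fun, Fintype.card_coe]; rfl
    rw [← this]
    exact Nat.card_le_card_of_injective _ Subtype.val_injective
  have h4 : Nat.card G.vhom.ker = Nat.card {z // G.IsCycle z} := by
    refine Nat.card_congr (Equiv.subtypeEquivRight fun z => ?_)
    rw [MonoidHom.mem_ker, funext_iff]
    constructor
    · intro h v hv; exact h ⟨v, hv⟩
    · intro h v; exact h v v.2
  rw [← h2, ← h1, h4, mul_comm]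
  exact Nat.mul_le_mul_right _ h3

variable {𝒟 : Type*} (lab : M → 𝒟)

def Spc (i : ι) : Prop := lab (G.e i).src ≠ lab (G.e i).tgt

open Classical in
lemma IsCycle.lab_prod {G : NG M ι} {z : ι → ℤˣ} (h : G.IsCycle z) (d : 𝒟) :
    ∏ i, ((if lab (G.e i).src = d then z i else 1) * (if lab (G.e i).tgt = d then z i else 1)) = 1 := by
  have h1 : ∏ v ∈ G.V.filter (fun v => lab v = d), G.vprod z v = 1 :=
    Finset.prod_eq_one fun v hv => h v (Finset.mem_filter.1 hv).1
  unfold vprod at h1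
  rw [Finset.prod_comm] at h1
  refine Eq.trans ?_ h1
  refine Finset.prod_congr rfl fun i _ => ?_
  have h2 : ∀ v, (if G.At v i then z i else 1) =
      (if (G.e i).src = v then z i else 1) * (if (G.e i).tgt = v then z i else 1) := by
    intro v
    have := (G.e i).src_ne_tgt
    unfold At
    by_cases h1 : (G.e i).src = v
    · have : (G.e i).tgt ≠ v := fun h => this (h1.trans h.symm)
      simp [h1, this]
    · simp [h1]
  simp_rw [h2]
  rw [Finset.prod_mul_distrib, Finset.prod_ite_eq, Finset.prod_ite_eq]
  simp [G.src_mem, G.tgt_mem]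

open Classical in
lemma IsCycle.three {G : NG M ι} {z : ι → ℤˣ} (h : G.IsCycle z)
    (simple : ∀ i j, G.Spc lab i → G.Spc lab j → s(lab (G.e i).src, lab (G.e i).tgt) =
      s(lab (G.e j).src, lab (G.e j).tgt) → i = j)
    {i0 : ι} (hi0 : G.Spc lab i0) (hz : z i0 = -1) :
    3 ≤ (Finset.univ.filter fun i => G.Spc lab i ∧ z i = -1).card := by
  have key : ∀ d, (lab (G.e i0).src = d ∧ lab (G.e i0).tgt ≠ d) ∨ (lab (G.e i0).src ≠ d ∧ lab (G.e i0).tgt = d) →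
      ∃ i, i ≠ i0 ∧ z i = -1 ∧
      ((lab (G.e i).src = d ∧ lab (G.e i).tgt ≠ d) ∨ (lab (G.e i).src ≠ d ∧ lab (G.e i).tgt = d)) := by
    intro d hd
    by_contra hcon
    push Not at hcon
    have h1 := h.lab_prod lab d
    rw [Finset.prod_eq_single i0] at h1
    · rcases hd with ⟨h2, h3⟩ | ⟨h2, h3⟩ <;> simp [h2, h3, hz] at h1
    · intro i _ hi
      rcases Int.units_eq_one_or (z i) with h2 | h2
      · simp [h2]
      · have := hcon i hi h2
        by_cases h3 : lab (G.e i).src = d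
        · simp [h3, this.1 h3]
        · simp [h3, this.2 h3]
    · simp
  have hs : lab (G.e i0).src ≠ lab (G.e i0).tgt := hi0
  obtain ⟨i1, h1, hz1, hd1⟩ := key _ (Or.inl ⟨rfl, hs.symm⟩)
  obtain ⟨i2, h2, hz2, hd2⟩ := key _ (Or.inr ⟨hs, rfl⟩)
  have hs1 : G.Spc lab i1 := by
    rcases hd1 with h | h
    · exact fun h' => h.2 (h'.symm.trans h.1)
    · exact fun h' => h.1 (h'.trans h.2)
  have hs2 : G.Spc lab i2 := by
    rcases hd2 with h | h
    · exact fun h' => h.2 (h'.symm.trans h.1)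
    · exact fun h' => h.1 (h'.trans h.2)
  have h12 : i1 ≠ i2 := by
    rintro rfl
    apply h1
    apply simple _ _ hs1 hi0
    rcases hd1 with h | h <;> rcases hd2 with h' | h'
    · exact absurd (h.1.symm.trans h'.1) hs
    · rw [h.1, h'.2]
    · rw [h.2, h'.1]; exact Sym2.eq_swap
    · exact absurd (h.2.symm.trans h'.2) hs
  have : ({i0, i1, i2} : Finset ι) ⊆ Finset.univ.filter fun i => G.Spc lab i ∧ z i = -1 := by
    intro i hi
    simp only [Finset.mem_insert, Finset.mem_singleton] at hi
    rw [Finset.mem_filter]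
    rcases hi with rfl | rfl | rfl
    · exact ⟨Finset.mem_univ _, hi0, hz⟩
    · exact ⟨Finset.mem_univ _, hs1, hz1⟩
    · exact ⟨Finset.mem_univ _, hs2, hz2⟩
  calc 3 = ({i0, i1, i2} : Finset ι).card := by
        rw [Finset.card_insert_of_notMem, Finset.card_insert_of_notMem, Finset.card_singleton]
        · simpa using h12
        · simp [h1.symm, h2.symm]
    _ ≤ _ := Finset.card_le_card this

variable [Surf M]

theorem spec_bound {w N : ℕ} (hw : Nat.card {z // G.LocCol z} ≤ 2^w * Nat.card {z // G.GlobCol z})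
    (simple : ∀ i j, G.Spc lab i → G.Spc lab j → s(lab (G.e i).src, lab (G.e i).tgt) =
      s(lab (G.e j).src, lab (G.e j).tgt) → i = j)
    (I3 : ∀ z, G.IsCycle z → (∀ i, G.Spc lab i → z i = 1) → z = 1)
    (count : Nat.card ι + N = G.V.card + Nat.card {i // G.Spc lab i}) :
    Nat.card {i // G.Spc lab i} ≤ 3 * N + 3 * w := by
  classical
  obtain ⟨L, R, hLR, hcyc⟩ := G.exists_faces
  set S : Finset ι := Finset.univ.filter fun i => G.Spc lab i with hS
  have hScard : Nat.card {i // G.Spc lab i} = S.card := by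
    rw [Nat.card_eq_fintype_card, Fintype.card_subtype]
  set S' := S.filter fun i => L i ≠ R i with hS'
  set F : Finset (Set M) := S'.image L ∪ S'.image R with hF
  set zf : Set M → ι → ℤˣ := fun f i => (if L i = f then -1 else 1) * (if R i = f then -1 else 1) with hzf
  have hFS : F.card * 3 ≤ S.card * 2 := by
    refine Finset.card_mul_le_card_mul (fun f i => zf f i = -1) ?_ ?_
    · intro f hf
      have : ∃ i0, G.Spc lab i0 ∧ zf f i0 = -1 := by
        rw [hF, Finset.mem_union, Finset.mem_image, Finset.mem_image] at hf
        rcases hf with ⟨i, hi, rfl⟩ | ⟨i, hi, rfl⟩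
        · rw [hS', Finset.mem_filter, hS, Finset.mem_filter] at hi
          exact ⟨i, hi.1.2, by simp [hzf, hi.2.symm]⟩
        · rw [hS', Finset.mem_filter, hS, Finset.mem_filter] at hi
          exact ⟨i, hi.1.2, by simp [hzf, hi.2]⟩
      obtain ⟨i0, h1, h2⟩ := this
      have h3 := (hcyc f).three lab simple h1 h2
      refine h3.trans (Finset.card_le_card ?_)
      intro i hi
      rw [Finset.mem_filter] at hi
      rw [Finset.mem_bipartiteAbove, hS, Finset.mem_filter]
      exact ⟨⟨hi.1, hi.2.1⟩, hi.2.2⟩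
    · intro i hi
      have : Finset.bipartiteBelow (fun f i => zf f i = -1) F i ⊆ {L i, R i} := by
        intro f hf
        rw [Finset.mem_bipartiteBelow] at hf
        by_contra hcon
        rw [Finset.mem_insert, Finset.mem_singleton, not_or] at hcon
        have := hf.2
        simp [hzf, Ne.symm hcon.1, Ne.symm hcon.2] at this
      exact (Finset.card_le_card this).trans Finset.card_le_two
  have hGlob : Nat.card {z // G.GlobCol z} ≤ 2 ^ F.card := by
    choose h hh using fun z : {z // G.GlobCol z} => hLR z.1 z.2
    have hcard : Nat.card (F → ℤˣ) = 2 ^ F.card := by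
      rw [Nat.card_eq_fintype_card, Fintype.card_fun, Fintype.card_coe]; rfl
    rw [← hcard]
    refine Nat.card_le_card_of_injective (fun z (f : F) => h z f.1) ?_
    intro z z' hzz
    have hzz' : ∀ f ∈ F, h z f = h z' f := fun f hf => congrFun hzz ⟨f, hf⟩
    have h1 : z.1 * z'.1 = 1 := by
      apply I3 _ ((GlobCol.isCycle G z.2).mul (GlobCol.isCycle G z'.2))
      intro i hi
      rw [Pi.mul_apply, hh z i, hh z' i]
      by_cases hlr : L i = R i
      · rw [hlr, Int.units_mul_self, Int.units_mul_self, one_mul]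
      · have hiS : i ∈ S' := by
          rw [hS', Finset.mem_filter, hS, Finset.mem_filter]
          exact ⟨⟨Finset.mem_univ _, hi⟩, hlr⟩
        rw [hzz' (L i) (Finset.mem_union_left _ (Finset.mem_image_of_mem _ hiS)),
          hzz' (R i) (Finset.mem_union_right _ (Finset.mem_image_of_mem _ hiS)), Int.units_mul_self]
    apply Subtype.ext
    have : z'.1 * z'.1 = 1 := by funext i; exact Int.units_mul_self _
    calc z.1 = z.1 * (z'.1 * z'.1) := by rw [this, mul_one]
      _ = z'.1 := by rw [← mul_assoc, h1, one_mul]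
  have hloc : Nat.card {z // G.IsCycle z} ≤ Nat.card {z // G.LocCol z} :=
    Nat.card_le_card_of_injective (fun z => ⟨z.1, IsCycle.locCol G z.2⟩) (fun a b h => by
      apply Subtype.ext; simpa using h)
  have h5 : 2 ^ Fintype.card ι ≤ 2 ^ (G.V.card + w + F.card) := by
    refine G.card_cycle.trans ?_
    rw [pow_add, pow_add, mul_assoc]
    refine Nat.mul_le_mul_left _ (hloc.trans (hw.trans ?_))
    exact Nat.mul_le_mul_left _ hGlob
  have h6 := (Nat.pow_le_pow_iff_right (by norm_num : 1 < 2)).1 h5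
  rw [hScard] at count ⊢
  rw [Nat.card_eq_fintype_card] at count
  omega

end NG
end SurfUB


set_option linter.unusedSectionVars false
set_option linter.unusedVariables false

namespace SurfUB
open Set Filter Topology Metric

/-- affine reparametrisation sending `a` to `0` and `b` to `1` -/
noncomputable def affHomeo (a b : ℂ) (h : a ≠ b) : ℂ ≃ₜ ℂ where
  toFun w := (w - a) / (b - a)
  invFun u := a + u * (b - a)
  left_inv w := by
    have : b - a ≠ 0 := sub_ne_zero.2 h.symm
    field_simp; ring
  right_inv u := by
    have : b - a ≠ 0 := sub_ne_zero.2 h.symm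
    field_simp; ring
  continuous_toFun := by fun_prop
  continuous_invFun := by fun_prop

namespace SEdge
variable {M : Type*} [TopologicalSpace M]

noncomputable def mk' (ψ : OpenPartialHomeomorph M ℂ) (a b : ℂ) (h : a ≠ b)
    (hs : ∀ t : ℝ, t ∈ Icc (0:ℝ) 1 → a + t * (b - a) ∈ ψ.target) : SEdge M where
  φ := ψ.transHomeomorph (affHomeo a b h)
  mem_target t ht := hs t ht

lemma mk'_pt (ψ : OpenPartialHomeomorph M ℂ) (a b : ℂ) (h : a ≠ b)
    (hs : ∀ t : ℝ, t ∈ Icc (0:ℝ) 1 → a + t * (b - a) ∈ ψ.target) (t : ℝ) :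
    (mk' ψ a b h hs).pt t = ψ.symm (a + t * (b - a)) := rfl

variable (e : SEdge M)
lemma src_not_inner : e.src ∉ e.inner := by
  rintro ⟨t, ht, h⟩
  have := e.pt_inj (Ioo_subset_Icc_self ht) (by simp) h
  rw [this] at ht; exact lt_irrefl _ ht.1

lemma tgt_not_inner : e.tgt ∉ e.inner := by
  rintro ⟨t, ht, h⟩
  have := e.pt_inj (Ioo_subset_Icc_self ht) (by simp) h
  rw [this] at ht; exact lt_irrefl _ ht.2

/-- initial part of an edge -/
noncomputable def fst (h : ℝ) (hh : h ∈ Ioo (0:ℝ) 1) : SEdge M :=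
  mk' e.φ 0 h (by exact_mod_cast hh.1.ne) (fun t ht => by
    have := e.mem_target (t * h) ⟨mul_nonneg ht.1 hh.1.le, mul_le_one₀ ht.2 hh.1.le hh.2.le⟩
    push_cast at this
    simpa using this)

/-- final part of an edge -/
noncomputable def snd (h : ℝ) (hh : h ∈ Ioo (0:ℝ) 1) : SEdge M :=
  mk' e.φ h 1 (by exact_mod_cast hh.2.ne) (fun t ht => by
    have := e.mem_target (h + t * (1 - h)) ⟨by nlinarith [ht.1, hh.1, hh.2], by nlinarith [ht.2, hh.1, hh.2]⟩
    push_cast at this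
    exact this)

lemma fst_pt (h : ℝ) (hh : h ∈ Ioo (0:ℝ) 1) (t : ℝ) : (e.fst h hh).pt t = e.pt (t * h) := by
  rw [fst, mk'_pt, pt]; push_cast; simp

lemma snd_pt (h : ℝ) (hh : h ∈ Ioo (0:ℝ) 1) (t : ℝ) : (e.snd h hh).pt t = e.pt (h + t * (1 - h)) := by
  rw [snd, mk'_pt, pt]; push_cast; simp

lemma fst_src (h : ℝ) (hh : h ∈ Ioo (0:ℝ) 1) : (e.fst h hh).src = e.src := by
  rw [src, fst_pt, zero_mul, src]
lemma fst_tgt (h : ℝ) (hh : h ∈ Ioo (0:ℝ) 1) : (e.fst h hh).tgt = e.pt h := by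
  rw [tgt, fst_pt, one_mul]
lemma snd_src (h : ℝ) (hh : h ∈ Ioo (0:ℝ) 1) : (e.snd h hh).src = e.pt h := by
  rw [src, snd_pt, zero_mul, add_zero]
lemma snd_tgt (h : ℝ) (hh : h ∈ Ioo (0:ℝ) 1) : (e.snd h hh).tgt = e.tgt := by
  rw [tgt, snd_pt, tgt]; congr 1; ring

lemma fst_inner (h : ℝ) (hh : h ∈ Ioo (0:ℝ) 1) : (e.fst h hh).inner = e.pt '' Ioo 0 h := by
  ext x
  constructor
  · rintro ⟨t, ht, rfl⟩
    exact ⟨t * h, ⟨mul_pos ht.1 hh.1, by nlinarith [ht.2, hh.1]⟩, (e.fst_pt h hh t).symm⟩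
  · rintro ⟨t, ht, rfl⟩
    refine ⟨t / h, ⟨div_pos ht.1 hh.1, (div_lt_one hh.1).2 ht.2⟩, ?_⟩
    rw [fst_pt, div_mul_cancel₀ _ hh.1.ne']

lemma snd_inner (h : ℝ) (hh : h ∈ Ioo (0:ℝ) 1) : (e.snd h hh).inner = e.pt '' Ioo h 1 := by
  have h1 : 0 < 1 - h := by linarith [hh.2]
  ext x
  constructor
  · rintro ⟨t, ht, rfl⟩
    exact ⟨h + t * (1 - h), ⟨by nlinarith [ht.1], by nlinarith [ht.2]⟩, (e.snd_pt h hh t).symm⟩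
  · rintro ⟨t, ht, rfl⟩
    refine ⟨(t - h) / (1 - h), ⟨div_pos (by linarith [ht.1]) h1, (div_lt_one h1).2 (by linarith [ht.2])⟩, ?_⟩
    rw [snd_pt, div_mul_cancel₀ _ h1.ne']; congr 1; ring

end SEdge

namespace NG
variable {M : Type*} [TopologicalSpace M] {ι : Type} (G : NG M ι)

open Classical in
/-- add an edge -/
noncomputable def addEdge (e : SEdge M) (ha : e.src ∈ G.V) (hin : ∀ x ∈ e.inner, x ∉ G.car)
    (hp : e.tgt ∈ G.car → e.tgt ∈ G.V) : NG M (Option ι) where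
  e o := o.elim e G.e
  V := insert e.tgt G.V
  src_mem o := by
    cases o with
    | none => exact Finset.mem_insert_of_mem ha
    | some i => exact Finset.mem_insert_of_mem (G.src_mem i)
  tgt_mem o := by
    cases o with
    | none => exact Finset.mem_insert_self _ _
    | some i => exact Finset.mem_insert_of_mem (G.tgt_mem i)
  inner_V o x hx := by
    rw [Finset.mem_insert, not_or]
    cases o with
    | none =>
      exact ⟨fun h => e.tgt_not_inner (h ▸ hx), fun h => hin x hx (G.V_sub h)⟩
    | some i =>
      exact ⟨fun h => G.inner_V i x hx (h ▸ hp (h ▸ G.inner_sub hx)), G.inner_V i x hx⟩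
  inner_inner o o' x hx hx' := by
    cases o with
    | none =>
      cases o' with
      | none => rfl
      | some j => exact absurd (G.inner_sub hx') (hin x hx)
    | some i =>
      cases o' with
      | none => exact absurd (G.inner_sub hx) (hin x hx')
      | some j => rw [G.inner_inner i j x hx hx']

section
variable {G} {e : SEdge M} {ha : e.src ∈ G.V} {hin : ∀ x ∈ e.inner, x ∉ G.car}
    {hp : e.tgt ∈ G.car → e.tgt ∈ G.V}

lemma addEdge_car : (G.addEdge e ha hin hp).car = G.car ∪ insert e.tgt e.inner := by
  classical
  ext x
  show (x ∈ insert e.tgt G.V ∨ _) ↔ _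
  rw [Finset.mem_insert]
  constructor
  · rintro ((h | h) | ⟨_ | i, h⟩)
    · exact Or.inr (Or.inl h)
    · exact Or.inl (G.V_sub h)
    · exact Or.inr (Or.inr h)
    · exact Or.inl (G.inner_sub h)
  · rintro ((h | ⟨i, h⟩) | (h | h))
    · exact Or.inl (Or.inr h)
    · exact Or.inr ⟨some i, h⟩
    · exact Or.inl (Or.inl h)
    · exact Or.inr ⟨none, h⟩

lemma addEdge_cycle [Fintype ι] {z : Option ι → ℤˣ} (hz : (G.addEdge e ha hin hp).IsCycle z)
    (h1 : z none = 1) : G.IsCycle (fun i => z (some i)) := by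
  classical
  intro v hv
  have := hz v (Finset.mem_insert_of_mem hv)
  unfold vprod at this ⊢
  rw [Fintype.prod_option] at this
  rw [h1] at this
  simp only [ite_self, one_mul] at this
  exact this

lemma addEdge_none [Fintype ι] {z : Option ι → ℤˣ} (hz : (G.addEdge e ha hin hp).IsCycle z)
    (h1 : e.tgt ∉ G.car) : z none = 1 := by
  classical
  have := hz e.tgt (Finset.mem_insert_self _ _)
  unfold vprod at this
  rw [Fintype.prod_option] at this
  have hat : (G.addEdge e ha hin hp).At e.tgt none := Or.inr rfl
  rw [if_pos hat, Finset.prod_eq_one, mul_one] at this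
  · exact this
  · intro i _
    rw [if_neg]
    rintro (h | h)
    · exact h1 (h ▸ G.V_sub (G.src_mem i))
    · exact h1 (h ▸ G.V_sub (G.tgt_mem i))
end

open Classical in
/-- subdivide an edge -/
noncomputable def subdiv (j : ι) (h : ℝ) (hh : h ∈ Ioo (0:ℝ) 1) : NG M (Option ι) where
  e o := o.elim ((G.e j).snd h hh) fun i => if i = j then (G.e j).fst h hh else G.e i
  V := insert ((G.e j).pt h) G.V
  src_mem o := by
    cases o with
    | none =>
      show ((G.e j).snd h hh).src ∈ _
      rw [SEdge.snd_src]; exact Finset.mem_insert_self _ _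
    | some i =>
      show (if i = j then (G.e j).fst h hh else G.e i).src ∈ _
      split_ifs
      · rw [SEdge.fst_src]; exact Finset.mem_insert_of_mem (G.src_mem j)
      · exact Finset.mem_insert_of_mem (G.src_mem i)
  tgt_mem o := by
    cases o with
    | none =>
      show ((G.e j).snd h hh).tgt ∈ _
      rw [SEdge.snd_tgt]; exact Finset.mem_insert_of_mem (G.tgt_mem j)
    | some i =>
      show (if i = j then (G.e j).fst h hh else G.e i).tgt ∈ _
      split_ifs
      · rw [SEdge.fst_tgt]; exact Finset.mem_insert_self _ _
      · exact Finset.mem_insert_of_mem (G.tgt_mem i)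
  inner_V o x hx := by
    rw [Finset.mem_insert, not_or]
    cases o with
    | none =>
      have hx' : x ∈ ((G.e j).snd h hh).inner := hx
      rw [SEdge.snd_inner] at hx'
      obtain ⟨t, ht, rfl⟩ := hx'
      refine ⟨fun h' => ?_, G.inner_V j _ ⟨t, ⟨hh.1.trans ht.1, ht.2⟩, rfl⟩⟩
      have := (G.e j).pt_inj ⟨(hh.1.trans ht.1).le, ht.2.le⟩ (Ioo_subset_Icc_self hh) h'
      exact ht.1.ne' this
    | some i =>
      have hx' : x ∈ (if i = j then (G.e j).fst h hh else G.e i).inner := hx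
      split_ifs at hx' with hij
      · rw [SEdge.fst_inner] at hx'
        obtain ⟨t, ht, rfl⟩ := hx'
        refine ⟨fun h' => ?_, G.inner_V j _ ⟨t, ⟨ht.1, ht.2.trans hh.2⟩, rfl⟩⟩
        have := (G.e j).pt_inj ⟨ht.1.le, (ht.2.trans hh.2).le⟩ (Ioo_subset_Icc_self hh) h'
        exact ht.2.ne this
      · refine ⟨?_, G.inner_V i x hx'⟩
        rintro rfl
        exact hij (G.inner_inner i j _ hx' ⟨h, hh, rfl⟩)
  inner_inner := by
    have key1 : ∀ x, x ∈ ((G.e j).snd h hh).inner → x ∈ (G.e j).inner := by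
      intro x hx
      rw [SEdge.snd_inner] at hx
      obtain ⟨t, ht, rfl⟩ := hx
      exact ⟨t, ⟨hh.1.trans ht.1, ht.2⟩, rfl⟩
    have key2 : ∀ i x, x ∈ (if i = j then (G.e j).fst h hh else G.e i).inner → x ∈ (G.e i).inner := by
      intro i x hx
      split_ifs at hx with hij
      · rw [SEdge.fst_inner] at hx
        obtain ⟨t, ht, rfl⟩ := hx
        rw [hij]
        exact ⟨t, ⟨ht.1, ht.2.trans hh.2⟩, rfl⟩
      · exact hx
    have key3 : ∀ i x, x ∈ ((G.e j).snd h hh).inner →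
        x ∈ (if i = j then (G.e j).fst h hh else G.e i).inner → False := by
      intro i x hx hx'
      have hij : i = j := G.inner_inner _ _ x (key2 i x hx') (key1 x hx)
      rw [if_pos hij, SEdge.fst_inner] at hx'
      rw [SEdge.snd_inner] at hx
      obtain ⟨t, ht, rfl⟩ := hx
      obtain ⟨u, hu, hut⟩ := hx'
      have := (G.e j).pt_inj ⟨hu.1.le, (hu.2.trans hh.2).le⟩ ⟨(hh.1.trans ht.1).le, ht.2.le⟩ hut
      linarith [hu.2, ht.1]
    intro o o' x hx hx'
    cases o with
    | none =>
      cases o' with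
      | none => rfl
      | some i' => exact (key3 i' x hx hx').elim
    | some i =>
      cases o' with
      | none => exact (key3 i x hx' hx).elim
      | some i' => rw [G.inner_inner i i' x (key2 i x hx) (key2 i' x hx')]

section
variable {G} {j : ι} {h : ℝ} {hh : h ∈ Ioo (0:ℝ) 1}

lemma subdiv_none : (G.subdiv j h hh).e none = (G.e j).snd h hh := rfl
lemma subdiv_some_self : (G.subdiv j h hh).e (some j) = (G.e j).fst h hh := if_pos rfl
lemma subdiv_some {i : ι} (hi : i ≠ j) : (G.subdiv j h hh).e (some i) = G.e i := if_neg hi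

lemma subdiv_inner_some (i : ι) : ((G.subdiv j h hh).e (some i)).inner ⊆ (G.e i).inner := by
  by_cases hij : i = j
  · subst hij
    rw [subdiv_some_self, SEdge.fst_inner]
    rintro _ ⟨t, ht, rfl⟩
    exact ⟨t, ⟨ht.1, ht.2.trans hh.2⟩, rfl⟩
  · rw [subdiv_some hij]

lemma subdiv_inner_none : ((G.subdiv j h hh).e none).inner ⊆ (G.e j).inner := by
  rw [subdiv_none, SEdge.snd_inner]
  rintro _ ⟨t, ht, rfl⟩
  exact ⟨t, ⟨hh.1.trans ht.1, ht.2⟩, rfl⟩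

lemma subdiv_src_some (i : ι) : ((G.subdiv j h hh).e (some i)).src = (G.e i).src := by
  by_cases hij : i = j
  · subst hij
    rw [subdiv_some_self, SEdge.fst_src]
  · rw [subdiv_some hij]

lemma subdiv_car : (G.subdiv j h hh).car = G.car := by
  classical
  ext x
  constructor
  · rintro (h' | ⟨_ | i, h'⟩)
    · rcases Finset.mem_insert.1 h' with rfl | h'
      · exact Or.inr ⟨j, h, hh, rfl⟩
      · exact Or.inl h'
    · exact Or.inr ⟨j, subdiv_inner_none h'⟩
    · exact Or.inr ⟨i, subdiv_inner_some i h'⟩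
  · rintro (h' | ⟨i, h'⟩)
    · exact Or.inl (Finset.mem_insert_of_mem h')
    · by_cases hij : i = j
      · subst hij
        obtain ⟨t, ht, rfl⟩ := h'
        rcases lt_trichotomy t h with h1 | h1 | h1
        · right; refine ⟨some i, ?_⟩
          rw [subdiv_some_self, SEdge.fst_inner]
          exact ⟨t, ⟨ht.1, h1⟩, rfl⟩
        · left; rw [h1]; exact Finset.mem_insert_self _ _
        · right; refine ⟨none, ?_⟩
          rw [subdiv_none, SEdge.snd_inner]
          exact ⟨t, ⟨h1, ht.2⟩, rfl⟩
      · right; refine ⟨some i, ?_⟩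
        rw [subdiv_some hij]; exact h'

lemma pt_not_V : (G.e j).pt h ∈ (G.e j).inner → (G.e j).pt h ∉ G.V := G.inner_V j _

variable [Fintype ι]

lemma subdiv_eq {z : Option ι → ℤˣ} (hz : (G.subdiv j h hh).IsCycle z) : z none = z (some j) := by
  classical
  have hV : (G.e j).pt h ∉ G.V := G.inner_V j _ ⟨h, hh, rfl⟩
  have := hz ((G.e j).pt h) (Finset.mem_insert_self _ _)
  unfold vprod at this
  have h1 : (G.subdiv j h hh).At ((G.e j).pt h) none := Or.inl (by rw [subdiv_none, SEdge.snd_src])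
  have h2 : (G.subdiv j h hh).At ((G.e j).pt h) (some j) :=
    Or.inr (by rw [subdiv_some_self, SEdge.fst_tgt])
  rw [Fintype.prod_option, if_pos h1, Finset.prod_eq_single j, if_pos h2] at this
  · rw [mul_eq_one_iff_eq_inv] at this
    rw [this, Int.units_inv_eq_self]
  · intro i _ hi
    rw [if_neg]
    unfold At
    rw [subdiv_some hi]
    rintro (h' | h')
    · exact hV (h' ▸ G.src_mem i)
    · exact hV (h' ▸ G.tgt_mem i)
  · simp

lemma subdiv_cycle {z : Option ι → ℤˣ} (hz : (G.subdiv j h hh).IsCycle z) :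
    G.IsCycle (fun i => z (some i)) := by
  classical
  have hV : (G.e j).pt h ∉ G.V := G.inner_V j _ ⟨h, hh, rfl⟩
  have heq := subdiv_eq hz
  intro v hv
  have := hz v (Finset.mem_insert_of_mem hv)
  have hne : (G.e j).pt h ≠ v := fun h' => hV (h' ▸ hv)
  unfold vprod at this ⊢
  rw [Fintype.prod_option, ← Finset.mul_prod_erase _ _ (Finset.mem_univ j), ← mul_assoc] at this
  rw [← Finset.mul_prod_erase _ _ (Finset.mem_univ j)]
  refine Eq.trans ?_ this
  congr 1
  · unfold At
    rw [subdiv_none, subdiv_some_self, SEdge.fst_src, SEdge.fst_tgt, SEdge.snd_src, SEdge.snd_tgt, heq]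
    have hst := (G.e j).src_ne_tgt
    by_cases h1 : (G.e j).src = v
    · have h2 : (G.e j).tgt ≠ v := fun h' => hst (h1.trans h'.symm)
      simp [h1, h2, hne]
    · by_cases h2 : (G.e j).tgt = v <;> simp [h1, h2, hne]
  · refine Finset.prod_congr rfl fun i hi => ?_
    unfold At
    rw [subdiv_some (Finset.ne_of_mem_erase hi)]
end
end NG
end SurfUB


set_option linter.unusedSectionVars false
set_option linter.unusedVariables false

namespace SurfUB
open Set Filter Topology Metric

structure Sys (M : Type*) [TopologicalSpace M] (𝒟 𝒞 : Type*) where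
  D : 𝒟 → Set M
  C : 𝒞 → Set M
  inc : 𝒟 → 𝒞 → Prop
  D_open : ∀ d, IsOpen (D d)
  D_conn : ∀ d, IsPreconnected (D d)
  D_ne : ∀ d, (D d).Nonempty
  C_open : ∀ c, IsOpen (C c)
  C_conn : ∀ c, IsPreconnected (C c)
  inc_sub : ∀ d c, inc d c → D d ⊆ C c
  inc_of : ∀ d c x, x ∈ D d → x ∈ C c → inc d c
  D_disj : ∀ d d' x, x ∈ closure (D d) → x ∈ closure (D d') → d = d'
  C_inter : ∀ c c' x, c ≠ c' → x ∈ C c → x ∈ C c' → ∃ d, x ∈ D d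

lemma Sys.D_inj {M : Type*} [TopologicalSpace M] {𝒟 𝒞 : Type*} (S : Sys M 𝒟 𝒞) {d d' : 𝒟} {x : M}
    (h : x ∈ S.D d) (h' : x ∈ S.D d') : d = d' := S.D_disj d d' x (subset_closure h) (subset_closure h')

section
variable {M : Type*} [TopologicalSpace M] {𝒟 𝒞 : Type*}

/-- labelled graphs -/
structure LG (S : Sys M 𝒟 𝒞) where
  ι : Type
  fin : Fintype ι
  G : NG M ι
  lab : M → 𝒟
  lab_inner : ∀ i, ∀ x ∈ (G.e i).inner, lab x = lab (G.e i).src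
  labD : ∀ x ∈ G.car, ∀ d, x ∈ S.D d → lab x = d
  labC : ∀ x ∈ G.car, ∀ c, x ∈ S.C c → S.inc (lab x) c
  base : ∀ d, ∃ x ∈ G.car, x ∈ S.D d
  simple : ∀ i j, G.Spc lab i → G.Spc lab j → s(lab (G.e i).src, lab (G.e i).tgt) =
      s(lab (G.e j).src, lab (G.e j).tgt) → i = j
  I3 : ∀ z, G.IsCycle z → (∀ i, G.Spc lab i → z i = 1) → z = 1
  count : Nat.card ι + Nat.card 𝒟 = G.V.card + Nat.card {i // G.Spc lab i}

namespace LG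
variable {S : Sys M 𝒟 𝒞}

attribute [instance] LG.fin

def spec (L : LG S) : Set (Sym2 𝒟) :=
  {p | ∃ i, L.G.Spc L.lab i ∧ p = s(L.lab (L.G.e i).src, L.lab (L.G.e i).tgt)}

def car (L : LG S) : Set M := L.G.car

structure Ext (L L' : LG S) : Prop where
  sub : L.car ⊆ L'.car
  lab : ∀ x ∈ L.car, L'.lab x = L.lab x
  spec : L'.spec = L.spec

lemma Ext.refl (L : LG S) : Ext L L := ⟨Subset.rfl, fun _ _ => rfl, rfl⟩
lemma Ext.trans {L L' L'' : LG S} (h : Ext L L') (h' : Ext L' L'') : Ext L L'' :=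
  ⟨h.sub.trans h'.sub, fun x hx => (h'.lab x (h.sub hx)).trans (h.lab x hx), h'.spec.trans h.spec⟩

/-- bijection between special edges under subdivision -/
lemma toVertex (L : LG S) {x : M} (hx : x ∈ L.car) : ∃ L' : LG S, Ext L L' ∧ L'.car = L.car ∧
    L'.lab = L.lab ∧ x ∈ L'.G.V ∧ ∀ y ∈ L.G.V, y ∈ L'.G.V := by
  classical
  rcases hx with hx | ⟨j, h, hh, rfl⟩
  · exact ⟨L, Ext.refl L, rfl, rfl, hx, fun _ h => h⟩
  set G' := L.G.subdiv j h hh with hG'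
  have hlab : L.lab ((L.G.e j).pt h) = L.lab (L.G.e j).src := L.lab_inner j _ ⟨h, hh, rfl⟩
  have s1 : ¬ G'.Spc L.lab (some j) := by
    unfold NG.Spc
    rw [hG', NG.subdiv_some_self, SEdge.fst_src, SEdge.fst_tgt, hlab]; simp
  have p2 : s(L.lab (G'.e none).src, L.lab (G'.e none).tgt) = s(L.lab (L.G.e j).src, L.lab (L.G.e j).tgt) := by
    rw [hG', NG.subdiv_none, SEdge.snd_src, SEdge.snd_tgt, hlab]
  have s2 : G'.Spc L.lab none ↔ L.G.Spc L.lab j := by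
    unfold NG.Spc
    rw [hG', NG.subdiv_none, SEdge.snd_src, SEdge.snd_tgt, hlab]
  have p3 : ∀ i, i ≠ j → s(L.lab (G'.e (some i)).src, L.lab (G'.e (some i)).tgt) = s(L.lab (L.G.e i).src, L.lab (L.G.e i).tgt) := by
    intro i hi
    rw [hG', NG.subdiv_some hi]
  have s3 : ∀ i, i ≠ j → (G'.Spc L.lab (some i) ↔ L.G.Spc L.lab i) := by
    intro i hi
    unfold NG.Spc
    rw [hG', NG.subdiv_some hi]
  -- old index
  have old : ∀ o, G'.Spc L.lab o → ∃ i, L.G.Spc L.lab i ∧ o = (if i = j then none else some i) ∧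
      s(L.lab (G'.e o).src, L.lab (G'.e o).tgt) = s(L.lab (L.G.e i).src, L.lab (L.G.e i).tgt) := by
    intro o ho
    cases o with
    | none => exact ⟨j, s2.1 ho, by simp, p2⟩
    | some i =>
      have hi : i ≠ j := by rintro rfl; exact s1 ho
      exact ⟨i, (s3 i hi).1 ho, by simp [hi], p3 i hi⟩
  have new : ∀ i, L.G.Spc L.lab i → G'.Spc L.lab (if i = j then none else some i) := by
    intro i hi
    split_ifs with hij
    · rw [s2, ← hij]; exact hi
    · rw [s3 i hij]; exact hi
  have newp : ∀ i, s(L.lab (G'.e (if i = j then none else some i)).src, L.lab (G'.e (if i = j then none else some i)).tgt) =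
      s(L.lab (L.G.e i).src, L.lab (L.G.e i).tgt) := by
    intro i
    by_cases hij : i = j
    · rw [if_pos hij, p2, hij]
    · rw [if_neg hij, p3 i hij]
  let L' : LG S :=
    { ι := Option L.ι
      fin := inferInstance
      G := G'
      lab := L.lab
      lab_inner := by
        intro o x hx
        cases o with
        | none =>
          rw [L.lab_inner j x (NG.subdiv_inner_none hx), hG', NG.subdiv_none, SEdge.snd_src, hlab]
        | some i =>
          rw [L.lab_inner i x (NG.subdiv_inner_some i hx), hG', NG.subdiv_src_some]
      labD := by rw [hG', NG.subdiv_car]; exact L.labD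
      labC := by rw [hG', NG.subdiv_car]; exact L.labC
      base := by rw [hG', NG.subdiv_car]; exact L.base
      simple := by
        intro o o' ho ho' hp
        obtain ⟨i, hi, rfl, hpi⟩ := old o ho
        obtain ⟨i', hi', rfl, hpi'⟩ := old o' ho'
        rw [hpi, hpi'] at hp
        rw [L.simple i i' hi hi' hp]
      I3 := by
        intro z hz hs
        have hc := NG.subdiv_cycle hz
        have he := NG.subdiv_eq hz
        have h1 : (fun i => z (some i)) = 1 := by
          apply L.I3 _ hc
          intro i hi
          by_cases hij : i = j
          · subst hij
            show z (some i) = 1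
            rw [← he]; exact hs none (s2.2 hi)
          · exact hs (some i) ((s3 i hij).2 hi)
        funext o
        cases o with
        | none => rw [he]; exact congrFun h1 j
        | some i => exact congrFun h1 i
      count := by
        have hV : (L.G.e j).pt h ∉ L.G.V := L.G.inner_V j _ ⟨h, hh, rfl⟩
        have h1 : G'.V.card = L.G.V.card + 1 := Finset.card_insert_of_notMem hV
        have h2 : Nat.card {o // G'.Spc L.lab o} = Nat.card {i // L.G.Spc L.lab i} := by
          symm
          refine Nat.card_congr (Equiv.ofBijective (fun i => ⟨if i.1 = j then none else some i.1, new i.1 i.2⟩) ⟨?_, ?_⟩)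
          · rintro ⟨i, hi⟩ ⟨i', hi'⟩ h
            have := congrArg Subtype.val h
            simp only at this
            apply Subtype.ext
            show i = i'
            split_ifs at this with h1 h2 h2
            · rw [h1, h2]
            · simpa using this
          · rintro ⟨o, ho⟩
            obtain ⟨i, hi, rfl, hpi⟩ := old o ho
            exact ⟨⟨i, hi⟩, rfl⟩
        have h3 : Nat.card (Option L.ι) = Nat.card L.ι + 1 := by
          simp
        have := L.count
        rw [h1, h2, h3]; omega }
  have hcar : L'.car = L.car := NG.subdiv_car
  refine ⟨L', ⟨hcar.ge, fun x _ => rfl, ?_⟩, hcar, rfl, Finset.mem_insert_self _ _,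
    fun y hy => Finset.mem_insert_of_mem hy⟩
  ext p
  constructor
  · rintro ⟨o, ho, rfl⟩
    obtain ⟨i, hi, rfl, hpi⟩ := old o ho
    exact ⟨i, hi, hpi⟩
  · rintro ⟨i, hi, rfl⟩
    exact ⟨_, new i hi, (newp i).symm⟩

open Classical in
noncomputable def newLab (L : LG S) (d : 𝒟) (x : M) : 𝒟 := if x ∈ L.car then L.lab x else d

lemma newLab_pos (L : LG S) {d : 𝒟} {x : M} (h : x ∈ L.car) : L.newLab d x = L.lab x := if_pos h
lemma newLab_neg (L : LG S) {d : 𝒟} {x : M} (h : x ∉ L.car) : L.newLab d x = d := if_neg h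

/-- adding an edge to a labelled graph -/
lemma add (L : LG S) (e : SEdge M) (ha : e.src ∈ L.G.V) (hin : ∀ x ∈ e.inner, x ∉ L.car)
    (hp : e.tgt ∈ L.car → e.tgt ∈ L.G.V)
    (hD : ∀ x ∈ insert e.tgt e.inner, x ∉ L.car → ∀ d, x ∈ S.D d → L.lab e.src = d)
    (hC : ∀ x ∈ insert e.tgt e.inner, x ∉ L.car → ∀ c, x ∈ S.C c → S.inc (L.lab e.src) c)
    (hor : e.tgt ∈ L.car → L.lab e.src ≠ L.lab e.tgt ∧ s(L.lab e.src, L.lab e.tgt) ∉ L.spec) :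
    ∃ L' : LG S, L'.car = L.car ∪ insert e.tgt e.inner ∧ L'.lab = L.newLab (L.lab e.src) ∧
      (e.tgt ∉ L.car → L'.spec = L.spec) ∧
      (e.tgt ∈ L.car → L'.spec = insert s(L.lab e.src, L.lab e.tgt) L.spec) := by
  classical
  set G' := L.G.addEdge e ha hin hp with hG'
  have hcar : G'.car = L.car ∪ insert e.tgt e.inner := NG.addEdge_car
  set lab' := L.newLab (L.lab e.src) with hlab'
  have hV : ∀ x ∈ L.G.V, lab' x = L.lab x := fun x hx => L.newLab_pos (L.G.V_sub hx)
  have hpair : ∀ i, s(lab' (G'.e (some i)).src, lab' (G'.e (some i)).tgt) = s(L.lab (L.G.e i).src, L.lab (L.G.e i).tgt) := by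
    intro i
    show s(lab' (L.G.e i).src, lab' (L.G.e i).tgt) = _
    rw [hV _ (L.G.src_mem i), hV _ (L.G.tgt_mem i)]
  have hspc : ∀ i, G'.Spc lab' (some i) ↔ L.G.Spc L.lab i := by
    intro i
    show (lab' (L.G.e i).src ≠ lab' (L.G.e i).tgt) ↔ _
    rw [hV _ (L.G.src_mem i), hV _ (L.G.tgt_mem i)]; rfl
  have hsrc : lab' e.src = L.lab e.src := hV _ ha
  have hnone : G'.Spc lab' none ↔ e.tgt ∈ L.car := by
    show (lab' e.src ≠ lab' e.tgt) ↔ _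
    rw [hsrc]
    constructor
    · intro h
      by_contra hc
      exact h (L.newLab_neg hc).symm
    · intro h
      rw [hlab', L.newLab_pos h]; exact (hor h).1
  have hnoneP : e.tgt ∈ L.car → s(lab' (G'.e none).src, lab' (G'.e none).tgt) = s(L.lab e.src, L.lab e.tgt) := by
    intro h
    show s(lab' e.src, lab' e.tgt) = _
    rw [hsrc, hlab', L.newLab_pos h]
  let L' : LG S :=
    { ι := Option L.ι
      fin := inferInstance
      G := G'
      lab := lab'
      lab_inner := by
        intro o x hx
        cases o with
        | none =>
          show lab' x = lab' e.src
          rw [hsrc]; exact L.newLab_neg (hin x hx)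
        | some i =>
          have hx' : x ∈ (L.G.e i).inner := hx
          show lab' x = lab' (L.G.e i).src
          rw [hV _ (L.G.src_mem i), ← L.lab_inner i x hx]
          exact L.newLab_pos (L.G.inner_sub hx')
      labD := by
        intro x hx d hd
        by_cases hxc : x ∈ L.car
        · rw [hlab', L.newLab_pos hxc]; exact L.labD x hxc d hd
        · rw [hlab', L.newLab_neg hxc]
          rw [hcar] at hx
          exact hD x (hx.resolve_left hxc) hxc d hd
      labC := by
        intro x hx c hc
        by_cases hxc : x ∈ L.car
        · rw [hlab', L.newLab_pos hxc]; exact L.labC x hxc c hc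
        · rw [hlab', L.newLab_neg hxc]
          rw [hcar] at hx
          exact hC x (hx.resolve_left hxc) hxc c hc
      base := by
        intro d
        obtain ⟨x, h1, h2⟩ := L.base d
        exact ⟨x, by rw [hcar]; exact Or.inl h1, h2⟩
      simple := by
        intro o o' ho ho' hpp
        cases o with
        | none =>
          cases o' with
          | none => rfl
          | some j =>
            exfalso
            rw [hnone] at ho
            rw [hnoneP ho, hpair j] at hpp
            exact (hor ho).2 ⟨j, (hspc j).1 ho', hpp⟩
        | some i =>
          cases o' with
          | none =>
            exfalso
            rw [hnone] at ho'
            rw [hnoneP ho', hpair i] at hpp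
            exact (hor ho').2 ⟨i, (hspc i).1 ho, hpp.symm⟩
          | some j =>
            rw [hpair, hpair] at hpp
            rw [L.simple i j ((hspc i).1 ho) ((hspc j).1 ho') hpp]
      I3 := by
        intro z hz hs
        have h1 : z none = 1 := by
          by_cases h : e.tgt ∈ L.car
          · exact hs none (hnone.2 h)
          · exact NG.addEdge_none hz h
        have h2 : (fun i => z (some i)) = 1 :=
          L.I3 _ (NG.addEdge_cycle hz h1) fun i hi => hs (some i) ((hspc i).2 hi)
        funext o
        cases o with
        | none => exact h1
        | some i => exact congrFun h2 i
      count := by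
        have h3 : Nat.card (Option L.ι) = Nat.card L.ι + 1 := by simp
        have h4 := L.count
        by_cases h : e.tgt ∈ L.car
        · have h1 : G'.V.card = L.G.V.card := by
            show (insert e.tgt L.G.V).card = _
            rw [Finset.insert_eq_of_mem (hp h)]
          have h2 : Nat.card {o // G'.Spc lab' o} = Nat.card {i // L.G.Spc L.lab i} + 1 := by
            rw [← Finite.card_option]
            symm
            refine Nat.card_congr (Equiv.ofBijective (fun o : Option {i // L.G.Spc L.lab i} => 
              (o.elim ⟨none, hnone.2 h⟩ fun i => ⟨some i.1, (hspc i.1).2 i.2⟩ : {o // G'.Spc lab' o})) ⟨?_, ?_⟩)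
            · rintro (_ | ⟨i, hi⟩) (_ | ⟨j, hj⟩) hij
              · rfl
              · simp at hij
              · simp at hij
              · simpa using hij
            · rintro ⟨_ | i, hi⟩
              · exact ⟨none, rfl⟩
              · exact ⟨some ⟨i, (hspc i).1 hi⟩, rfl⟩
          rw [h1, h2, h3]; omega
        · have h1 : G'.V.card = L.G.V.card + 1 :=
            Finset.card_insert_of_notMem fun h' => h (L.G.V_sub h')
          have h2 : Nat.card {o // G'.Spc lab' o} = Nat.card {i // L.G.Spc L.lab i} := by
            symm
            refine Nat.card_congr (Equiv.ofBijective (fun i => ⟨some i.1, (hspc i.1).2 i.2⟩) ⟨?_, ?_⟩)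
            · rintro ⟨i, hi⟩ ⟨j, hj⟩ hij
              simpa using hij
            · rintro ⟨_ | i, hi⟩
              · exact absurd (hnone.1 hi) h
              · exact ⟨⟨i, (hspc i).1 hi⟩, rfl⟩
          rw [h1, h2, h3]; omega }
  have hsub : L.spec ⊆ L'.spec := by
    rintro p ⟨i, hi, rfl⟩
    exact ⟨some i, (hspc i).2 hi, (hpair i).symm⟩
  refine ⟨L', hcar, rfl, fun h => Subset.antisymm ?_ hsub, fun h => Subset.antisymm ?_ (insert_subset ?_ hsub)⟩
  · rintro p ⟨_ | i, hi, rfl⟩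
    · exact absurd (hnone.1 hi) h
    · exact ⟨i, (hspc i).1 hi, hpair i⟩
  · rintro p ⟨_ | i, hi, rfl⟩
    · left; exact hnoneP h
    · right; exact ⟨i, (hspc i).1 hi, hpair i⟩
  · exact ⟨none, hnone.2 h, (hnoneP h).symm⟩

end LG
end
end SurfUB


set_option linter.unusedSectionVars false
set_option linter.unusedVariables false

namespace SurfUB
open Set Filter Topology Metric

section
variable {M : Type*} [TopologicalSpace M] {𝒟 𝒞 : Type*}

/-- straight segments in a chart -/
def IsSeg (γ : ℝ → M) : Prop := ∃ (ψ : OpenPartialHomeomorph M ℂ) (A B : ℂ), A ≠ B ∧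
  ∀ t : ℝ, t ∈ Icc (0:ℝ) 1 → A + t * (B - A) ∈ ψ.target ∧ γ t = ψ.symm (A + t * (B - A))

lemma IsSeg.cont {γ : ℝ → M} (h : IsSeg γ) : ContinuousOn γ (Icc 0 1) := by
  obtain ⟨ψ, A, B, hAB, h⟩ := h
  have : ContinuousOn (fun t : ℝ => ψ.symm (A + t * (B - A))) (Icc 0 1) := by
    refine ψ.continuousOn_symm.comp (by fun_prop) fun t ht => (h t ht).1
  exact this.congr fun t ht => (h t ht).2

lemma IsSeg.rev {γ : ℝ → M} (h : IsSeg γ) : IsSeg (fun t => γ (1 - t)) := by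
  obtain ⟨ψ, A, B, hAB, h⟩ := h
  refine ⟨ψ, B, A, hAB.symm, fun t ht => ?_⟩
  have := h (1 - t) ⟨by linarith [ht.2], by linarith [ht.1]⟩
  have he : B + t * (A - B) = A + ((1 - t : ℝ) : ℂ) * (B - A) := by push_cast; ring
  rw [he]; exact this

lemma IsSeg.edge {γ : ℝ → M} (h : IsSeg γ) {s t : ℝ} (hs : 0 ≤ s) (hst : s < t) (ht : t ≤ 1) :
    ∃ e : SEdge M, e.src = γ s ∧ e.tgt = γ t ∧ ∀ x ∈ e.inner, ∃ u, s < u ∧ u < t ∧ x = γ u := by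
  obtain ⟨ψ, A, B, hAB, h⟩ := h
  have hne : A + s * (B - A) ≠ A + t * (B - A) := by
    intro h'
    have h1 : ((t - s : ℝ) : ℂ) * (B - A) = 0 := by
      push_cast; linear_combination -h'
    rcases mul_eq_zero.1 h1 with h2 | h2
    · have : t - s = 0 := by exact_mod_cast h2
      linarith
    · exact hAB (sub_eq_zero.1 h2).symm
  have heq : ∀ u : ℝ, (A + s * (B - A)) + u * ((A + t * (B - A)) - (A + s * (B - A))) =
      A + ((s + u * (t - s) : ℝ) : ℂ) * (B - A) := by intro u; push_cast; ring
  have hI : ∀ u ∈ Icc (0:ℝ) 1, s + u * (t - s) ∈ Icc (0:ℝ) 1 := by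
    intro u hu
    constructor
    · nlinarith [hu.1]
    · nlinarith [hu.2]
  have hpt : ∀ (hh : _) (u : ℝ), u ∈ Icc (0:ℝ) 1 → (SEdge.mk' ψ _ _ hne hh).pt u = γ (s + u * (t - s)) := by
    intro hh u hu
    rw [SEdge.mk'_pt, heq, (h _ (hI u hu)).2]
  refine ⟨SEdge.mk' ψ _ _ hne (fun u hu => by rw [heq]; exact (h _ (hI u hu)).1), ?_, ?_, ?_⟩
  · rw [SEdge.src, hpt _ 0 (by simp)]; congr 1; ring
  · rw [SEdge.tgt, hpt _ 1 (by simp)]; congr 1; ring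
  · rintro _ ⟨u, hu, rfl⟩
    refine ⟨s + u * (t - s), ?_, ?_, hpt _ u (Ioo_subset_Icc_self hu)⟩
    · nlinarith [hu.1]
    · nlinarith [hu.2]

def SegCvx (N : Set M) : Prop := ∀ y ∈ N, ∀ y' ∈ N, y ≠ y' → ∃ γ : ℝ → M, IsSeg γ ∧ γ 0 = y ∧ γ 1 = y' ∧
  ∀ t ∈ Icc (0:ℝ) 1, γ t ∈ N

lemma exists_cvx [Surf M] {x : M} {O : Set M} (hO : O ∈ 𝓝 x) :
    ∃ N : Set M, IsOpen N ∧ x ∈ N ∧ N ⊆ O ∧ SegCvx N := by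
  obtain ⟨χ, h1, h2⟩ := exists_chart x
  have ht : (0:ℂ) ∈ χ.target := h2 ▸ χ.map_source h1
  have hxx : χ.symm 0 = x := by rw [← h2, χ.left_inv h1]
  have hc : Tendsto χ.symm (𝓝 0) (𝓝 x) := by
    have : ContinuousAt χ.symm 0 := χ.continuousAt_symm ht
    rw [ContinuousAt, hxx] at this
    exact this
  obtain ⟨r, hr, hb⟩ := Metric.mem_nhds_iff.1 (inter_mem (hc hO) (χ.open_target.mem_nhds ht))
  refine ⟨χ.symm '' ball 0 r, χ.isOpen_image_symm_of_subset_target isOpen_ball fun w hw => (hb hw).2,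
    ⟨0, by simpa using hr, hxx⟩, ?_, ?_⟩
  · rintro _ ⟨w, hw, rfl⟩
    exact (hb hw).1
  · rintro _ ⟨w, hw, rfl⟩ _ ⟨w', hw', rfl⟩ hne
    have hww : w ≠ w' := by rintro rfl; exact hne rfl
    have hseg : ∀ t ∈ Icc (0:ℝ) 1, w + t * (w' - w) ∈ ball (0:ℂ) r := by
      intro t ht
      have := (convex_ball (0:ℂ) r) hw hw' (by linarith [ht.2] : 0 ≤ 1 - t) ht.1 (by ring)
      have he : w + t * (w' - w) = (1 - t) • w + t • w' := by
        rw [Complex.real_smul, Complex.real_smul]; push_cast; ring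
      rw [he]; exact this
    refine ⟨fun t => χ.symm (w + t * (w' - w)), ⟨χ, w, w', hww, fun t ht => ⟨(hb (hseg t ht)).2, rfl⟩⟩,
      by simp, by simp, fun t ht => ⟨_, hseg t ht, rfl⟩⟩

/-- clopen argument -/
lemma clopen_arg {U R : Set M} (hU : IsPreconnected U) (hne : ∃ x ∈ U, x ∈ R)
    (h : ∀ x ∈ U, ∃ N ∈ 𝓝 x, (∃ y ∈ N, y ∈ R) → N ⊆ R) : U ⊆ R := by
  classical
  obtain ⟨x0, hx0, hx0R⟩ := hne
  obtain ⟨c, hc⟩ := eventually_const (Q := univ) (s := fun y => decide (y ∈ R)) hU ⟨x0, hx0⟩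
    (fun x _ => by rw [nhdsWithin_univ]; infer_instance) (by
      intro x hx
      obtain ⟨N, hN, hNR⟩ := h x hx
      rw [nhdsWithin_univ]
      by_cases hy : ∃ y ∈ N, y ∈ R
      · refine ⟨true, ?_⟩
        filter_upwards [hN] with y hyN
        simpa using hNR hy hyN
      · refine ⟨false, ?_⟩
        push Not at hy
        filter_upwards [hN] with y hyN
        simpa using hy y hyN)
  have h1 : ∀ x ∈ U, decide (x ∈ R) = c := fun x hx => by
    have := hc x hx
    rw [nhdsWithin_univ] at this
    exact this.self_of_nhds
  intro x hx
  have := (h1 x hx).trans (h1 x0 hx0).symm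
  simpa [hx0R] using this

namespace LG
variable {S : Sys M 𝒟 𝒞}

lemma link_new (L : LG S) {γ : ℝ → M} (hγ : IsSeg γ) {s t : ℝ} (hs : 0 ≤ s) (hst : s < t) (ht : t ≤ 1)
    (hcar : γ s ∈ L.car) (hmiss : ∀ u, s < u → u ≤ t → γ u ∉ L.car)
    (hD : ∀ u, s < u → u ≤ t → ∀ d, γ u ∈ S.D d → L.lab (γ s) = d)
    (hC : ∀ u, s < u → u ≤ t → ∀ c, γ u ∈ S.C c → S.inc (L.lab (γ s)) c) :
    ∃ L', Ext L L' ∧ γ t ∈ L'.car ∧ L'.lab (γ t) = L.lab (γ s) ∧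
      ∀ x ∈ L'.car, x ∉ L.car → ∃ u, s < u ∧ u ≤ t ∧ x = γ u := by
  obtain ⟨e, he1, he2, he3⟩ := hγ.edge hs hst ht
  obtain ⟨L1, hE, hc1, hl1, hv1, -⟩ := L.toVertex hcar
  have hall : ∀ x ∈ insert e.tgt e.inner, ∃ u, s < u ∧ u ≤ t ∧ x = γ u := by
    rintro x (rfl | hx)
    · exact ⟨t, hst, le_rfl, he2⟩
    · obtain ⟨u, h1, h2, h3⟩ := he3 x hx
      exact ⟨u, h1, h2.le, h3⟩
  have hlabs : L1.lab e.src = L.lab (γ s) := by rw [hl1, he1]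
  have htgt : e.tgt ∉ L1.car := by rw [hc1, he2]; exact hmiss t hst le_rfl
  obtain ⟨L', h1, h2, h3, h4⟩ := L1.add e (he1 ▸ hv1) (by
      intro x hx
      obtain ⟨u, hu1, hu2, rfl⟩ := he3 x hx
      rw [hc1]; exact hmiss u hu1 hu2.le) (fun h => absurd h htgt)
    (by
      intro x hx _ d hd
      obtain ⟨u, hu1, hu2, rfl⟩ := hall x hx
      rw [hlabs]; exact hD u hu1 hu2 d hd)
    (by
      intro x hx _ d hd
      obtain ⟨u, hu1, hu2, rfl⟩ := hall x hx
      rw [hlabs]; exact hC u hu1 hu2 d hd) (fun h => absurd h htgt)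
  refine ⟨L', hE.trans ⟨?_, ?_, h3 htgt⟩, ?_, ?_, ?_⟩
  · rw [h1]; exact subset_union_left
  · intro x hx
    rw [h2]; exact L1.newLab_pos hx
  · rw [h1, ← he2]; exact Or.inr (Or.inl rfl)
  · rw [h2, ← he2, L1.newLab_neg htgt, hlabs]
  · intro x hx hxn
    rw [h1, hc1] at hx
    exact hall x (hx.resolve_left hxn)

lemma link_bridge (L : LG S) {γ : ℝ → M} (hγ : IsSeg γ) {s t : ℝ} (hs : 0 ≤ s) (hst : s < t) (ht : t ≤ 1)
    (hcar : γ s ∈ L.car) (hcar' : γ t ∈ L.car) (hmiss : ∀ u, s < u → u < t → γ u ∉ L.car)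
    (hD : ∀ u, s < u → u < t → ∀ d, γ u ∈ S.D d → L.lab (γ s) = d)
    (hC : ∀ u, s < u → u < t → ∀ c, γ u ∈ S.C c → S.inc (L.lab (γ s)) c)
    (hne : L.lab (γ s) ≠ L.lab (γ t)) (hsp : s(L.lab (γ s), L.lab (γ t)) ∉ L.spec) :
    ∃ L' : LG S, L.spec ⊂ L'.spec := by
  obtain ⟨e, he1, he2, he3⟩ := hγ.edge hs hst ht
  have hboth : ∃ L' : LG S, Ext L L' ∧ L'.car = L.car ∧ L'.lab = L.lab ∧ γ s ∈ L'.G.V ∧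
      (γ t ∈ L'.car → γ t ∈ L'.G.V) := by
    obtain ⟨L1, hE, hc1, hl1, hv1, -⟩ := L.toVertex hcar'
    obtain ⟨L2, hE2, hc2, hl2, hv2, hv2'⟩ := L1.toVertex (x := γ s) (hc1 ▸ hcar)
    exact ⟨L2, hE.trans hE2, hc2.trans hc1, hl2.trans hl1, hv2, fun _ => hv2' _ hv1⟩
  obtain ⟨L1, hE, hc1, hl1, hv1, hv1'⟩ := hboth
  have hall : ∀ x ∈ insert e.tgt e.inner, x ∉ L1.car → ∃ u, s < u ∧ u < t ∧ x = γ u := by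
    rintro x (rfl | hx) hxc
    · exact absurd (by rw [hc1, he2]; exact hcar') hxc
    · exact he3 x hx
  have hlabs : L1.lab e.src = L.lab (γ s) := by rw [hl1, he1]
  have hlabt : L1.lab e.tgt = L.lab (γ t) := by rw [hl1, he2]
  have htgt : e.tgt ∈ L1.car := by rw [hc1, he2]; exact hcar'
  have hnot : s(L1.lab e.src, L1.lab e.tgt) ∉ L1.spec := by
    rw [hlabs, hlabt, hE.spec]; exact hsp
  obtain ⟨L', h1, h2, h3, h4⟩ := L1.add e (he1 ▸ hv1) (by
      intro x hx
      obtain ⟨u, hu1, hu2, rfl⟩ := he3 x hx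
      rw [hc1]; exact hmiss u hu1 hu2) (fun h => he2 ▸ hv1' (he2 ▸ h))
    (by
      intro x hx hxc d hd
      obtain ⟨u, hu1, hu2, rfl⟩ := hall x hx hxc
      rw [hlabs]; exact hD u hu1 hu2 d hd)
    (by
      intro x hx hxc d hd
      obtain ⟨u, hu1, hu2, rfl⟩ := hall x hx hxc
      rw [hlabs]; exact hC u hu1 hu2 d hd) (fun _ => ⟨by rw [hlabs, hlabt]; exact hne, hnot⟩)
  refine ⟨L', ?_⟩
  rw [h4 htgt, hE.spec] 
  rw [hE.spec] at hnot
  exact ssubset_insert hnot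

end LG
end
end SurfUB


set_option linter.unusedSectionVars false
set_option linter.unusedVariables false

namespace SurfUB
open Set Filter Topology Metric

section
variable {M : Type*} [TopologicalSpace M] [T2Space M] [Surf M] {𝒟 𝒞 : Type*}

/-- last element of a closed set of parameters -/
lemma last_hit {γ : ℝ → M} (hγ : ContinuousOn γ (Icc 0 1)) {K : Set M} (hK : IsClosed K)
    {a b : ℝ} (ha : 0 ≤ a) (hab : a ≤ b) (hb : b ≤ 1) (haK : γ a ∈ K) :
    ∃ h, a ≤ h ∧ h ≤ b ∧ γ h ∈ K ∧ ∀ u, h < u → u ≤ b → γ u ∉ K := by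
  have hc : IsCompact (Icc a b ∩ γ ⁻¹' K) := by
    have : IsClosed (Icc a b ∩ γ ⁻¹' K) :=
      (hγ.mono (Icc_subset_Icc ha hb)).preimage_isClosed_of_isClosed isClosed_Icc hK
    exact isCompact_Icc.of_isClosed_subset this inter_subset_left
  obtain ⟨h, hh, hmax⟩ := hc.exists_isGreatest ⟨a, ⟨le_rfl, hab⟩, haK⟩
  refine ⟨h, hh.1.1, hh.1.2, hh.2, fun u hu hub hK => ?_⟩
  have := hmax ⟨⟨hh.1.1.trans hu.le, hub⟩, hK⟩
  linarith

namespace LG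
variable {S : Sys M 𝒟 𝒞}

lemma closed_car (L : LG S) : IsClosed L.car := L.G.isClosed_car

/-- connecting the graph to a point inside `D d` -/
lemma connect (L : LG S) (d : 𝒟) {y : M} (hy : y ∈ S.D d) :
    ∃ L', Ext L L' ∧ y ∈ L'.car ∧ ∀ x ∈ L'.car, x ∉ L.car → x ∈ S.D d := by
  set R : Set M := {y | ∃ L', Ext L L' ∧ y ∈ L'.car ∧ ∀ x ∈ L'.car, x ∉ L.car → x ∈ S.D d} with hR
  refine clopen_arg (R := R) (S.D_conn d) ?_ ?_ hy
  · obtain ⟨x, h1, h2⟩ := L.base d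
    exact ⟨x, h2, L, Ext.refl L, h1, fun _ h h' => absurd h h'⟩
  intro x hx
  obtain ⟨N, hNo, hxN, hND, hcv⟩ := exists_cvx ((S.D_open d).mem_nhds hx)
  refine ⟨N, hNo.mem_nhds hxN, ?_⟩
  rintro ⟨y, hyN, L1, hE, hy1, hsub⟩ y' hy'N
  by_cases hyy : y = y'
  · exact ⟨L1, hE, hyy ▸ hy1, hsub⟩
  obtain ⟨γ, hγ, h0, h1, hN⟩ := hcv y hyN y' hy'N hyy
  obtain ⟨h, hh0, hh1, hhc, hmax⟩ := last_hit hγ.cont L1.closed_car le_rfl zero_le_one le_rfl (h0 ▸ hy1)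
  rcases eq_or_lt_of_le hh1 with rfl | hlt
  · exact ⟨L1, hE, h1 ▸ hhc, hsub⟩
  have hlab : L1.lab (γ h) = d := L1.labD _ hhc d (hND (hN h ⟨hh0, hh1⟩))
  have hDd : ∀ u, h < u → u ≤ 1 → γ u ∈ S.D d := fun u h1 h2 => hND (hN u ⟨hh0.trans h1.le, h2⟩)
  obtain ⟨L2, hE2, hc2, -, hs2⟩ := L1.link_new hγ hh0 hlt le_rfl hhc hmax
    (fun u h1 h2 e he => by rw [hlab]; exact S.D_inj (hDd u h1 h2) he)
    (fun u h1 h2 c hc => by rw [hlab]; exact S.inc_of d c _ (hDd u h1 h2) hc)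
  refine ⟨L2, hE.trans hE2, h1 ▸ hc2, fun x hx hxn => ?_⟩
  by_cases hx1 : x ∈ L1.car
  · exact hsub x hx1 hxn
  · obtain ⟨u, hu1, hu2, rfl⟩ := hs2 x hx hx1
    exact hDd u hu1 hu2

/-- No special edge across the splitting. -/
def NoCross (L : LG S) (c0 : 𝒞) (A : Set 𝒟) : Prop :=
  ∀ p q, S.inc p c0 → S.inc q c0 → p ∈ A → q ∉ A → s(p, q) ∉ L.spec

lemma NoCross.compl {L : LG S} {c0 : 𝒞} {A : Set 𝒟} (h : L.NoCross c0 A) : L.NoCross c0 Aᶜ := by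
  intro p q hp hq hpA hqA
  rw [Sym2.eq_swap]
  exact h q p hq hp (by simpa using hqA) hpA

lemma Ext.noCross {L L' : LG S} (hE : Ext L L') {c0 : 𝒞} {A : Set 𝒟} (h : L.NoCross c0 A) :
    L'.NoCross c0 A := by
  intro p q hp hq hpA hqA
  rw [hE.spec]
  exact h p q hp hq hpA hqA

lemma lab_loc (L : LG S) {c0 : 𝒞} {A : Set 𝒟} (hnc : L.NoCross c0 A) {x : M} (hx : x ∈ L.car)
    (hxC : x ∈ S.C c0) : ∀ᶠ y in 𝓝 x, y ∈ L.car → (L.lab y ∈ A ↔ L.lab x ∈ A) := by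
  classical
  rcases hx with hx | ⟨i, hi⟩
  · filter_upwards [L.G.eventually_at hx, (S.C_open c0).mem_nhds hxC] with y hy hyC hyc
    rcases id hyc with h | ⟨i, hi⟩
    · rw [hy.1 h]
    · have hli := L.lab_inner i y hi
      have hat := hy.2 i hi
      rcases hat with h | h
      · rw [hli, h]
      · have h1 : S.inc (L.lab y) c0 := L.labC y hyc c0 hyC
        have h2 : S.inc (L.lab x) c0 := L.labC x (L.G.V_sub hx) c0 hxC
        have h3 : L.lab y ≠ L.lab x → s(L.lab y, L.lab x) ∈ L.spec := by
          intro hne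
          refine ⟨i, ?_, ?_⟩
          · show L.lab _ ≠ L.lab _
            rw [← hli, h]; exact hne
          · rw [← hli, h]
        by_contra hcon
        have hne : L.lab y ≠ L.lab x := fun h => hcon (by rw [h])
        have h4 := h3 hne
        by_cases hyA : L.lab y ∈ A
        · have hxA : L.lab x ∉ A := fun h => hcon (iff_of_true hyA h)
          exact hnc _ _ h1 h2 hyA hxA h4
        · have hxA : L.lab x ∈ A := by
            by_contra h; exact hcon (iff_of_false hyA h)
          rw [Sym2.eq_swap] at h4
          exact hnc _ _ h2 h1 hxA hyA h4
  · filter_upwards [L.G.eventually_inner hi] with y hy hyc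
    rw [L.lab_inner i y (hy.2.1.1 hyc), L.lab_inner i x hi]

/-- last parameter with label in `A` -/
lemma last_lab (L : LG S) {c0 : 𝒞} {A : Set 𝒟} (hnc : L.NoCross c0 A) {γ : ℝ → M}
    (hγ : ContinuousOn γ (Icc 0 1)) (hγC : ∀ t ∈ Icc (0:ℝ) 1, γ t ∈ S.C c0)
    {a b : ℝ} (ha : 0 ≤ a) (hab : a ≤ b) (hb : b ≤ 1) (hac : γ a ∈ L.car) (haA : L.lab (γ a) ∈ A) :
    ∃ h, a ≤ h ∧ h ≤ b ∧ γ h ∈ L.car ∧ L.lab (γ h) ∈ A ∧ ∀ u, h < u → u ≤ b → γ u ∈ L.car → L.lab (γ u) ∉ A := by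
  set T : Set ℝ := {t | t ∈ Icc a b ∧ γ t ∈ L.car ∧ L.lab (γ t) ∈ A} with hT
  have hclT : IsClosed T := by
    rw [isClosed_iff_frequently]
    intro t ht
    have htI : t ∈ Icc a b := by
      apply isClosed_Icc.mem_of_frequently_of_tendsto (ht.mono fun u hu => hu.1) tendsto_id
    have htI' : t ∈ Icc (0:ℝ) 1 := Icc_subset_Icc ha hb htI
    have hcl : IsClosed (Icc a b ∩ γ ⁻¹' L.car) :=
      (hγ.mono (Icc_subset_Icc ha hb)).preimage_isClosed_of_isClosed isClosed_Icc L.closed_car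
    have htc : t ∈ Icc a b ∩ γ ⁻¹' L.car :=
      hcl.mem_of_frequently_of_tendsto (ht.mono fun u hu => ⟨hu.1, hu.2.1⟩) tendsto_id
    have h1 := L.lab_loc hnc htc.2 (hγC t htI')
    have h2 := (hγ t htI').eventually h1
    have h3 := eventually_nhdsWithin_iff.1 h2
    obtain ⟨u, hu, hu3⟩ := (ht.and_eventually h3).exists
    exact ⟨htI, htc.2, (hu3 (Icc_subset_Icc ha hb hu.1) hu.2.1).1 hu.2.2⟩
  have hc : IsCompact T := isCompact_Icc.of_isClosed_subset hclT fun t ht => ht.1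
  obtain ⟨h, hh, hmax⟩ := hc.exists_isGreatest ⟨a, ⟨le_rfl, hab⟩, hac, haA⟩
  refine ⟨h, hh.1.1, hh.1.2, hh.2.1, hh.2.2, fun u hu hub huc huA => ?_⟩
  have := hmax ⟨⟨hh.1.1.trans hu.le, hub⟩, huc, huA⟩
  linarith

/-- condition (Hb) follows from (Ha) inside `C c0` -/
lemma hb_of_ha {c0 : 𝒞} {x : M} {l : 𝒟} (hx : x ∈ S.C c0) (hl : S.inc l c0) (hD : ∀ d, x ∈ S.D d → l = d) :
    ∀ c, x ∈ S.C c → S.inc l c := by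
  intro c hc
  by_cases h : c = c0
  · rw [h]; exact hl
  · obtain ⟨d, hd⟩ := S.C_inter c c0 x h hc hx
    rw [hD d hd]; exact S.inc_of d c x hd hc

/-- consecutive points, with possible obstruction labelled in `A` -/
lemma bridge_core (L : LG S) {c0 : 𝒞} {A : Set 𝒟} (hnc : L.NoCross c0 A) {γ : ℝ → M}
    (hγ : IsSeg γ) (hγC : ∀ t ∈ Icc (0:ℝ) 1, γ t ∈ S.C c0)
    (h1D : ∀ t ∈ Icc (0:ℝ) 1, ∀ t' ∈ Icc (0:ℝ) 1, ∀ d d', γ t ∈ S.D d → γ t' ∈ S.D d' → d = d')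
    {a b : ℝ} (ha : 0 ≤ a) (hab : a < b) (hb : b ≤ 1) (hac : γ a ∈ L.car) (haA : L.lab (γ a) ∈ A)
    (hbc : γ b ∈ L.car) (hbA : L.lab (γ b) ∉ A) (hmiss : ∀ u, a < u → u < b → γ u ∉ L.car)
    (hobs : ∀ u, a < u → u < b → ∀ d, γ u ∈ S.D d → d ∈ A) :
    ∃ L' : LG S, L.spec ⊂ L'.spec := by
  by_cases hD : ∃ t d0, a < t ∧ t < b ∧ γ t ∈ S.D d0
  · obtain ⟨t, d0, hat, htb, htD⟩ := hD
    have hI : ∀ u, a < u → u < b → u ∈ Icc (0:ℝ) 1 := fun u h1 h2 => ⟨by linarith, by linarith⟩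
    have hd0 : d0 ∈ A := hobs t hat htb d0 htD
    obtain ⟨L1, hE, ht1, hsub⟩ := L.connect d0 htD
    have hlt : L1.lab (γ t) = d0 := L1.labD _ ht1 d0 htD
    obtain ⟨a', h1, h2, h3, h4, h5⟩ := L1.last_lab (hE.noCross hnc) hγ.cont hγC (by linarith) htb.le hb ht1 (hlt ▸ hd0)
    have hb1 : L1.lab (γ b) = L.lab (γ b) := hE.lab _ hbc
    have ha'b : a' < b := by
      rcases eq_or_lt_of_le h2 with rfl | h
      · exact absurd (hb1 ▸ h4) hbA
      · exact h
    have hDlab : ∀ u, a < u → u < b → γ u ∈ L1.car → L1.lab (γ u) = d0 := by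
      intro u hu1 hu2 huc
      exact L1.labD _ huc d0 (hsub _ huc (hmiss u hu1 hu2))
    have hla : L1.lab (γ a') = d0 := hDlab a' (by linarith) ha'b h3
    have hDD : ∀ u, a' < u → u < b → ∀ d, γ u ∈ S.D d → L1.lab (γ a') = d := by
      intro u hu1 hu2 d hd
      rw [hla]
      exact h1D t (hI t hat htb) u (hI u (by linarith) hu2) d0 d htD hd
    have hbI : S.inc (L.lab (γ b)) c0 := L.labC _ hbc c0 (hγC b ⟨by linarith, hb⟩)
    have haI : S.inc (L1.lab (γ a')) c0 := L1.labC _ h3 c0 (hγC a' ⟨by linarith, by linarith⟩)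
    have := L1.link_bridge hγ (by linarith) ha'b hb h3 (hE.sub hbc) (by
        intro u hu1 hu2 huc
        exact h5 u hu1 hu2.le huc (by rw [hDlab u (by linarith) hu2 huc]; exact hd0))
      hDD (fun u hu1 hu2 => hb_of_ha (hγC u (hI u (by linarith) hu2)) haI (hDD u hu1 hu2))
      (by rw [hb1]; exact fun h => hbA (h ▸ h4))
      (by rw [hb1]; exact hE.noCross hnc _ _ haI hbI h4 hbA)
    rwa [hE.spec] at this
  · push Not at hD
    have hbI : S.inc (L.lab (γ b)) c0 := L.labC _ hbc c0 (hγC b ⟨by linarith, hb⟩)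
    have haI : S.inc (L.lab (γ a)) c0 := L.labC _ hac c0 (hγC a ⟨by linarith, by linarith⟩)
    have hDD : ∀ u, a < u → u < b → ∀ d, γ u ∈ S.D d → L.lab (γ a) = d := by
      intro u hu1 hu2 d hd
      exact absurd hd (hD u d hu1 hu2)
    exact L.link_bridge hγ ha hab hb hac hbc hmiss hDD
      (fun u hu1 hu2 => hb_of_ha (hγC u ⟨by linarith, by linarith⟩) haI (hDD u hu1 hu2))
      (fun h => hbA (h ▸ haA)) (hnc _ _ haI hbI haA hbA)

/-- at most one D meets N -/
def OneD (S : Sys M 𝒟 𝒞) (N : Set M) : Prop := ∀ x ∈ N, ∀ x' ∈ N, ∀ d d', x ∈ S.D d → x' ∈ S.D d' → d = d'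

lemma bridge0 (L : LG S) {c0 : 𝒞} {A : Set 𝒟} (hnc : L.NoCross c0 A) {N : Set M} (hN : SegCvx N)
    (hNC : N ⊆ S.C c0) (h1 : OneD S N) {y y' : M} (hy : y ∈ N) (hy' : y' ∈ N) (hyc : y ∈ L.car)
    (hyc' : y' ∈ L.car) (hyA : L.lab y ∈ A) (hyA' : L.lab y' ∉ A) : ∃ L' : LG S, L.spec ⊂ L'.spec := by
  have hne : y ≠ y' := fun h => hyA' (h ▸ hyA)
  obtain ⟨γ, hγ, h0, h1', hγN⟩ := hN y hy y' hy' hne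
  have hγC : ∀ t ∈ Icc (0:ℝ) 1, γ t ∈ S.C c0 := fun t ht => hNC (hγN t ht)
  -- last point labelled in A
  obtain ⟨a, ha0, ha1, hac, haA, hamax⟩ := L.last_lab hnc hγ.cont hγC le_rfl zero_le_one le_rfl (h0 ▸ hyc) (h0 ▸ hyA)
  have ha1' : a < 1 := by
    rcases eq_or_lt_of_le ha1 with rfl | h
    · rw [h1'] at haA; exact absurd haA hyA'
    · exact h
  -- first point after a labelled outside A
  set γ' : ℝ → M := fun t => γ (1 - t) with hγ'
  have hγ's := hγ.rev
  have hγ'C : ∀ t ∈ Icc (0:ℝ) 1, γ' t ∈ S.C c0 := fun t ht => hγC _ ⟨by linarith [ht.2], by linarith [ht.1]⟩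
  obtain ⟨b', hb0, hb1, hbc, hbA, hbmax⟩ := L.last_lab hnc.compl hγ's.cont hγ'C (a := 0) (b := 1 - a) le_rfl (by linarith) (by linarith)
    (by show γ (1 - 0) ∈ _; rw [sub_zero, h1']; exact hyc')
    (by show L.lab (γ (1 - 0)) ∈ _; rw [sub_zero, h1']; exact hyA')
  have hbA' : L.lab (γ (1 - b')) ∉ A := hbA
  have hab : a < 1 - b' := by
    rcases eq_or_lt_of_le hb1 with rfl | h
    · rw [sub_sub_cancel] at hbA'; exact absurd haA hbA'
    · linarith
  have hmiss : ∀ u, a < u → u < 1 - b' → γ u ∉ L.car := by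
    intro u hu1 hu2 huc
    by_cases huA : L.lab (γ u) ∈ A
    · exact hamax u hu1 (by linarith) huc huA
    · have := hbmax (1 - u) (by linarith) (by linarith)
      simp only [hγ', sub_sub_cancel] at this
      exact this huc huA
  have h1D : ∀ t ∈ Icc (0:ℝ) 1, ∀ t' ∈ Icc (0:ℝ) 1, ∀ d d', γ t ∈ S.D d → γ t' ∈ S.D d' → d = d' :=
    fun t ht t' ht' d d' h h' => h1 _ (hγN t ht) _ (hγN t' ht') d d' h h'
  by_cases hobs : ∀ u, a < u → u < 1 - b' → ∀ d, γ u ∈ S.D d → d ∈ A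
  · exact L.bridge_core hnc hγ hγC h1D ha0 hab (by linarith) hac haA hbc hbA' hmiss hobs
  · push Not at hobs
    obtain ⟨u0, hu1, hu2, d0, hd0, hd0A⟩ := hobs
    refine L.bridge_core hnc.compl hγ's hγ'C ?_ hb0 (a := b') (b := 1 - a) (by linarith) (by linarith) hbc hbA
      (by show γ (1 - (1 - a)) ∈ _; rw [sub_sub_cancel]; exact hac)
      (by show ¬ (L.lab (γ (1 - (1 - a))) ∉ A); rw [sub_sub_cancel]; exact not_not.2 haA)
      (fun u h1 h2 => hmiss (1 - u) (by linarith) (by linarith)) ?_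
    · intro t ht t' ht' d d' h h'
      exact h1D (1 - t) ⟨by linarith [ht.2], by linarith [ht.1]⟩ (1 - t') ⟨by linarith [ht'.2], by linarith [ht'.1]⟩ d d' h h'
    · intro u h1 h2 d hd
      have : d0 = d := h1D u0 ⟨by linarith, by linarith⟩ (1 - u) ⟨by linarith, by linarith⟩ d0 d hd0 hd
      rw [← this]; exact hd0A

end LG
end
end SurfUB


set_option linter.unusedSectionVars false
set_option linter.unusedVariables false

namespace SurfUB
open Set Filter Topology Metric

section
variable {M : Type*} [TopologicalSpace M] [T2Space M] [Surf M] {𝒟 𝒞 : Type*}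

namespace LG
variable {S : Sys M 𝒟 𝒞}

lemma exists_oneD [Finite 𝒟] (S : Sys M 𝒟 𝒞) (x : M) : ∃ O ∈ 𝓝 x, OneD S O := by
  refine ⟨⋂ d : 𝒟, {y | x ∉ closure (S.D d) → y ∉ closure (S.D d)}, ?_, ?_⟩
  · rw [Filter.iInter_mem]
    intro d
    by_cases h : x ∈ closure (S.D d)
    · exact Filter.univ_mem' fun y h' => absurd h h'
    · filter_upwards [isClosed_closure.isOpen_compl.mem_nhds h] with y hy _
      exact hy
  · intro y hy y' hy' d d' hd hd'
    rw [mem_iInter] at hy hy'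
    have h1 : x ∈ closure (S.D d) := by
      by_contra h
      exact hy d h (subset_closure hd)
    have h2 : x ∈ closure (S.D d') := by
      by_contra h
      exact hy' d' h (subset_closure hd')
    exact S.D_disj d d' x h1 h2

lemma step (L : LG S) {c0 : 𝒞} {A : Set 𝒟} (hnc : L.NoCross c0 A)
    (hmax : ∀ L' : LG S, ¬ L.spec ⊂ L'.spec) {N : Set M} (hN : SegCvx N) (hNC : N ⊆ S.C c0)
    (h1 : OneD S N) {y y' : M} (hy : y ∈ N) (hy' : y' ∈ N)
    (hR : ∃ L', Ext L L' ∧ y ∈ L'.car ∧ L'.lab y ∈ A) :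
    ∃ L', Ext L L' ∧ y' ∈ L'.car ∧ L'.lab y' ∈ A := by
  obtain ⟨L1, hE, hy1, hyA⟩ := hR
  have hbr : ∀ L2, Ext L L2 → ∀ x ∈ N, ∀ x' ∈ N, x ∈ L2.car → x' ∈ L2.car → L2.lab x ∈ A → L2.lab x' ∈ A := by
    intro L2 hE2 x hx x' hx' hxc hxc' hxA
    by_contra hcon
    obtain ⟨L3, h3⟩ := L2.bridge0 (hE2.noCross hnc) hN hNC h1 hx hx' hxc hxc' hxA hcon
    rw [hE2.spec] at h3
    exact hmax L3 h3
  by_cases hyy : y = y'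
  · exact ⟨L1, hE, hyy ▸ hy1, hyy ▸ hyA⟩
  obtain ⟨γ, hγ, h0, h1', hγN⟩ := hN y hy y' hy' hyy
  have hγC : ∀ t ∈ Icc (0:ℝ) 1, γ t ∈ S.C c0 := fun t ht => hNC (hγN t ht)
  obtain ⟨h, hh0, hh1, hhc, hmiss⟩ := last_hit hγ.cont L1.closed_car le_rfl zero_le_one le_rfl (h0 ▸ hy1)
  have hhA : L1.lab (γ h) ∈ A := hbr L1 hE y hy _ (hγN h ⟨hh0, hh1⟩) hy1 hhc hyA
  rcases eq_or_lt_of_le hh1 with rfl | hlt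
  · rw [h1'] at hhc hhA
    exact ⟨L1, hE, hhc, hhA⟩
  by_cases hD : ∃ t d0, h < t ∧ t ≤ 1 ∧ γ t ∈ S.D d0
  · obtain ⟨t, d0, hat, ht1, htD⟩ := hD
    have htI : t ∈ Icc (0:ℝ) 1 := ⟨by linarith, ht1⟩
    obtain ⟨L2, hE2, ht2, hsub⟩ := L1.connect d0 htD
    have hE' := hE.trans hE2
    have hlt2 : L2.lab (γ t) = d0 := L2.labD _ ht2 d0 htD
    obtain ⟨h', hh'0, hh'1, hh'c, hmiss'⟩ := last_hit hγ.cont L2.closed_car htI.1 ht1 le_rfl ht2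
    have hI' : h' ∈ Icc (0:ℝ) 1 := ⟨by linarith, hh'1⟩
    have hh'D : γ h' ∈ S.D d0 := hsub _ hh'c (hmiss h' (by linarith) hh'1)
    have hl' : L2.lab (γ h') = d0 := L2.labD _ hh'c d0 hh'D
    have hA' : L2.lab (γ h') ∈ A :=
      hbr L2 hE' y hy _ (hγN h' hI') (hE2.sub hy1) hh'c (by rw [hE2.lab y hy1]; exact hyA)
    rcases eq_or_lt_of_le hh'1 with rfl | hlt'
    · rw [h1'] at hh'c hA'
      exact ⟨L2, hE', hh'c, hA'⟩
    have hDD : ∀ u, h' < u → u ≤ 1 → ∀ d, γ u ∈ S.D d → L2.lab (γ h') = d := by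
      intro u hu1 hu2 d hd
      rw [hl']
      exact h1 _ (hγN t htI) _ (hγN u ⟨by linarith, hu2⟩) d0 d htD hd
    have hinc : S.inc (L2.lab (γ h')) c0 := L2.labC _ hh'c c0 (hγC h' hI')
    obtain ⟨L3, hE3, hc3, hl3, -⟩ := L2.link_new hγ hI'.1 hlt' le_rfl hh'c hmiss' hDD
      (fun u hu1 hu2 => hb_of_ha (hγC u ⟨by linarith, hu2⟩) hinc (hDD u hu1 hu2))
    refine ⟨L3, hE'.trans hE3, h1' ▸ hc3, ?_⟩
    rw [← h1', hl3]; exact hA'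
  · push Not at hD
    have hDD : ∀ u, h < u → u ≤ 1 → ∀ d, γ u ∈ S.D d → L1.lab (γ h) = d := by
      intro u hu1 hu2 d hd
      exact absurd hd (hD u d hu1 hu2)
    have hinc : S.inc (L1.lab (γ h)) c0 := L1.labC _ hhc c0 (hγC h ⟨hh0, hh1⟩)
    obtain ⟨L3, hE3, hc3, hl3, -⟩ := L1.link_new hγ hh0 hlt le_rfl hhc hmiss hDD
      (fun u hu1 hu2 => hb_of_ha (hγC u ⟨by linarith, hu2⟩) hinc (hDD u hu1 hu2))
    refine ⟨L3, hE.trans hE3, h1' ▸ hc3, ?_⟩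
    rw [← h1', hl3]; exact hhA

lemma cross_of_max [Finite 𝒟] (L : LG S) (hmax : ∀ L' : LG S, ¬ L.spec ⊂ L'.spec) (c0 : 𝒞) (A : Set 𝒟)
    {p q : 𝒟} (hp : S.inc p c0) (hq : S.inc q c0) (hpA : p ∈ A) (hqA : q ∉ A) : ¬ L.NoCross c0 A := by
  intro hnc
  have key : S.C c0 ⊆ {y | ∃ L', Ext L L' ∧ y ∈ L'.car ∧ L'.lab y ∈ A} := by
    refine clopen_arg (S.C_conn c0) ?_ ?_
    · obtain ⟨x, h1, h2⟩ := L.base p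
      exact ⟨x, S.inc_sub p c0 hp h2, L, Ext.refl L, h1, by rw [L.labD x h1 p h2]; exact hpA⟩
    · intro x hx
      obtain ⟨O, hO, hO1⟩ := exists_oneD S x
      obtain ⟨N, hNo, hxN, hNs, hcv⟩ := exists_cvx (Filter.inter_mem hO ((S.C_open c0).mem_nhds hx))
      refine ⟨N, hNo.mem_nhds hxN, ?_⟩
      rintro ⟨y, hyN, hyR⟩ y' hy'
      exact L.step hnc hmax hcv (fun z hz => (hNs hz).2)
        (fun a ha b hb => hO1 a (hNs ha).1 b (hNs hb).1) hyN hy' hyR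
  obtain ⟨x, hx⟩ := S.D_ne q
  obtain ⟨L', -, h1, h2⟩ := key (S.inc_sub q c0 hq hx)
  rw [L'.labD x h1 q hx] at h2
  exact hqA h2

lemma exists_start [Finite 𝒟] [Nonempty 𝒟] (S : Sys M 𝒟 𝒞) : Nonempty (LG S) := by
  classical
  have := Fintype.ofFinite 𝒟
  choose p hp using fun d => S.D_ne d
  have hinj : Function.Injective p := fun d d' h => S.D_inj (hp d) (h ▸ hp d')
  set lab : M → 𝒟 := fun x => if h : ∃ d, x ∈ S.D d then h.choose else Classical.arbitrary 𝒟 with hlab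
  have hl : ∀ x d, x ∈ S.D d → lab x = d := by
    intro x d hd
    have h : ∃ d, x ∈ S.D d := ⟨d, hd⟩
    simp only [hlab, dif_pos h]
    exact S.D_inj h.choose_spec hd
  refine ⟨{ ι := Empty, fin := inferInstance
            G := ⟨fun i => i.elim, Finset.univ.image p, fun i => i.elim, fun i => i.elim, fun i => i.elim, fun i => i.elim⟩
            lab := lab
            lab_inner := fun i => i.elim
            labD := fun x _ d hd => hl x d hd
            labC := ?_
            base := ?_
            simple := fun i => i.elim
            I3 := fun z _ _ => Subsingleton.elim _ _
            count := ?_ }⟩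
  · rintro x (hx | ⟨i, -⟩) c hc
    · obtain ⟨d, -, rfl⟩ := Finset.mem_image.1 hx
      rw [hl _ d (hp d)]
      exact S.inc_of d c _ (hp d) hc
    · exact i.elim
  · intro d
    exact ⟨p d, Or.inl (Finset.mem_image_of_mem p (Finset.mem_univ d)), hp d⟩
  · show Nat.card Empty + Nat.card 𝒟 = (Finset.univ.image p).card + _
    rw [Finset.card_image_of_injective _ hinj]
    simp

lemma spec_card (L : LG S) {w : ℕ}
    (hw : Nat.card {z // L.G.LocCol z} ≤ 2^w * Nat.card {z // L.G.GlobCol z}) :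
    L.spec.ncard ≤ 3 * Nat.card 𝒟 + 3 * w := by
  refine le_trans ?_ (NG.spec_bound L.G L.lab hw L.simple L.I3 L.count)
  have : L.spec = (fun i => s(L.lab (L.G.e i).src, L.lab (L.G.e i).tgt)) '' {i | L.G.Spc L.lab i} := by
    ext p; constructor
    · rintro ⟨i, h1, h2⟩; exact ⟨i, h1, h2.symm⟩
    · rintro ⟨i, h1, h2⟩; exact ⟨i, h1, h2.symm⟩
  rw [this]
  refine (Set.ncard_image_le (Set.toFinite _)).trans ?_
  rfl

end LG

/-- The main topological input. -/
theorem Sys.exists_spec [CompactSpace M] [Finite 𝒟] {w : ℕ}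
    (hw : ∀ (ι : Type) [Fintype ι] (G : NG M ι), Nat.card {z // G.LocCol z} ≤ 2^w * Nat.card {z // G.GlobCol z})
    (S : Sys M 𝒟 𝒞) : ∃ E : Set (Sym2 𝒟), E.ncard ≤ 3 * Nat.card 𝒟 + 3 * w ∧
      ∀ c (A : Set 𝒟), (∃ p ∈ A, S.inc p c) → (∃ q, q ∉ A ∧ S.inc q c) →
        ∃ p q, p ∈ A ∧ q ∉ A ∧ S.inc p c ∧ S.inc q c ∧ s(p, q) ∈ E := by
  rcases isEmpty_or_nonempty 𝒟 with hem | hne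
  · exact ⟨∅, by simp, fun c A ⟨p, _⟩ => (hem.false p).elim⟩
  have hfin : (Set.range fun L : LG S => L.spec).Finite := Set.toFinite _
  obtain ⟨L0⟩ := LG.exists_start S
  obtain ⟨E, hE⟩ := hfin.exists_maximal ⟨_, L0, rfl⟩
  obtain ⟨⟨L, rfl⟩, hmax⟩ := hE
  refine ⟨L.spec, L.spec_card (hw L.ι L.G), ?_⟩
  rintro c A ⟨p, hpA, hp⟩ ⟨q, hqA, hq⟩
  have := L.cross_of_max (fun L' h => h.2 (hmax ⟨L', rfl⟩ h.1)) c A hp hq hpA hqA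
  unfold LG.NoCross at this
  push Not at this
  obtain ⟨p, q, h1, h2, h3, h4, h5⟩ := this
  exact ⟨p, q, h3, h4, h1, h2, h5⟩

end
end SurfUB


set_option linter.unusedSectionVars false
set_option linter.unusedVariables false

namespace SurfUB
open Set Filter Topology Metric

/-- vertices ≤ edges + components -/
lemma card_le_edges_add_comp {X J : Type*} [Finite X] [Finite J] (a b : J → X) :
    Nat.card X ≤ Nat.card J + Nat.card (Quot fun x y => ∃ j, x = a j ∧ y = b j) := by
  classical
  have := Fintype.ofFinite X
  have := Fintype.ofFinite J
  set r : X → X → Prop := fun x y => ∃ j, x = a j ∧ y = b j with hr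
  have := Fintype.ofFinite (Quot r)
  let φ : (X → ℚ) →ₗ[ℚ] (J → ℚ) := LinearMap.funLeft ℚ ℚ a - LinearMap.funLeft ℚ ℚ b
  let ψ : (Quot r → ℚ) →ₗ[ℚ] (X → ℚ) := LinearMap.funLeft ℚ ℚ (Quot.mk r)
  have hker : LinearMap.ker φ ≤ LinearMap.range ψ := by
    intro f hf
    have hf' : ∀ j, f (a j) = f (b j) := by
      intro j
      have := congrFun (LinearMap.mem_ker.1 hf) j
      simp only [φ, LinearMap.sub_apply, LinearMap.funLeft_apply, Pi.sub_apply, Pi.zero_apply] at this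
      linarith
    refine ⟨Quot.lift f ?_, ?_⟩
    · rintro x y ⟨j, rfl, rfl⟩; exact hf' j
    · ext x; rfl
  have h1 := LinearMap.finrank_range_add_finrank_ker φ
  have h2 : Module.finrank ℚ (LinearMap.range φ) ≤ Fintype.card J := by
    simpa using Submodule.finrank_le (LinearMap.range φ)
  have h3 : Module.finrank ℚ (LinearMap.ker φ) ≤ Fintype.card (Quot r) := by
    refine (Submodule.finrank_mono hker).trans ?_
    simpa using LinearMap.finrank_range_le ψ
  rw [Module.finrank_fintype_fun_eq_card] at h1
  simp only [Nat.card_eq_fintype_card]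
  omega

theorem count {n k b w : ℕ} {𝒟 𝒞 : Type*} [Finite 𝒟] [Finite 𝒞] (sg : 𝒟 → Finset (Fin n))
    (hsg : ∀ d, (sg d).card = k + 1) (ta : 𝒞 → Finset (Fin n)) (inc : 𝒟 → 𝒞 → Prop)
    (T : Finset (Finset (Fin n))) (hTc : ∀ τ ∈ T, τ.card = k)
    (hT : ∀ τ d, τ.card = k → τ ⊆ sg d → τ ∈ T ∧ ∃ c, ta c = τ ∧ inc d c)
    (hinc : ∀ d c, inc d c → ta c ⊆ sg d)
    (hb : ∀ τ ∈ T, Nat.card {c // ta c = τ} ≤ b)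
    (F : Finset (Finset (Fin n))) (hF : ∀ σ ∈ F, ∃ d, sg d = σ)
    (hN : Nat.card 𝒟 ≤ b * F.card)
    (E : Set (Sym2 𝒟)) (hE : E.ncard ≤ 3 * Nat.card 𝒟 + 3 * w)
    (hcross : ∀ c (A : Set 𝒟), (∃ p ∈ A, inc p c) → (∃ q, q ∉ A ∧ inc q c) →
        ∃ p q, p ∈ A ∧ q ∉ A ∧ inc p c ∧ inc q c ∧ s(p, q) ∈ E) :
    k * F.card ≤ 2 * b * F.card + 3 * w + b * T.card := by
  classical
  have := Fintype.ofFinite 𝒟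
  have := Fintype.ofFinite 𝒞
  have hEf : E.Finite := Set.toFinite _
  set E' := hEf.toFinset with hE'
  have hEc : E'.card = E.ncard := (Set.ncard_eq_toFinset_card E hEf).symm
  set p1 : Sym2 𝒟 → 𝒟 := fun e => (Quot.out e).1 with hp1
  set p2 : Sym2 𝒟 → 𝒟 := fun e => (Quot.out e).2 with hp2
  have hp : ∀ e, s(p1 e, p2 e) = e := fun e => Quot.out_eq e
  set E0 := E'.filter fun e => sg (p1 e) = sg (p2 e) with hE0
  set E1 := E'.filter fun e => ¬ sg (p1 e) = sg (p2 e) with hE1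
  have hsplit : E0.card + E1.card = E'.card := Finset.card_filter_add_card_filter_not _
  set r : 𝒟 → 𝒟 → Prop := fun x y => ∃ j : E0, x = p1 j ∧ y = p2 j with hr
  set W := Quot r with hW
  have : Fintype W := Fintype.ofFinite _
  have hNW : Nat.card 𝒟 ≤ E0.card + Fintype.card W := by
    have := card_le_edges_add_comp (fun j : E0 => p1 j) (fun j : E0 => p2 j)
    have e1 : Nat.card W = Fintype.card W := Nat.card_eq_fintype_card
    have e2 : Nat.card E0 = E0.card := by simp
    rw [← e1, ← e2]; exact this
  have hrel : ∀ p q, sg p = sg q → s(p, q) ∈ E → (Quot.mk r p : W) = Quot.mk r q := by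
    intro p q h1 h2
    have h3 := hp s(p, q)
    rw [Sym2.eq_iff] at h3
    rcases h3 with ⟨h3, h4⟩ | ⟨h3, h4⟩
    · exact Quot.sound ⟨⟨s(p, q), Finset.mem_filter.2 ⟨hEf.mem_toFinset.2 h2, by rw [h3, h4, h1]⟩⟩, h3.symm, h4.symm⟩
    · exact (Quot.sound ⟨⟨s(p, q), Finset.mem_filter.2 ⟨hEf.mem_toFinset.2 h2, by rw [h3, h4, h1]⟩⟩, h3.symm, h4.symm⟩).symm
  let sW : W → Finset (Fin n) := Quot.lift sg (by
    rintro x y ⟨j, rfl, rfl⟩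
    exact (Finset.mem_filter.1 j.2).2)
  have hsW : ∀ w, (sW w).card = k + 1 := by
    intro w; induction w using Quot.ind; exact hsg _
  have hFW : F.card ≤ Fintype.card W := by
    have : F ⊆ Finset.univ.image sW := by
      intro σ hσ
      obtain ⟨d, rfl⟩ := hF σ hσ
      exact Finset.mem_image.2 ⟨Quot.mk r d, Finset.mem_univ _, rfl⟩
    exact (Finset.card_le_card this).trans Finset.card_image_le
  -- local estimate
  have hloc : ∀ τ ∈ T, (Finset.univ.filter fun w => τ ⊆ sW w).card ≤
      (E1.filter fun e => sg (p1 e) ∩ sg (p2 e) = τ).card + b := by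
    intro τ hτ
    set J := E1.filter fun e => sg (p1 e) ∩ sg (p2 e) = τ with hJ
    set X := {w : W // τ ⊆ sW w} with hX
    have hJ1 : ∀ j : J, τ ⊆ sW (Quot.mk r (p1 j)) := fun j => by
      show τ ⊆ sg (p1 j)
      rw [← (Finset.mem_filter.1 j.2).2]; exact Finset.inter_subset_left
    have hJ2 : ∀ j : J, τ ⊆ sW (Quot.mk r (p2 j)) := fun j => by
      show τ ⊆ sg (p2 j)
      rw [← (Finset.mem_filter.1 j.2).2]; exact Finset.inter_subset_right
    have h1 := card_le_edges_add_comp (X := X) (fun j : J => ⟨Quot.mk r (p1 j), hJ1 j⟩)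
      (fun j : J => ⟨Quot.mk r (p2 j), hJ2 j⟩)
    set r2 : X → X → Prop := fun x y => ∃ j : J, x = ⟨Quot.mk r (p1 j), hJ1 j⟩ ∧ y = ⟨Quot.mk r (p2 j), hJ2 j⟩ with hr2
    have hXc : Nat.card X = (Finset.univ.filter fun w => τ ⊆ sW w).card := by
      rw [Nat.card_eq_fintype_card, Fintype.card_subtype]
    have hJc : Nat.card J = J.card := by simp
    rw [hXc, hJc] at h1
    refine h1.trans (Nat.add_le_add_left (le_trans ?_ (hb τ hτ)) _)
    -- components inject into C_τ
    have hch : ∀ Q : Quot r2, ∃ c : {c // ta c = τ}, ∃ d, ∃ hd : τ ⊆ sg d, inc d c ∧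
        Quot.mk r2 (⟨Quot.mk r d, hd⟩ : X) = Q := by
      intro Q
      induction Q using Quot.ind with | _ x => ?_
      obtain ⟨w, hw⟩ := x
      induction w using Quot.ind with | _ d => ?_
      obtain ⟨-, c, hc, hi⟩ := hT τ d (hTc τ hτ) hw
      exact ⟨⟨c, hc⟩, d, hw, hi, rfl⟩
    choose f dd hd hfi hfq using hch
    refine Nat.card_le_card_of_injective f ?_
    intro Q Q' hQ
    by_contra hne
    obtain ⟨p, q, hpA, hqA, hpc, hqc, hpq⟩ := hcross (f Q) {d | ∃ h : τ ⊆ sg d, Quot.mk r2 (⟨Quot.mk r d, h⟩ : X) = Q}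
      ⟨dd Q, ⟨hd Q, hfq Q⟩, hfi Q⟩ ⟨dd Q', by
        rintro ⟨h, h'⟩
        exact hne (h'.symm.trans (hfq Q')), hQ ▸ hfi Q'⟩
    obtain ⟨hp', hpQ⟩ := hpA
    have hq' : τ ⊆ sg q := by
      have := hinc q _ hqc
      rwa [(f Q).2] at this
    apply hqA
    refine ⟨hq', ?_⟩
    rw [← hpQ]
    by_cases hs : sg p = sg q
    · congr 2
      exact (hrel p q hs hpq).symm
    · have hcap : sg p ∩ sg q = τ := by
        symm
        apply Finset.eq_of_subset_of_card_le (Finset.subset_inter hp' hq')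
        rw [hTc τ hτ]
        by_contra hcon
        push Not at hcon
        have e1 : sg p ∩ sg q = sg p := Finset.eq_of_subset_of_card_le Finset.inter_subset_left (by rw [hsg]; omega)
        have e2 : sg p ∩ sg q = sg q := Finset.eq_of_subset_of_card_le Finset.inter_subset_right (by rw [hsg]; omega)
        exact hs (e1.symm.trans e2)
      have h3 := hp s(p, q)
      rw [Sym2.eq_iff] at h3
      rcases h3 with ⟨h3, h4⟩ | ⟨h3, h4⟩
      · symm
        refine Quot.sound ⟨⟨s(p, q), Finset.mem_filter.2 ⟨Finset.mem_filter.2 ⟨hEf.mem_toFinset.2 hpq, by rw [h3, h4]; exact hs⟩, by rw [h3, h4]; exact hcap⟩⟩, ?_, ?_⟩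
        · simp only [h3]
        · simp only [h4]
      · refine Quot.sound ⟨⟨s(p, q), Finset.mem_filter.2 ⟨Finset.mem_filter.2 ⟨hEf.mem_toFinset.2 hpq, by rw [h3, h4]; exact fun h => hs h.symm⟩, by rw [h3, h4, Finset.inter_comm]; exact hcap⟩⟩, ?_, ?_⟩
        · simp only [h3]
        · simp only [h4]
  have hsum := Finset.sum_le_sum hloc
  have hA : ∑ τ ∈ T, (Finset.univ.filter fun w => τ ⊆ sW w).card = Fintype.card W * (k + 1) := by
    have h := Finset.sum_card_bipartiteAbove_eq_sum_card_bipartiteBelow (s := T) (t := (Finset.univ : Finset W))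
      (fun τ w => τ ⊆ sW w)
    simp only [Finset.bipartiteAbove, Finset.bipartiteBelow] at h
    rw [h, Finset.sum_const_nat (m := k + 1)]
    · simp
    · intro w _
      have : (T.filter fun τ => τ ⊆ sW w) = (sW w).powersetCard k := by
        ext τ
        simp only [Finset.mem_filter, Finset.mem_powersetCard]
        constructor
        · rintro ⟨h1, h2⟩; exact ⟨h2, hTc τ h1⟩
        · rintro ⟨h1, h2⟩
          refine ⟨?_, h1⟩
          induction w using Quot.ind with | _ d => ?_
          exact (hT τ d h2 h1).1
      rw [this, Finset.card_powersetCard, hsW]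
      simp
  have hB : ∑ τ ∈ T, (E1.filter fun e => sg (p1 e) ∩ sg (p2 e) = τ).card ≤ E1.card := by
    rw [← Finset.card_biUnion]
    · apply Finset.card_le_card
      intro e he
      obtain ⟨τ, _, h⟩ := Finset.mem_biUnion.1 he
      exact (Finset.mem_filter.1 h).1
    · intro τ _ τ' _ hne
      rw [Function.onFun, Finset.disjoint_left]
      intro e h h'
      exact hne ((Finset.mem_filter.1 h).2.symm.trans (Finset.mem_filter.1 h').2)
  rw [hA, Finset.sum_add_distrib, Finset.sum_const, smul_eq_mul] at hsum
  have hkF : k * F.card ≤ k * Fintype.card W := Nat.mul_le_mul_left k hFW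
  have h2b : 2 * b * F.card = 2 * (b * F.card) := by ring
  have hbT : T.card * b = b * T.card := mul_comm _ _
  have hkW : Fintype.card W * (k + 1) = k * Fintype.card W + Fintype.card W := by ring
  omega

end SurfUB


set_option linter.unusedSectionVars false
set_option linter.unusedVariables false

namespace SurfUB
open Set Filter Topology Metric

section
variable {M : Type*} [TopologicalSpace M] [T2Space M] [CompactSpace M] [Surf M] {𝒟 𝒞 : Type*}

lemma shrink {W K : Set M} (hWo : IsOpen W) (hWc : IsPreconnected W) (hK : IsCompact K) (hKW : K ⊆ W) :
    ∃ W' : Set M, IsOpen W' ∧ IsPreconnected W' ∧ K ⊆ W' ∧ closure W' ⊆ W := by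
  rcases W.eq_empty_or_nonempty with rfl | ⟨x0, hx0⟩
  · exact ⟨∅, isOpen_empty, isPreconnected_empty, hKW, by simp⟩
  have hB : ∀ x ∈ W, ∃ B : Set M, IsOpen B ∧ IsPreconnected B ∧ x ∈ B ∧ closure B ⊆ W := by
    intro x hx
    obtain ⟨C, hC, hCc, hCW⟩ := exists_mem_nhds_isClosed_subset (hWo.mem_nhds hx)
    obtain ⟨B, h1, h2, h3, h4⟩ := exists_conn_nhds hC
    exact ⟨B, h1, h2, h3, (closure_minimal h4 hCc).trans hCW⟩
  have key : W ⊆ {y | ∃ W' : Set M, IsOpen W' ∧ IsPreconnected W' ∧ x0 ∈ W' ∧ y ∈ W' ∧ closure W' ⊆ W} := by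
    refine clopen_arg hWc ?_ ?_
    · obtain ⟨B, h1, h2, h3, h4⟩ := hB x0 hx0
      exact ⟨x0, hx0, B, h1, h2, h3, h3, h4⟩
    · intro x hx
      obtain ⟨B, h1, h2, h3, h4⟩ := hB x hx
      refine ⟨B, h1.mem_nhds h3, ?_⟩
      rintro ⟨y, hyB, W', g1, g2, g3, g4, g5⟩ y' hy'
      exact ⟨W' ∪ B, g1.union h1, g2.union y g4 hyB h2, Or.inl g3, Or.inr hy', by
        rw [closure_union]; exact union_subset g5 h4⟩
  have : ∃ W' : Set M, IsOpen W' ∧ IsPreconnected W' ∧ x0 ∈ W' ∧ K ⊆ W' ∧ closure W' ⊆ W := by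
    refine hK.induction_on (p := fun K => ∃ W' : Set M, IsOpen W' ∧ IsPreconnected W' ∧ x0 ∈ W' ∧ K ⊆ W' ∧ closure W' ⊆ W) ?_ ?_ ?_ ?_
    · obtain ⟨B, h1, h2, h3, h4⟩ := hB x0 hx0
      exact ⟨B, h1, h2, h3, empty_subset _, h4⟩
    · rintro s t hst ⟨W', h1, h2, h3, h4, h5⟩
      exact ⟨W', h1, h2, h3, hst.trans h4, h5⟩
    · rintro s t ⟨W', h1, h2, h3, h4, h5⟩ ⟨V, g1, g2, g3, g4, g5⟩
      exact ⟨W' ∪ V, h1.union g1, h2.union x0 h3 g3 g2, Or.inl h3, union_subset_union h4 g4, by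
        rw [closure_union]; exact union_subset h5 g5⟩
    · intro x hx
      obtain ⟨W', g1, g2, g3, g4, g5⟩ := key (hKW hx)
      exact ⟨W', mem_nhdsWithin_of_mem_nhds (g1.mem_nhds g4), W', g1, g2, g3, Subset.rfl, g5⟩
  obtain ⟨W', h1, h2, h3, h4, h5⟩ := this
  exact ⟨W', h1, h2, h4, h5⟩

theorem exists_sys [Finite 𝒟] [Finite 𝒞] (D : 𝒟 → Set M) (C : 𝒞 → Set M) (inc : 𝒟 → 𝒞 → Prop)
    (D_open : ∀ d, IsOpen (D d)) (D_conn : ∀ d, IsPreconnected (D d)) (D_ne : ∀ d, (D d).Nonempty)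
    (C_open : ∀ c, IsOpen (C c)) (C_conn : ∀ c, IsPreconnected (C c))
    (inc_sub : ∀ d c, inc d c → D d ⊆ C c) (inc_of : ∀ d c x, x ∈ D d → x ∈ C c → inc d c)
    (D_disj : ∀ d d' x, x ∈ D d → x ∈ D d' → d = d')
    (C_inter : ∀ c c' x, c ≠ c' → x ∈ C c → x ∈ C c' → ∃ d, x ∈ D d) :
    ∃ S : Sys M 𝒟 𝒞, S.inc = inc := by
  classical
  choose p hp using D_ne
  choose C' hC'o hC'c hC'K hC'cl using fun c => shrink (K := p '' {d | inc d c}) (C_open c) (C_conn c)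
    ((Set.toFinite _).isCompact) (by rintro _ ⟨d, hd, rfl⟩; exact inc_sub d c hd (hp d))
  set T : Set M := ⋃ c, ⋃ c', ⋃ (_ : c ≠ c'), closure (C' c) ∩ closure (C' c') with hT
  have hTc : IsClosed T := isClosed_iUnion_of_finite fun c => isClosed_iUnion_of_finite fun c' =>
    isClosed_iUnion_of_finite fun _ => isClosed_closure.inter isClosed_closure
  have hTD : ∀ x ∈ T, ∃ d, x ∈ D d := by
    intro x hx
    simp only [hT, mem_iUnion] at hx
    obtain ⟨c, c', hne, h1, h2⟩ := hx
    exact C_inter c c' x hne (hC'cl c h1) (hC'cl c' h2)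
  have hLc : ∀ d, IsCompact (D d ∩ T) := by
    intro d
    have : D d ∩ T = T \ ⋃ d', ⋃ (_ : d' ≠ d), D d' := by
      ext x
      simp only [mem_inter_iff, Set.mem_sdiff, mem_iUnion]
      constructor
      · rintro ⟨h1, h2⟩
        exact ⟨h2, fun ⟨d', hne, h⟩ => hne (D_disj d' d x h h1)⟩
      · rintro ⟨h1, h2⟩
        obtain ⟨d', hd'⟩ := hTD x h1
        by_cases h : d' = d
        · exact ⟨h ▸ hd', h1⟩
        · exact absurd ⟨d', h, hd'⟩ h2
    rw [this]
    exact (hTc.sdiff (isOpen_iUnion fun d' => isOpen_iUnion fun _ => D_open d')).isCompact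
  choose D' hD'o hD'c hD'K hD'cl using fun d => shrink (K := insert (p d) (D d ∩ T)) (D_open d) (D_conn d)
    ((hLc d).insert _) (insert_subset (hp d) inter_subset_left)
  have hpD' : ∀ d, p d ∈ D' d := fun d => hD'K d (mem_insert _ _)
  have hDD : ∀ d, D' d ⊆ D d := fun d => subset_closure.trans (hD'cl d)
  have hCC : ∀ c, C' c ⊆ C c := fun c => subset_closure.trans (hC'cl c)
  have hC'' : ∀ c x, x ∈ C' c ∪ ⋃ d, ⋃ (_ : inc d c), D' d → x ∈ C c := by
    rintro c x (h | h)
    · exact hCC c h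
    · simp only [mem_iUnion] at h
      obtain ⟨d, hi, h⟩ := h
      exact inc_sub d c hi (hDD d h)
  refine ⟨{ D := D', C := fun c => C' c ∪ ⋃ d, ⋃ (_ : inc d c), D' d, inc := inc
            D_open := hD'o
            D_conn := hD'c
            D_ne := fun d => ⟨p d, hpD' d⟩
            C_open := fun c => (hC'o c).union (isOpen_iUnion fun d => isOpen_iUnion fun _ => hD'o d)
            C_conn := ?_
            inc_sub := ?_
            inc_of := fun d c x hx hc => inc_of d c x (hDD d hx) (hC'' c x hc)
            D_disj := fun d d' x h h' => D_disj d d' x (hD'cl d h) (hD'cl d' h')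
            C_inter := ?_ }, rfl⟩
  · intro c
    rcases (C' c).eq_empty_or_nonempty with he | ⟨x0, hx0⟩
    · have : C' c ∪ ⋃ d, ⋃ (_ : inc d c), D' d = ∅ := by
        rw [eq_empty_iff_forall_notMem]
        rintro x (h | h)
        · rw [he] at h; exact h
        · simp only [mem_iUnion] at h
          obtain ⟨d, hi, h⟩ := h
          have := hC'K c ⟨d, hi, rfl⟩
          rw [he] at this; exact this
      rw [this]; exact isPreconnected_empty
    · refine isPreconnected_of_forall x0 ?_
      rintro y (h | h)
      · exact ⟨C' c, subset_union_left, hx0, h, hC'c c⟩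
      · simp only [mem_iUnion] at h
        obtain ⟨d, hi, h⟩ := h
        refine ⟨C' c ∪ D' d, union_subset_union_right _ (fun z hz => mem_iUnion₂.2 ⟨d, hi, hz⟩), Or.inl hx0, Or.inr h, ?_⟩
        exact (hC'c c).union (p d) (hC'K c ⟨d, hi, rfl⟩) (hpD' d) (hD'c d)
  · intro d c hi x hx
    exact Or.inr (mem_iUnion₂.2 ⟨d, hi, hx⟩)
  · rintro c c' x hne (h | h) (h' | h')
    · have hxT : x ∈ T := by
        simp only [hT, mem_iUnion]
        exact ⟨c, c', hne, subset_closure h, subset_closure h'⟩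
      obtain ⟨d, hd⟩ := hTD x hxT
      exact ⟨d, hD'K d (Or.inr ⟨hd, hxT⟩)⟩
    all_goals
      simp only [mem_iUnion] at h h'
      first
        | (obtain ⟨d, _, h⟩ := h; exact ⟨d, h⟩)
        | (obtain ⟨d, _, h⟩ := h'; exact ⟨d, h⟩)

end
end SurfUB


set_option linter.unusedSectionVars false
set_option linter.unusedVariables false

namespace SurfUB
open Set Filter Topology Metric

lemma surf_of_charted (M : Type*) [TopologicalSpace M] [ChartedSpace (EuclideanSpace ℝ (Fin 2)) M] : Surf M :=
  ⟨fun x => ⟨(chartAt (EuclideanSpace ℝ (Fin 2)) x).transHomeomorph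
    Complex.orthonormalBasisOneI.repr.toHomeomorph.symm, by simp⟩⟩

section
variable {M : Type*} [TopologicalSpace M]

lemma joined_cc {S : Set M} {x y : M} (h : JoinedIn S x y) : connectedComponentIn S x = connectedComponentIn S y := by
  obtain ⟨γ, hγ⟩ := h
  have h1 : IsPreconnected (range γ) := isPreconnected_range γ.continuous
  have h2 : range γ ⊆ S := by rintro _ ⟨t, rfl⟩; exact hγ t
  have h3 := h1.subset_connectedComponentIn (x := x) ⟨0, γ.source⟩ h2
  exact connectedComponentIn_eq (h3 ⟨1, γ.target⟩)

def IsComp (S U : Set M) : Prop := ∃ x ∈ S, U = connectedComponentIn S x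

lemma exists_idx {b : ℕ} {S : Set M} (h : ∃ g : Fin b → M, ∀ x ∈ S, ∃ j : Fin b, JoinedIn S x (g j)) :
    ∃ f : Set M → Fin b → Prop, (∀ U, IsComp S U → ∃ j, f U j) ∧ ∀ U U' j, f U j → f U' j → U = U' := by
  obtain ⟨g, hg⟩ := h
  refine ⟨fun U j => U = connectedComponentIn S (g j), ?_, fun U U' j h h' => h.trans h'.symm⟩
  rintro U ⟨x, hx, rfl⟩
  obtain ⟨j, hj⟩ := hg x hx
  exact ⟨j, joined_cc hj⟩

theorem main_bound [T2Space M] [CompactSpace M] [LocallyConnectedSpace M] [Surf M] {w : ℕ}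
    (hw : ∀ (ι : Type) [Fintype ι] (G : NG M ι), Nat.card {z // G.LocCol z} ≤ 2^w * Nat.card {z // G.GlobCol z})
    {b k n : ℕ} (A : Fin n → Set M)
    (h0 : ∀ σ : Finset (Fin n), σ.card = k + 2 → ¬ (⋂ i ∈ σ, A i).Nonempty)
    (hop : ∀ σ : Finset (Fin n), σ.card = k ∨ σ.card = k + 1 → IsOpen (⋂ i ∈ σ, A i))
    (hcp : ∀ σ : Finset (Fin n), σ.card = k ∨ σ.card = k + 1 →
      ∃ g : Fin b → M, ∀ x ∈ (⋂ i ∈ σ, A i), ∃ j : Fin b, JoinedIn (⋂ i ∈ σ, A i) x (g j))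
    (F T : Finset (Finset (Fin n)))
    (hF : ∀ σ, σ ∈ F ↔ σ.card = k + 1 ∧ (⋂ i ∈ σ, A i).Nonempty)
    (hT : ∀ τ, τ ∈ T ↔ τ.card = k ∧ (⋂ i ∈ τ, A i).Nonempty ∧
      ∃ σ : Finset (Fin n), τ ⊂ σ ∧ σ.card = k + 1 ∧ (⋂ i ∈ σ, A i).Nonempty) :
    k * F.card ≤ 2 * b * F.card + 3 * w + b * T.card := by
  classical
  set I : Finset (Fin n) → Set M := fun σ => ⋂ i ∈ σ, A i with hI
  have mI : ∀ σ x, x ∈ I σ ↔ ∀ i ∈ σ, x ∈ A i := fun σ x => by simp [hI]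
  have hsmall : ∀ σ x, x ∈ I σ → σ.card ≤ k + 1 := by
    intro σ x hx
    by_contra hcon
    push Not at hcon
    obtain ⟨σ', h1, h2⟩ := Finset.exists_subset_card_eq (show k + 2 ≤ σ.card from hcon)
    exact h0 σ' h2 ⟨x, (mI σ' x).2 fun i hi => (mI σ x).1 hx i (h1 hi)⟩
  have hun : ∀ σ τ x, x ∈ I σ → x ∈ I τ → x ∈ I (σ ∪ τ) := by
    intro σ τ x h1 h2
    rw [mI] at *
    intro i hi
    rcases Finset.mem_union.1 hi with h | h
    · exact h1 i h
    · exact h2 i h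
  have hsub : ∀ σ τ x, σ.card = k + 1 → x ∈ I σ → x ∈ I τ → τ ⊆ σ := by
    intro σ τ x hc h1 h2
    have h3 := hsmall _ x (hun σ τ x h1 h2)
    have : σ = σ ∪ τ := Finset.eq_of_subset_of_card_le Finset.subset_union_left (by omega)
    rw [this]; exact Finset.subset_union_right
  choose! f hf1 hf2 using fun (σ : Finset (Fin n)) (h : σ.card = k ∨ σ.card = k + 1) => exists_idx (hcp σ h)
  let 𝒟 := {p : Finset (Fin n) × Set M // p.1.card = k + 1 ∧ IsComp (I p.1) p.2}
  let 𝒞 := {p : Finset (Fin n) × Set M // p.1 ∈ T ∧ IsComp (I p.1) p.2}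
  have hTk : ∀ τ ∈ T, τ.card = k := fun τ h => ((hT τ).1 h).1
  have hDi : ∀ d : 𝒟, ∃ j, f d.1.1 d.1.2 j := fun d => hf1 _ (Or.inr d.2.1) _ d.2.2
  have hCi : ∀ c : 𝒞, ∃ j, f c.1.1 c.1.2 j := fun c => hf1 _ (Or.inl (hTk _ c.2.1)) _ c.2.2
  choose jD hjD using hDi
  choose jC hjC using hCi
  have hDF : ∀ d : 𝒟, d.1.1 ∈ F := by
    rintro ⟨⟨σ, U⟩, h1, x, hx, h2⟩
    exact (hF σ).2 ⟨h1, x, hx⟩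
  have injD : Function.Injective fun d : 𝒟 => ((⟨d.1.1, hDF d⟩ : F), jD d) := by
    intro d d' h
    have h1 : d.1.1 = d'.1.1 := congrArg (fun q : F × Fin b => q.1.1) h
    have h2 : jD d = jD d' := congrArg (fun q : F × Fin b => q.2) h
    apply Subtype.ext
    refine Prod.ext h1 (hf2 d.1.1 (Or.inr d.2.1) _ _ (jD d) (hjD d) ?_)
    rw [h1, h2]; exact hjD d'
  have injC : Function.Injective fun c : 𝒞 => (c.1.1, jC c) := by
    intro c c' h
    have h1 : c.1.1 = c'.1.1 := congrArg (fun q : Finset (Fin n) × Fin b => q.1) h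
    have h2 : jC c = jC c' := congrArg (fun q : Finset (Fin n) × Fin b => q.2) h
    apply Subtype.ext
    refine Prod.ext h1 (hf2 c.1.1 (Or.inl (hTk _ c.2.1)) _ _ (jC c) (hjC c) ?_)
    rw [h1, h2]; exact hjC c'
  have : Finite 𝒟 := Finite.of_injective _ injD
  have : Finite 𝒞 := Finite.of_injective _ injC
  have cc_sub : ∀ {S U : Set M}, IsComp S U → U ⊆ S := by
    rintro S U ⟨x, hx, rfl⟩; exact connectedComponentIn_subset _ _
  have cc_eq : ∀ {S U : Set M} {x}, IsComp S U → x ∈ U → U = connectedComponentIn S x := by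
    rintro S U x ⟨y, hy, rfl⟩ hx; exact connectedComponentIn_eq hx
  have cc_conn : ∀ {S U : Set M}, IsComp S U → IsPreconnected U := by
    rintro S U ⟨x, hx, rfl⟩; exact isPreconnected_connectedComponentIn
  have cc_open : ∀ {S U : Set M}, IsOpen S → IsComp S U → IsOpen U := by
    rintro S U hS ⟨x, hx, rfl⟩; exact hS.connectedComponentIn
  have cc_ne : ∀ {S U : Set M}, IsComp S U → U.Nonempty := by
    rintro S U ⟨x, hx, rfl⟩; exact ⟨x, mem_connectedComponentIn hx⟩
  have inc_of : ∀ (d : 𝒟) (c : 𝒞) x, x ∈ d.1.2 → x ∈ c.1.2 → d.1.2 ⊆ c.1.2 := by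
    intro d c x hd hc
    have hs := hsub d.1.1 c.1.1 x d.2.1 (cc_sub d.2.2 hd) (cc_sub c.2.2 hc)
    rw [cc_eq c.2.2 hc]
    refine (cc_conn d.2.2).subset_connectedComponentIn hd ?_
    intro y hy
    exact (mI _ y).2 fun i hi => (mI _ y).1 (cc_sub d.2.2 hy) i (hs hi)
  obtain ⟨S, hS⟩ := exists_sys (fun d : 𝒟 => d.1.2) (fun c : 𝒞 => c.1.2) (fun d c => d.1.2 ⊆ c.1.2)
    (fun d => cc_open (hop _ (Or.inr d.2.1)) d.2.2) (fun d => cc_conn d.2.2) (fun d => cc_ne d.2.2)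
    (fun c => cc_open (hop _ (Or.inl (hTk _ c.2.1))) c.2.2) (fun c => cc_conn c.2.2)
    (fun d c h => h) inc_of
    (by
      intro d d' x hd hd'
      have h1 := hsub d.1.1 d'.1.1 x d.2.1 (cc_sub d.2.2 hd) (cc_sub d'.2.2 hd')
      have h2 := hsub d'.1.1 d.1.1 x d'.2.1 (cc_sub d'.2.2 hd') (cc_sub d.2.2 hd)
      have h3 : d.1.1 = d'.1.1 := Finset.Subset.antisymm h2 h1
      apply Subtype.ext
      refine Prod.ext h3 ?_
      rw [cc_eq d.2.2 hd, cc_eq d'.2.2 hd', h3])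
    (by
      intro c c' x hne hc hc'
      have hx := hun _ _ x (cc_sub c.2.2 hc) (cc_sub c'.2.2 hc')
      by_cases h3 : c.1.1 = c'.1.1
      · exfalso
        apply hne
        apply Subtype.ext
        refine Prod.ext h3 ?_
        rw [cc_eq c.2.2 hc, cc_eq c'.2.2 hc', h3]
      · have hcard : k + 1 ≤ (c.1.1 ∪ c'.1.1).card := by
          by_contra hcon
          have e1 : c.1.1 = c.1.1 ∪ c'.1.1 := Finset.eq_of_subset_of_card_le Finset.subset_union_left
            (by rw [hTk _ c.2.1]; omega)
          have e2 : c'.1.1 = c.1.1 ∪ c'.1.1 := Finset.eq_of_subset_of_card_le Finset.subset_union_right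
            (by rw [hTk _ c'.2.1]; omega)
          exact h3 (e1.trans e2.symm)
        obtain ⟨σ, hs1, hs2⟩ := Finset.exists_subset_card_eq hcard
        have hxs : x ∈ I σ := (mI σ x).2 fun i hi => (mI _ x).1 hx i (hs1 hi)
        exact ⟨⟨(σ, connectedComponentIn (I σ) x), hs2, x, hxs, rfl⟩, mem_connectedComponentIn hxs⟩)
  obtain ⟨E, hE, hcross⟩ := S.exists_spec hw
  rw [hS] at hcross
  refine count (fun d : 𝒟 => d.1.1) (fun d => d.2.1) (fun c : 𝒞 => c.1.1) (fun d c => d.1.2 ⊆ c.1.2) T hTk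
    ?_ ?_ ?_ F ?_ ?_ E hE hcross
  · intro τ d hτ hs
    obtain ⟨x, hx⟩ := cc_ne d.2.2
    have hxs := cc_sub d.2.2 hx
    have hxt : x ∈ I τ := (mI τ x).2 fun i hi => (mI _ x).1 hxs i (hs hi)
    have hτT : τ ∈ T := by
      refine (hT τ).2 ⟨hτ, ⟨x, hxt⟩, d.1.1, ?_, d.2.1, x, hxs⟩
      refine Finset.ssubset_iff_subset_ne.2 ⟨hs, fun h => ?_⟩
      have := d.2.1
      rw [← h] at this
      omega
    refine ⟨hτT, ⟨(τ, connectedComponentIn (I τ) x), hτT, x, hxt, rfl⟩, rfl, ?_⟩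
    exact inc_of d _ x hx (mem_connectedComponentIn hxt)
  · intro d c h
    obtain ⟨x, hx⟩ := cc_ne d.2.2
    exact hsub _ _ x d.2.1 (cc_sub d.2.2 hx) (cc_sub c.2.2 (h hx))
  · intro τ hτ
    have : Function.Injective fun c : {c : 𝒞 // c.1.1 = τ} => jC c.1 := by
      intro c c' h
      apply Subtype.ext
      apply injC
      exact Prod.ext (c.2.trans c'.2.symm) h
    simpa using Nat.card_le_card_of_injective _ this
  · intro σ hσ
    obtain ⟨h1, x, hx⟩ := (hF σ).1 hσ
    exact ⟨⟨(σ, connectedComponentIn (I σ) x), h1, x, hx, rfl⟩, rfl⟩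
  · have := Nat.card_le_card_of_injective _ injD
    rw [Nat.card_prod] at this
    simp only [Nat.card_eq_fintype_card, Fintype.card_coe, Fintype.card_fin] at this ⊢
    rw [mul_comm]
    simpa using this

end
end SurfUB

/-- **Theorem (surfaces, general b).** Let `M` be a surface (a compact two-dimensional
real manifold), `b ≥ 2` and `k > 2b`. There are constants `c₁ > 0, c₂ ≥ 0`, depending
only on `k`, `b` and `M`, such that for every finite family `𝒜` of subsets of `M` with
(i) `f_{k+1}(𝒜) = 0` and (ii) each `k`-wise and `(k+1)`-wise intersection open (possibly
empty) with at most `b` path-connected components, one has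
`f_k(𝒜) ≤ c₁·f_{k-1}^{ind}(𝒜) + c₂`. -/
theorem surface_upper_bound_b_components (M : Type*) [TopologicalSpace M] [T2Space M]
    [CompactSpace M] [ChartedSpace (EuclideanSpace ℝ (Fin 2)) M]
    (b k : ℕ) (hb : 2 ≤ b) (hk : 2 * b < k) :
    ∃ c₁ c₂ : ℝ, 0 < c₁ ∧ 0 ≤ c₂ ∧
      ∀ (n : ℕ) (A : Fin n → Set M),
        fNum A (k + 1) = 0 →
        (∀ σ : Finset (Fin n), σ.card = k ∨ σ.card = k + 1 →
          IsOpen (⋂ i ∈ σ, A i) ∧ AtMostComponents b (⋂ i ∈ σ, A i)) →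
        (fNum A k : ℝ) ≤ c₁ * fInd A (k - 1) + c₂ := by
  classical
  have hS : SurfUB.Surf M := SurfUB.surf_of_charted M
  have hL : LocallyConnectedSpace M := ChartedSpace.locallyConnectedSpace (EuclideanSpace ℝ (Fin 2)) M
  obtain ⟨w, hw⟩ := SurfUB.exists_w M
  refine ⟨b, 3 * w, by positivity, by positivity, ?_⟩
  intro n A h0 h1
  have h0' : ∀ σ : Finset (Fin n), σ.card = k + 2 → ¬ (⋂ i ∈ σ, A i).Nonempty := by
    intro σ hσ hne
    have hem := Finite.card_eq_zero_iff.1 h0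
    exact hem.false ⟨σ, hσ, hne⟩
  obtain ⟨m, rfl⟩ : ∃ m, k = m + 1 := ⟨k - 1, by omega⟩
  have key := SurfUB.main_bound hw (b := b) (k := m + 1) A h0' (fun σ h => (h1 σ h).1) (fun σ h => (h1 σ h).2)
    (Finset.univ.filter fun σ => σ.card = m + 1 + 1 ∧ (⋂ i ∈ σ, A i).Nonempty)
    (Finset.univ.filter fun τ => τ.card = m + 1 ∧ (⋂ i ∈ τ, A i).Nonempty ∧
      ∃ σ : Finset (Fin n), τ ⊂ σ ∧ σ.card = m + 1 + 1 ∧ (⋂ i ∈ σ, A i).Nonempty)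
    (fun σ => by simp) (fun τ => by simp)
  have e1 : fNum A (m + 1) = (Finset.univ.filter fun σ : Finset (Fin n) => σ.card = m + 1 + 1 ∧ (⋂ i ∈ σ, A i).Nonempty).card := by
    rw [fNum, Nat.card_eq_fintype_card, Fintype.card_subtype]
  have e2 : fInd A (m + 1 - 1) = (Finset.univ.filter fun τ : Finset (Fin n) => τ.card = m + 1 ∧ (⋂ i ∈ τ, A i).Nonempty ∧
      ∃ σ : Finset (Fin n), τ ⊂ σ ∧ σ.card = m + 1 + 1 ∧ (⋂ i ∈ σ, A i).Nonempty).card := by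
    rw [fInd, Nat.card_eq_fintype_card, Fintype.card_subtype]
    rfl
  rw [← e1, ← e2] at key
  have hfin : fNum A (m + 1) ≤ b * fInd A (m + 1 - 1) + 3 * w := by
    have h3 : (2 * b + 1) * fNum A (m + 1) ≤ (m + 1) * fNum A (m + 1) := Nat.mul_le_mul_right _ hk
    have h4 : (2 * b + 1) * fNum A (m + 1) = 2 * b * fNum A (m + 1) + fNum A (m + 1) := by ring
    omega
  exact_mod_cast hfin
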